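/- arXiv:1802.07694 — 9 statements merged into one kernel-verified Lean document; each statement's English description precedes it below -/
import Mathlib

section
/- For every δ ∈ (0,1] and every β ∈ (0, 2 + δ) there exists s₀ ∈ (0,1) such that the Lorenz-like system with parameters λ = s₀/√(1 − s₀), α = δ·√(1 − s₀), and β has a homoclinic trajectory to the origin. -/
/-!
The existence of a homoclinic orbit is proved by shooting in the damping parameter, followed by a
compactness argument.

With `w = u + (1 + k) x²`, `k = b / 2 - 1`, `d = δ`, `s₀ = L / (1 + L)` and time rescaled by
`√(1 - s₀) = 1 / √(1 + L)`, the system becomes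
`x' = v`, `v' = -L v + (1 + L) x (1 - w + k x²)`, `w' = d ((1 + k) x² - w)`.
Now `L ≥ 0` is the shooting parameter, and the unstable eigenvector at the origin has `v = x` for
every `L`; to second order the unstable manifold is `w = c x²` with `c = d (1 + k) / (2 + d)`. The
hypothesis `b < 2 + δ` says exactly that `k < c`.

Start at `(η, η, c η²)` with `η` small. The slope `z = v / x` satisfies `z' = -P / x²` with
`P = v² + L x v - (1 + L) x² (1 - w + k x²)`, and `P > 0` initially. As long as `x > 0` and `P ≥ 0`
(the structure `Phase`), `z` decreases from `1`, `w / x²` increases from `c`, and all coordinates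
obey bounds that are uniform in `η`. There are two ways to leave this regime.
* `x` becomes negative while `P > 0`;
* `P` becomes negative while `x > 0`.

Both define open, disjoint sets of parameters `L` (`isOpen_escape`). The second cannot occur for
`L = 0`, by means of the function `V` which is monotone when `L = 0` (`Phase.no_touch`), and the
first cannot occur for large `L` (`SysFlow.top_not_up`). Since `P` cannot have an interior
tangential zero (`Phase.P_pos`), connectedness of the parameter interval yields an `L` for which
the orbit stays in the regime forever (`SysFlow.exists_L`). Such an orbit turns (`v = 0`) at a point
with `x² ≥ 1 + c₃`, where `c₃ > 0` depends only on `k` (`Phase.turning`).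

As `η → 0`, the orbits re-timed to their turning points converge along a subsequence to an entire
orbit with `x > 0` and `z` nonincreasing (`exists_entire`). It cannot rest at its turning
point, because a rest point has `x² = 1` (`rest_eq`); hence `z` is negative and bounded away from `0` for `t ≥ 1`,
positive and bounded away from `0` for `t ≤ -1`, and `x` decays exponentially in both directions,
dragging `v` and `w` to `0`. Finally `L > 0` since for `L = 0` the monotone function `V` would be
constant along the orbit (`Entire.L_pos`).
-/

open Filter Set

/-- The Lorenz-like system (8): ẋ = ϑ, ϑ̇ = −λϑ − x·u + x − x³, u̇ = −α·u − β·x·ϑ.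
`lam`, `a`, `b` stand for the parameters λ, α, β respectively. -/
def IsSolution (lam a b : ℝ) (x ϑ u : ℝ → ℝ) : Prop :=
  ∀ t : ℝ, HasDerivAt x (ϑ t) t ∧
    HasDerivAt ϑ (-lam * ϑ t - x t * u t + x t - (x t) ^ 3) t ∧
    HasDerivAt u (-a * u t - b * x t * ϑ t) t

/-- A homoclinic trajectory to the origin: a nonconstant solution defined on all of ℝ
tending to (0,0,0) as t → ±∞. -/
def IsHomoclinicToOrigin (lam a b : ℝ) (x ϑ u : ℝ → ℝ) : Prop :=
  IsSolution lam a b x ϑ u ∧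
  (∃ t₁ t₂ : ℝ, (x t₁, ϑ t₁, u t₁) ≠ (x t₂, ϑ t₂, u t₂)) ∧
  Tendsto (fun t => ((x t, ϑ t, u t) : ℝ × ℝ × ℝ)) atTop (nhds ((0 : ℝ), (0 : ℝ), (0 : ℝ))) ∧
  Tendsto (fun t => ((x t, ϑ t, u t) : ℝ × ℝ × ℝ)) atBot (nhds ((0 : ℝ), (0 : ℝ), (0 : ℝ)))

/-! ### Calculus helpers -/

lemma mono_of_deriv {f f' : ℝ → ℝ} {a b : ℝ} (h : ∀ t ∈ Icc a b, HasDerivAt f (f' t) t)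
    (hn : ∀ t ∈ Icc a b, 0 ≤ f' t) : MonotoneOn f (Icc a b) := by
  refine monotoneOn_of_deriv_nonneg (convex_Icc a b)
    (fun t ht => (h t ht).continuousAt.continuousWithinAt) ?_ ?_
  · intro t ht
    exact (h t (interior_subset ht)).differentiableAt.differentiableWithinAt
  · intro t ht
    rw [(h t (interior_subset ht)).deriv]
    exact hn t (interior_subset ht)

lemma anti_of_deriv {f f' : ℝ → ℝ} {a b : ℝ} (h : ∀ t ∈ Icc a b, HasDerivAt f (f' t) t)
    (hn : ∀ t ∈ Icc a b, f' t ≤ 0) : AntitoneOn f (Icc a b) := by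
  have := mono_of_deriv (f := fun t => -f t) (f' := fun t => -f' t)
    (fun t ht => (h t ht).neg) (fun t ht => by linarith [hn t ht])
  intro s hs t ht hst
  have := this hs ht hst
  simp only at this
  linarith

/-- Comparison with the exponential: `f' ≥ -q f` forces `f b ≥ f a * exp (-q (b - a))`. -/
lemma exp_lower {f f' : ℝ → ℝ} {a b q : ℝ} (hab : a ≤ b)
    (h : ∀ t ∈ Icc a b, HasDerivAt f (f' t) t)
    (hn : ∀ t ∈ Icc a b, -q * f t ≤ f' t) : f a * Real.exp (-q * (b - a)) ≤ f b := by
  have h1 := mono_of_deriv (a := a) (b := b) (f := fun t => f t * Real.exp (q * (t - b)))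
    (f' := fun t => f' t * Real.exp (q * (t - b)) + f t * (Real.exp (q * (t - b)) * (q * 1)))
    (fun t ht => (h t ht).mul ((((hasDerivAt_id t).sub_const b).const_mul q).exp))
    (fun t ht => by
      have := hn t ht
      have := Real.exp_pos (q * (t - b))
      nlinarith)
  have := h1 (left_mem_Icc.2 hab) (right_mem_Icc.2 hab) hab
  simp only [sub_self, mul_zero, Real.exp_zero, mul_one] at this
  have e : -q * (b - a) = q * (a - b) := by ring
  rw [e]; exact this

lemma exp_upper {f f' : ℝ → ℝ} {a b q : ℝ} (hab : a ≤ b)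
    (h : ∀ t ∈ Icc a b, HasDerivAt f (f' t) t)
    (hn : ∀ t ∈ Icc a b, f' t ≤ -q * f t) : f b ≤ f a * Real.exp (-q * (b - a)) := by
  have := exp_lower (f := fun t => -f t) (f' := fun t => -f' t) (q := q) hab
    (fun t ht => (h t ht).neg) (fun t ht => by have := hn t ht; linarith)
  linarith

/-- First hitting time of a level by a continuous function starting below it. -/
lemma first_hit {f : ℝ → ℝ} {a b c : ℝ} (hab : a ≤ b) (hf : ContinuousOn f (Icc a b))
    (ha : f a < c) (hb : c ≤ f b) :
    ∃ t ∈ Ioc a b, f t = c ∧ ∀ s ∈ Ico a t, f s < c := by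
  have hcl : IsClosed {t ∈ Icc a b | c ≤ f t} :=
    isClosed_Icc.isClosed_le continuousOn_const hf
  have hcomp : IsCompact {t ∈ Icc a b | c ≤ f t} :=
    isCompact_Icc.of_isClosed_subset hcl (fun t ht => ht.1)
  obtain ⟨t, ⟨ht, hct⟩, hmin⟩ := hcomp.exists_isLeast ⟨b, right_mem_Icc.2 hab, hb⟩
  have hlt : ∀ s ∈ Ico a t, f s < c := by
    intro s hs
    by_contra hcon
    exact absurd (hmin ⟨⟨hs.1, hs.2.le.trans ht.2⟩, not_lt.1 hcon⟩) (not_le.2 hs.2)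
  have hat : a < t := by
    rcases ht.1.eq_or_lt with h | h
    · subst h; linarith
    · exact h
  refine ⟨t, ⟨hat, ht.2⟩, ?_, hlt⟩
  by_contra hne
  have hlt' : c < f t := lt_of_le_of_ne hct (Ne.symm hne)
  have hsub : Icc a t ⊆ Icc a b := Icc_subset_Icc_right ht.2
  obtain ⟨s, hs, hsc⟩ := intermediate_value_Icc hat.le (hf.mono hsub)
    (show c ∈ Icc (f a) (f t) from ⟨ha.le, hct⟩)
  rcases hs.2.eq_or_lt with h | h
  · subst h; exact hne hsc
  · exact absurd hsc (hlt s ⟨hs.1, h⟩).ne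

/-- First hitting time of a level by a continuous function starting above it. -/
lemma first_hit_down {f : ℝ → ℝ} {a b c : ℝ} (hab : a ≤ b) (hf : ContinuousOn f (Icc a b))
    (ha : c < f a) (hb : f b ≤ c) :
    ∃ t ∈ Ioc a b, f t = c ∧ ∀ s ∈ Ico a t, c < f s := by
  obtain ⟨t, ht, h1, h2⟩ := first_hit (f := fun t => -f t) (c := -c) hab hf.neg
    (by simpa using ha) (by simpa using hb)
  exact ⟨t, ht, by simpa using h1, fun s hs => by simpa using h2 s hs⟩

/-- If `f` is nonnegative just to the left of a zero `t`, its derivative there is nonpositive. -/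
lemma deriv_nonpos_of_left {f : ℝ → ℝ} {f' a t : ℝ} (hat : a < t) (h : HasDerivAt f f' t)
    (h0 : f t = 0) (hs : ∀ s ∈ Ico a t, 0 ≤ f s) : f' ≤ 0 := by
  by_contra hcon
  push Not at hcon
  have hw := (hasDerivAt_iff_tendsto_slope_left_right.1 h).1
  have hev : ∀ᶠ s in nhdsWithin t (Iio t), 0 < slope f t s := hw.eventually (lt_mem_nhds hcon)
  have hev2 : ∀ᶠ s in nhdsWithin t (Iio t), s ∈ Ico a t := Ico_mem_nhdsLT hat
  obtain ⟨s, h1, h2⟩ := (hev.and hev2).exists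
  rw [slope_def_field, h0] at h1
  have h3 := hs s h2
  have h4 : (f s - 0) / (s - t) ≤ 0 := div_nonpos_of_nonneg_of_nonpos (by linarith) (by linarith [h2.2])
  linarith

/-- A function vanishing at `t` with positive derivative is positive just to the right. -/
lemma pos_right_of_deriv {f : ℝ → ℝ} {f' t : ℝ} (h : HasDerivAt f f' t) (h0 : f t = 0)
    (hp : 0 < f') : ∀ᶠ s in nhdsWithin t (Ioi t), 0 < f s := by
  have hw := (hasDerivAt_iff_tendsto_slope_left_right.1 h).2
  have hev : ∀ᶠ s in nhdsWithin t (Ioi t), 0 < slope f t s := hw.eventually (lt_mem_nhds hp)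
  filter_upwards [hev, self_mem_nhdsWithin] with s h1 h2
  rw [slope_def_field, h0, sub_zero] at h1
  have h3 : 0 < s - t := sub_pos.2 h2
  exact (div_pos_iff_of_pos_right h3).1 h1

/-- Solutions of `f' = -a f + φ` with `a > 0` and vanishing forcing vanish at infinity. -/
lemma tendsto_zero_of_forced {f φ : ℝ → ℝ} {a : ℝ} (ha : 0 < a)
    (h : ∀ t, 0 ≤ t → HasDerivAt f (-a * f t + φ t) t) (hφ : Tendsto φ atTop (nhds 0)) :
    Tendsto f atTop (nhds 0) := by
  rw [Metric.tendsto_atTop] at hφ ⊢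
  intro e he
  obtain ⟨T, hT⟩ := hφ (a * (e / 2)) (by positivity)
  set T0 := max T 0 with hT0
  have key : ∀ t, T0 ≤ t → |f t| ≤ |f T0| * Real.exp (-a * (t - T0)) + e / 2 := by
    intro t ht
    have hsm : ∀ s ∈ Icc T0 t, |φ s| < a * (e / 2) := fun s hs => by
      have := hT s ((le_max_left _ _).trans hs.1)
      simpa [Real.dist_eq] using this
    have h0 : ∀ s ∈ Icc T0 t, 0 ≤ s := fun s hs => (le_max_right _ _).trans hs.1
    have u := exp_upper (f := fun s => f s - e / 2) (f' := fun s => -a * f s + φ s) (q := a) ht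
      (fun s hs => (h s (h0 s hs)).sub_const _)
      (fun s hs => by have := (abs_lt.1 (hsm s hs)).2; nlinarith)
    have l := exp_lower (f := fun s => f s + e / 2) (f' := fun s => -a * f s + φ s) (q := a) ht
      (fun s hs => (h s (h0 s hs)).add_const _)
      (fun s hs => by have := (abs_lt.1 (hsm s hs)).1; nlinarith)
    have ep := Real.exp_pos (-a * (t - T0))
    have := le_abs_self (f T0)
    have := neg_abs_le (f T0)
    rw [abs_le]
    constructor <;> nlinarith
  have hexp : Tendsto (fun t => |f T0| * Real.exp (-a * (t - T0))) atTop (nhds 0) := by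
    have h1 : Tendsto (fun t : ℝ => -a * (t - T0)) atTop atBot :=
      (tendsto_atTop_add_const_right _ (-T0) tendsto_id).const_mul_atTop_of_neg (by linarith)
    simpa using (Real.tendsto_exp_atBot.comp h1).const_mul |f T0|
  obtain ⟨T1, hT1⟩ := Metric.tendsto_atTop.1 hexp (e / 2) (by positivity)
  refine ⟨max T1 T0, fun t ht => ?_⟩
  have h1 := hT1 t ((le_max_left _ _).trans ht)
  have h2 := key t ((le_max_right _ _).trans ht)
  rw [Real.dist_eq, sub_zero] at h1 ⊢
  have := le_abs_self (|f T0| * Real.exp (-a * (t - T0)))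
  linarith

/-! ### The scaled system and a priori estimates -/

/-- Admissible parameters: `k = β / 2 - 1` and `d = δ`. -/
structure Adm (k d : ℝ) : Prop where
  k1 : -1 < k
  kd : 2 * k < d
  d0 : 0 < d
  d1 : d ≤ 1

/-- Quadratic coefficient `w ≈ c x²` of the unstable manifold at the origin. -/
noncomputable def cc (k d : ℝ) : ℝ := d * (1 + k) / (2 + d)

lemma Adm.cc_eq {k d : ℝ} (h : Adm k d) : (2 + d) * cc k d = d * (1 + k) := by
  have := h.d0
  unfold cc; field_simp

lemma Adm.cc_pos {k d : ℝ} (h : Adm k d) : 0 < cc k d := by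
  have := h.d0; have := h.k1
  unfold cc
  have : 0 < 1 + k := by linarith
  positivity

lemma Adm.lt_cc {k d : ℝ} (h : Adm k d) : k < cc k d := by
  have := h.cc_eq; have := h.d0; have := h.kd
  nlinarith

lemma Adm.cc_le {k d : ℝ} (h : Adm k d) : 3 * cc k d ≤ 1 + k := by
  have := h.cc_eq; have := h.d0; have := h.d1; have := h.k1
  have := h.cc_pos
  nlinarith

/-- Bound for `x²`. -/
noncomputable def Ym (k d : ℝ) : ℝ := 2 / (cc k d - k) + 1
/-- Bound for `|1 - w + k x²|`. -/
noncomputable def Cg (k d : ℝ) : ℝ := (1 + k + |k|) * Ym k d + 1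
/-- Right end of the parameter interval used for shooting. -/
noncomputable def Mm (k d : ℝ) : ℝ := 4 * Cg k d + 4
/-- A priori bound for all coordinates. -/
noncomputable def B0 (k d : ℝ) : ℝ := (1 + Mm k d) * Cg k d * Ym k d

lemma Adm.Ym_gt {k d : ℝ} (h : Adm k d) : 1 < Ym k d := by
  have : 0 < cc k d - k := sub_pos.2 h.lt_cc
  unfold Ym
  have : 0 < 2 / (cc k d - k) := by positivity
  linarith

lemma Adm.Cg_gt {k d : ℝ} (h : Adm k d) : (1 + k + |k|) * Ym k d + 1 = Cg k d ∧ 1 < Cg k d := by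
  refine ⟨rfl, ?_⟩
  have := h.Ym_gt; have := h.k1; have := abs_nonneg k
  have : 0 < 1 + k + |k| := by linarith
  unfold Cg
  have : 0 < (1 + k + |k|) * Ym k d := by positivity
  linarith

lemma Adm.Mm_gt {k d : ℝ} (h : Adm k d) : 8 < Mm k d := by
  have := h.Cg_gt.2
  unfold Mm; linarith

lemma Adm.B0_ge {k d : ℝ} (h : Adm k d) :
    Mm k d ≤ B0 k d ∧ Cg k d ≤ B0 k d ∧ Ym k d ≤ B0 k d ∧ 1 < B0 k d := by
  have h1 := h.Cg_gt.2; have h2 := h.Ym_gt; have h3 := h.Mm_gt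
  have a1 : 1 < Cg k d * Ym k d := by nlinarith
  have a2 : Cg k d ≤ Cg k d * Ym k d := by nlinarith
  have a3 : Ym k d ≤ Cg k d * Ym k d := by nlinarith
  have a4 : B0 k d = (1 + Mm k d) * (Cg k d * Ym k d) := by unfold B0; ring
  rw [a4]
  refine ⟨?_, ?_, ?_, ?_⟩ <;> nlinarith

/-- `x² (z² + L z - (1 + L)(1 - w + k x²))` with `z = v / x`; its sign is the sign of `-z'`. -/
def PP (k L x v w : ℝ) : ℝ := v ^ 2 + L * x * v - (1 + L) * x ^ 2 * (1 - w + k * x ^ 2)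

/-- The scaled system `x' = v`, `v' = -L v + (1 + L) x (1 - w + k x²)`, `w' = d ((1 + k) x² - w)`
holds at time `t`. It comes from the original one by `w = u + (1 + k) x²`, `k = β / 2 - 1`, and a
change of time scale. -/
structure Sol (k d L : ℝ) (x v w : ℝ → ℝ) (t : ℝ) : Prop where
  dx : HasDerivAt x (v t) t
  dv : HasDerivAt v (-L * v t + (1 + L) * x t * (1 - w t + k * x t ^ 2)) t
  dw : HasDerivAt w (d * ((1 + k) * x t ^ 2 - w t)) t

section
variable {k d L t : ℝ} {x v w : ℝ → ℝ}

lemma Sol.dz (h : Sol k d L x v w t) (hx : x t ≠ 0) :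
    HasDerivAt (fun s => v s / x s) (-(PP k L (x t) (v t) (w t)) / x t ^ 2) t := by
  refine HasDerivAt.congr_deriv (h.dv.fun_div h.dx hx) ?_
  unfold PP; ring

lemma Sol.dy (h : Sol k d L x v w t) : HasDerivAt (fun s => x s ^ 2) (2 * x t * v t) t := by
  refine HasDerivAt.congr_deriv (h.dx.fun_pow 2) ?_
  norm_num

lemma Sol.dP (h : Sol k d L x v w t) :
    HasDerivAt (fun s => PP k L (x s) (v s) (w s)) (-L * PP k L (x t) (v t) (w t)
      + (1 + L) * (x t ^ 2 * (d * ((1 + k) * x t ^ 2 - w t)) - 2 * k * x t ^ 3 * v t)) t := by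
  unfold PP
  refine HasDerivAt.congr_deriv (((h.dv.fun_pow 2).fun_add ((h.dx.const_mul L).fun_mul h.dv)).fun_sub
    ((h.dy.const_mul (1 + L)).fun_mul ((h.dw.const_sub 1).fun_add (h.dy.const_mul k)))) ?_
  norm_num
  ring

/-- `x²` times the derivative of `w / x²`. -/
noncomputable def Dn (k d x v w : ℝ) : ℝ := d * ((1 + k) * x ^ 2 - w) - 2 * (v / x) * w

lemma Sol.dDn (h : Sol k d L x v w t) (hx : x t ≠ 0) :
    HasDerivAt (fun s => Dn k d (x s) (v s) (w s)) (-d * Dn k d (x t) (v t) (w t)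
      + 2 * (PP k L (x t) (v t) (w t) / x t ^ 2) * w t) t := by
  unfold Dn
  refine HasDerivAt.congr_deriv ((((h.dy.const_mul (1 + k)).fun_sub h.dw).const_mul d).fun_sub
    (((h.dz hx).const_mul 2).fun_mul h.dw)) ?_
  field_simp
  ring

lemma Sol.drho (h : Sol k d L x v w t) (hx : x t ≠ 0) :
    HasDerivAt (fun s => w s / x s ^ 2) (Dn k d (x t) (v t) (w t) / x t ^ 2) t := by
  refine HasDerivAt.congr_deriv (h.dw.fun_div h.dy (pow_ne_zero 2 hx)) ?_
  unfold Dn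
  field_simp

end

/-- The data common to all estimates: a solution issued from the approximate unstable manifold,
along which `x > 0` and `v / x` is nonincreasing, up to time `T`. -/
structure Phase (k d L η T : ℝ) (x v w : ℝ → ℝ) : Prop where
  adm : Adm k d
  L0 : 0 ≤ L
  η0 : 0 < η
  η1 : η ≤ 1 / 2
  ode : ∀ t ∈ Icc 0 T, Sol k d L x v w t
  xpos : ∀ t ∈ Icc 0 T, 0 < x t
  Pnn : ∀ t ∈ Icc 0 T, 0 ≤ PP k L (x t) (v t) (w t)
  x0 : x 0 = η
  v0 : v 0 = η
  w0 : w 0 = cc k d * η ^ 2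

namespace Phase
variable {k d L η T : ℝ} {x v w : ℝ → ℝ}

lemma restrict (h : Phase k d L η T x v w) {S : ℝ} (hS : S ≤ T) : Phase k d L η S x v w :=
  { h with
    ode := fun t ht => h.ode t ⟨ht.1, ht.2.trans hS⟩
    xpos := fun t ht => h.xpos t ⟨ht.1, ht.2.trans hS⟩
    Pnn := fun t ht => h.Pnn t ⟨ht.1, ht.2.trans hS⟩ }

lemma w_pos (h : Phase k d L η T x v w) {t : ℝ} (ht : t ∈ Icc 0 T) : 0 < w t := by
  have h' := h.restrict ht.2
  have hk := h.adm.k1; have hd := h.adm.d0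
  have := exp_lower (q := d) ht.1 (fun s hs => (h'.ode s hs).dw) (fun s hs => by
    have : 0 ≤ d * ((1 + k) * x s ^ 2) := by
      have : 0 ≤ 1 + k := by linarith
      positivity
    nlinarith)
  have h0 : 0 < w 0 := by
    rw [h.w0]; have := h.adm.cc_pos; have := h.η0; positivity
  exact lt_of_lt_of_le (by positivity) this

lemma z_anti (h : Phase k d L η T x v w) : AntitoneOn (fun t => v t / x t) (Icc 0 T) :=
  anti_of_deriv (fun t ht => (h.ode t ht).dz (h.xpos t ht).ne') (fun t ht => by
    have := h.Pnn t ht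
    rw [neg_div]
    have : 0 ≤ PP k L (x t) (v t) (w t) / x t ^ 2 := by positivity
    linarith)

lemma z_zero (h : Phase k d L η T x v w) : v 0 / x 0 = 1 := by
  rw [h.v0, h.x0, div_self h.η0.ne']

lemma z_le_one (h : Phase k d L η T x v w) {t : ℝ} (ht : t ∈ Icc 0 T) : v t / x t ≤ 1 := by
  rw [← h.z_zero]
  exact h.z_anti ⟨le_rfl, ht.1.trans ht.2⟩ ht ht.1

lemma v_le_x (h : Phase k d L η T x v w) {t : ℝ} (ht : t ∈ Icc 0 T) : v t ≤ x t :=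
  (div_le_one (h.xpos t ht)).1 (h.z_le_one ht)

lemma v_nonneg_before (h : Phase k d L η T x v w) {t s : ℝ} (ht : t ∈ Icc 0 T) (hv : 0 ≤ v t)
    (hs : s ∈ Icc 0 t) : 0 ≤ v s := by
  have hs' : s ∈ Icc 0 T := ⟨hs.1, hs.2.trans ht.2⟩
  have h1 : v t / x t ≤ v s / x s := h.z_anti hs' ht hs.2
  have h2 : 0 ≤ v t / x t := div_nonneg hv (h.xpos t ht).le
  have h3 := h.xpos s hs'
  by_contra hcon
  have := div_neg_of_neg_of_pos (not_le.1 hcon) h3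
  linarith

lemma v_nonpos_after (h : Phase k d L η T x v w) {t s : ℝ} (ht : t ∈ Icc 0 T) (hv : v t ≤ 0)
    (hs : s ∈ Icc t T) : v s ≤ 0 := by
  have hs' : s ∈ Icc 0 T := ⟨ht.1.trans hs.1, hs.2⟩
  by_contra hcon
  push Not at hcon
  have h1 : v s / x s ≤ v t / x t := h.z_anti ht hs' hs.1
  have h2 : v t / x t ≤ 0 := div_nonpos_of_nonpos_of_nonneg hv (h.xpos t ht).le
  have := div_pos hcon (h.xpos s hs')
  linarith

lemma P_zero (h : Phase k d L η T x v w) :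
    PP k L (x 0) (v 0) (w 0) = (1 + L) * (cc k d - k) * η ^ 4 := by
  rw [h.x0, h.v0, h.w0]; unfold PP; ring

lemma Dn_zero (h : Phase k d L η T x v w) : Dn k d (x 0) (v 0) (w 0) = 0 := by
  unfold Dn
  rw [h.z_zero, h.x0, h.w0]
  linear_combination (-η ^ 2) * h.adm.cc_eq

lemma Dn_exp (h : Phase k d L η T x v w) {s t : ℝ} (hs : 0 ≤ s) (hst : s ≤ t) (ht : t ≤ T) :
    Dn k d (x s) (v s) (w s) * Real.exp (-d * (t - s)) ≤ Dn k d (x t) (v t) (w t) := by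
  have hm : ∀ r ∈ Icc s t, r ∈ Icc 0 T := fun r hr => ⟨hs.trans hr.1, hr.2.trans ht⟩
  refine exp_lower (q := d) (f := fun r => Dn k d (x r) (v r) (w r)) hst
    (fun r hr => (h.ode r (hm r hr)).dDn (h.xpos r (hm r hr)).ne') (fun r hr => ?_)
  have h1 := h.Pnn r (hm r hr)
  have h2 := h.w_pos (hm r hr)
  have : 0 ≤ 2 * (PP k L (x r) (v r) (w r) / x r ^ 2) * w r := by positivity
  linarith

lemma Dn_nonneg (h : Phase k d L η T x v w) {t : ℝ} (ht : t ∈ Icc 0 T) :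
    0 ≤ Dn k d (x t) (v t) (w t) := by
  have := h.Dn_exp le_rfl ht.1 ht.2
  rw [h.Dn_zero, zero_mul] at this
  exact this

lemma Dn_pos (h : Phase k d L η T x v w) {t : ℝ} (ht : t ∈ Ioc 0 T) :
    0 < Dn k d (x t) (v t) (w t) := by
  have h0T : (0 : ℝ) ∈ Icc 0 T := ⟨le_rfl, ht.1.le.trans ht.2⟩
  have hx0 := h.xpos 0 h0T
  have hP : 0 < PP k L (x 0) (v 0) (w 0) := by
    rw [h.P_zero]
    have := h.L0; have := h.η0
    have : 0 < cc k d - k := sub_pos.2 h.adm.lt_cc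
    positivity
  have hev := pos_right_of_deriv ((h.ode 0 h0T).dDn hx0.ne') h.Dn_zero (by
    rw [h.Dn_zero]
    have := h.w_pos h0T
    have : 0 < 2 * (PP k L (x 0) (v 0) (w 0) / x 0 ^ 2) * w 0 := by positivity
    linarith)
  obtain ⟨s, hs1, hs2⟩ := (hev.and (Ioo_mem_nhdsGT ht.1)).exists
  exact lt_of_lt_of_le (by positivity) (h.Dn_exp hs2.1.le hs2.2.le ht.2)

/-- The quotient `w / x²` starts at `cc` and does not decrease; this is where the slope `cc` of the
unstable manifold enters. -/
lemma rho_ge (h : Phase k d L η T x v w) {t : ℝ} (ht : t ∈ Icc 0 T) : cc k d ≤ w t / x t ^ 2 := by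
  have h0T : (0 : ℝ) ∈ Icc 0 T := ⟨le_rfl, ht.1.trans ht.2⟩
  have hm := mono_of_deriv (fun t ht => (h.ode t ht).drho (h.xpos t ht).ne') (fun t ht => by
    have := h.Dn_nonneg ht
    positivity) h0T ht ht.1
  have e : w 0 / x 0 ^ 2 = cc k d := by
    rw [h.w0, h.x0]; have := h.η0; field_simp
  rw [← e]; exact hm

lemma w_ge (h : Phase k d L η T x v w) {t : ℝ} (ht : t ∈ Icc 0 T) : cc k d * x t ^ 2 ≤ w t := by
  have hx := h.xpos t ht
  have := h.rho_ge ht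
  rwa [le_div_iff₀ (by positivity)] at this

lemma dU {t : ℝ} (h : Sol k d L x v w t) :
    HasDerivAt (fun s => (1 + k) * x s ^ 2 - w s)
      (-d * ((1 + k) * x t ^ 2 - w t) + 2 * (1 + k) * x t * v t) t := by
  refine HasDerivAt.congr_deriv ((h.dy.const_mul (1 + k)).fun_sub h.dw) ?_
  ring

/-- The variable `-u = (1 + k) x² - w` stays positive as long as `x` increases. -/
lemma U_pos (h : Phase k d L η T x v w) {t : ℝ} (ht : t ∈ Icc 0 T) (hv : 0 ≤ v t) :
    0 < (1 + k) * x t ^ 2 - w t := by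
  have hm : ∀ r ∈ Icc 0 t, r ∈ Icc 0 T := fun r hr => ⟨hr.1, hr.2.trans ht.2⟩
  have hk : 0 < 1 + k := by linarith [h.adm.k1]
  have := exp_lower (q := d) (f := fun s => (1 + k) * x s ^ 2 - w s) ht.1
    (fun s hs => dU (h.ode s (hm s hs))) (fun s hs => by
      have h1 := h.v_nonneg_before ht hv hs
      have h2 := h.xpos s (hm s hs)
      have : 0 ≤ 2 * (1 + k) * x s * v s := by positivity
      linarith)
  refine lt_of_lt_of_le ?_ this
  rw [h.x0, h.w0]
  have h3 := h.adm.cc_le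
  have := h.adm.cc_pos
  have := h.η0
  have h4 : (1 + k) * η ^ 2 - cc k d * η ^ 2 = (1 + k - cc k d) * η ^ 2 := by ring
  have : 0 < 1 + k - cc k d := by linarith
  rw [h4]
  positivity

/-- On the way out, `w ≥ cc x²` makes the restoring force at least that of a Duffing potential with
hard coefficient `cc - k > 0`, whose energy does not increase. -/
lemma y_le_of_v_nonneg (h : Phase k d L η T x v w) {t : ℝ} (ht : t ∈ Icc 0 T) (hv : 0 ≤ v t) :
    x t ^ 2 ≤ Ym k d := by
  have hm : ∀ r ∈ Icc 0 t, r ∈ Icc 0 T := fun r hr => ⟨hr.1, hr.2.trans ht.2⟩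
  have hκ : 0 < cc k d - k := sub_pos.2 h.adm.lt_cc
  have hL := h.L0
  have hη := h.η0
  have hη1 := h.η1
  have key := anti_of_deriv (a := 0) (b := t)
    (f := fun s => v s ^ 2 / 2 - (1 + L) * (x s ^ 2 / 2 - (cc k d - k) * (x s ^ 2) ^ 2 / 4))
    (f' := fun s => -L * v s ^ 2 + (1 + L) * x s * v s *
      ((1 - w s + k * x s ^ 2) - 1 + (cc k d - k) * x s ^ 2))
    (fun s hs => by
      have hS := h.ode s (hm s hs)
      refine HasDerivAt.congr_deriv (((hS.dv.fun_pow 2).div_const 2).fun_sub (((hS.dy.div_const 2).fun_sub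
        (((hS.dy.fun_pow 2).const_mul (cc k d - k)).div_const 4)).const_mul (1 + L))) ?_
      norm_num
      ring)
    (fun s hs => by
      have h1 := h.v_nonneg_before ht hv hs
      have h2 := h.xpos s (hm s hs)
      have h3 := h.w_ge (hm s hs)
      have h4 : 0 ≤ L * v s ^ 2 := by positivity
      have h5 : 0 ≤ (1 + L) * x s * v s := by positivity
      nlinarith [mul_nonneg h5 (sub_nonneg.2 h3)])
    (left_mem_Icc.2 ht.1) (right_mem_Icc.2 ht.1) ht.1
  simp only [h.x0, h.v0] at key
  by_contra hcon
  push Not at hcon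
  have hY : (cc k d - k) * (Ym k d - 1) = 2 := by unfold Ym; field_simp; ring
  set y := x t ^ 2
  set K := cc k d - k
  have h1 : K * y - 2 > K := by nlinarith
  have h2 : 1 < y := by linarith [h.adm.Ym_gt]
  have h3 : η ^ 2 ≤ 1 / 4 := by nlinarith
  have h4 : (η ^ 2) ^ 2 ≤ 1 / 16 := by nlinarith [sq_nonneg η]
  have h5 : (1 + L) * (K * y ^ 2 / 4 - y / 2) ≤ (1 + L) * (K * (η ^ 2) ^ 2 / 4) := by
    nlinarith [sq_nonneg (v t), mul_nonneg hL (sq_nonneg η)]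
  have h6 := le_of_mul_le_mul_left h5 (by linarith)
  nlinarith

/-- If `v ≤ 0` at time `t`, there is a first turning time in `(0, t]`. -/
lemma exists_turn (h : Phase k d L η T x v w) {t : ℝ} (ht : t ∈ Icc 0 T) (hv : v t ≤ 0) :
    ∃ r ∈ Ioc 0 t, v r = 0 ∧ ∀ s ∈ Ico 0 r, 0 < v s := by
  refine first_hit_down ht.1 (fun s hs => ?_) (by rw [h.v0]; exact h.η0) hv
  exact (h.ode s ⟨hs.1, hs.2.trans ht.2⟩).dv.continuousAt.continuousWithinAt

lemma y_le (h : Phase k d L η T x v w) {t : ℝ} (ht : t ∈ Icc 0 T) : x t ^ 2 ≤ Ym k d := by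
  rcases le_total 0 (v t) with hv | hv
  · exact h.y_le_of_v_nonneg ht hv
  obtain ⟨r, hr, hvr, -⟩ := h.exists_turn ht hv
  have hrT : r ∈ Icc 0 T := ⟨hr.1.le, hr.2.trans ht.2⟩
  have h1 := h.y_le_of_v_nonneg hrT hvr.ge
  have h2 := anti_of_deriv (a := r) (b := t) (fun s hs => (h.ode s ⟨hr.1.le.trans hs.1, hs.2.trans ht.2⟩).dy)
    (fun s hs => by
      have := h.v_nonpos_after hrT hvr.le (s := s) ⟨hs.1, hs.2.trans ht.2⟩
      have := h.xpos s ⟨hr.1.le.trans hs.1, hs.2.trans ht.2⟩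
      nlinarith) (left_mem_Icc.2 hr.2) (right_mem_Icc.2 hr.2) hr.2
  exact le_trans h2 h1

lemma w_le (h : Phase k d L η T x v w) {t : ℝ} (ht : t ∈ Icc 0 T) : w t ≤ (1 + k) * Ym k d := by
  have hm : ∀ r ∈ Icc 0 t, r ∈ Icc 0 T := fun r hr => ⟨hr.1, hr.2.trans ht.2⟩
  have hk : 0 < 1 + k := by linarith [h.adm.k1]
  have h0 : w 0 ≤ (1 + k) * Ym k d := by
    rw [h.w0]
    have h1 := h.adm.cc_le; have h2 := h.adm.cc_pos; have := h.η1; have := h.η0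
    have h3 : η ^ 2 ≤ 1 := by nlinarith
    have := h.adm.Ym_gt
    nlinarith
  have := exp_upper (q := d) (f := fun s => w s - (1 + k) * Ym k d) ht.1
    (fun s hs => (h.ode s (hm s hs)).dw.sub_const _) (fun s hs => by
      have h1 := h.y_le (hm s hs)
      have h2 := h.adm.d0
      have h3 := mul_le_mul_of_nonneg_left h1 (mul_pos h2 hk).le
      linarith)
  have he := Real.exp_pos (-d * (t - 0))
  nlinarith

lemma g_abs (h : Phase k d L η T x v w) {t : ℝ} (ht : t ∈ Icc 0 T) :
    |1 - w t + k * x t ^ 2| ≤ Cg k d := by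
  have h1 := h.y_le ht; have h2 := h.w_le ht; have h3 := h.w_pos ht
  have h4 : |k * x t ^ 2| ≤ |k| * Ym k d := by
    rw [abs_mul, abs_of_nonneg (sq_nonneg (x t))]
    exact mul_le_mul_of_nonneg_left h1 (abs_nonneg k)
  have h5 := abs_le.1 h4
  have hk : 0 < 1 + k := by linarith [h.adm.k1]
  have h6 : 0 < (1 + k) * Ym k d := mul_pos hk (by linarith [h.adm.Ym_gt])
  unfold Cg
  rw [abs_le]
  constructor <;> nlinarith

/-- After the turning point, `v² + (1 + L) Cg x²` does not increase. -/
lemma v_sq_le (h : Phase k d L η T x v w) {t : ℝ} (ht : t ∈ Icc 0 T) :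
    v t ^ 2 ≤ (1 + L) * Cg k d * Ym k d := by
  have hC := h.adm.Cg_gt.2
  have hY := h.adm.Ym_gt
  have hL := h.L0
  have hLC : 1 ≤ (1 + L) * Cg k d := by nlinarith
  rcases le_total 0 (v t) with hv | hv
  · have h1 := h.v_le_x ht
    have h2 := h.y_le ht
    nlinarith
  obtain ⟨r, hr, hvr, -⟩ := h.exists_turn ht hv
  have hrT : r ∈ Icc 0 T := ⟨hr.1.le, hr.2.trans ht.2⟩
  have h1 := h.y_le hrT
  have key := anti_of_deriv (a := r) (b := t)
    (f := fun s => v s ^ 2 + (1 + L) * Cg k d * x s ^ 2)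
    (f' := fun s => 2 * (-(L * v s ^ 2) + (1 + L) * x s * v s *
      ((1 - w s + k * x s ^ 2) + Cg k d)))
    (fun s hs => by
      have hS := h.ode s ⟨hr.1.le.trans hs.1, hs.2.trans ht.2⟩
      refine HasDerivAt.congr_deriv ((hS.dv.fun_pow 2).fun_add (hS.dy.const_mul ((1 + L) * Cg k d))) ?_
      norm_num
      ring)
    (fun s hs => by
      have hsT : s ∈ Icc 0 T := ⟨hr.1.le.trans hs.1, hs.2.trans ht.2⟩
      have a1 := h.v_nonpos_after hrT hvr.le (s := s) ⟨hs.1, hs.2.trans ht.2⟩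
      have a2 := h.xpos s hsT
      have a3 := (abs_le.1 (h.g_abs hsT)).1
      have a4 : 0 ≤ L * v s ^ 2 := by positivity
      have a5 : 0 ≤ (1 + L) * x s * (-v s) :=
        mul_nonneg (by positivity) (by linarith)
      nlinarith [mul_nonneg a5 (by linarith : 0 ≤ (1 - w s + k * x s ^ 2) + Cg k d)])
    (left_mem_Icc.2 hr.2) (right_mem_Icc.2 hr.2) hr.2
  simp only [hvr] at key
  have : (1 + L) * Cg k d * x r ^ 2 ≤ (1 + L) * Cg k d * Ym k d :=
    mul_le_mul_of_nonneg_left h1 (by linarith)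
  have : 0 ≤ (1 + L) * Cg k d * x t ^ 2 := by positivity
  nlinarith

lemma bounds (h : Phase k d L η T x v w) (hLM : L ≤ Mm k d) {t : ℝ} (ht : t ∈ Icc 0 T) :
    |x t| ≤ B0 k d ∧ |v t| ≤ B0 k d ∧ |w t| ≤ B0 k d := by
  obtain ⟨b1, b2, b3, b4⟩ := h.adm.B0_ge
  have hC := h.adm.Cg_gt.2
  have hY := h.adm.Ym_gt
  refine ⟨?_, ?_, ?_⟩
  · have := h.y_le ht
    exact abs_le_of_sq_le_sq (by nlinarith) (by linarith)
  · have h1 := h.v_sq_le ht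
    have h2 : (1 + L) * (Cg k d * Ym k d) ≤ (1 + Mm k d) * (Cg k d * Ym k d) :=
      mul_le_mul_of_nonneg_right (by linarith) (by nlinarith)
    have h3 : v t ^ 2 ≤ B0 k d := by unfold B0; nlinarith
    exact abs_le_of_sq_le_sq (by nlinarith) (by linarith)
  · have h1 := h.w_le ht
    have h2 := h.w_pos ht
    have h3 := h.adm.Cg_gt.1
    have : 0 ≤ |k| * Ym k d := mul_nonneg (abs_nonneg k) (by linarith)
    rw [abs_of_pos h2]
    nlinarith

/-- Derivative of the factor of `x⁴` in `P'` (see `dP_eq`), which carries the sign of `P'` where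
`P = 0`. -/
lemma dS (h : Phase k d L η T x v w) {t : ℝ} (ht : t ∈ Icc 0 T) :
    HasDerivAt (fun s => d * (1 + k - w s / x s ^ 2) - 2 * k * (v s / x s))
      (-d * (Dn k d (x t) (v t) (w t) / x t ^ 2)
        + 2 * k * (PP k L (x t) (v t) (w t) / x t ^ 2)) t := by
  have hS := h.ode t ht
  have hx := (h.xpos t ht).ne'
  refine HasDerivAt.congr_deriv ((((hS.drho hx).const_sub (1 + k)).const_mul d).fun_sub
    ((hS.dz hx).const_mul (2 * k))) ?_
  ring

lemma dP_eq (h : Phase k d L η T x v w) {t : ℝ} (ht : t ∈ Icc 0 T) :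
    HasDerivAt (fun s => PP k L (x s) (v s) (w s)) (-L * PP k L (x t) (v t) (w t)
      + (1 + L) * x t ^ 4 * (d * (1 + k - w t / x t ^ 2) - 2 * k * (v t / x t))) t := by
  have hx := (h.xpos t ht).ne'
  refine HasDerivAt.congr_deriv ((h.ode t ht).dP) ?_
  field_simp

/-- Along a phase, `P` cannot touch zero from above at an interior time: at such a time `P'` would
vanish and then, `w / x²` being strictly increasing, `P` could only stay nonnegative afterwards by
vanishing identically, which is again incompatible with the strict monotonicity. -/
lemma P_pos (h : Phase k d L η T x v w) {t : ℝ} (ht : t ∈ Ioo 0 T) :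
    0 < PP k L (x t) (v t) (w t) := by
  have hL := h.L0
  -- at an interior zero of `P`, the factor of `x⁴` in `P'` vanishes
  have van : ∀ s ∈ Ioo 0 T, PP k L (x s) (v s) (w s) = 0 →
      d * (1 + k - w s / x s ^ 2) - 2 * k * (v s / x s) = 0 := by
    intro s hs h0
    have hloc : IsLocalMin (fun s => PP k L (x s) (v s) (w s)) s := by
      filter_upwards [Icc_mem_nhds hs.1 hs.2] with r hr
      rw [h0]; exact h.Pnn r hr
    have := hloc.hasDerivAt_eq_zero (h.dP_eq ⟨hs.1.le, hs.2.le⟩)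
    rw [h0, mul_zero, zero_add] at this
    have hx := h.xpos s ⟨hs.1.le, hs.2.le⟩
    have hp : (1 + L) * x s ^ 4 ≠ 0 := by positivity
    exact (mul_eq_zero.1 this).resolve_left hp
  have ht' : t ∈ Icc 0 T := ⟨ht.1.le, ht.2.le⟩
  by_contra hcon
  have hP0 : PP k L (x t) (v t) (w t) = 0 := le_antisymm (not_lt.1 hcon) (h.Pnn t ht')
  have hx := h.xpos t ht'
  have hS0 := van t ht hP0
  have hev := pos_right_of_deriv (h.dS ht').fun_neg (by simp only [hS0, neg_zero]) (by
    rw [hP0]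
    have := h.Dn_pos ⟨ht.1, ht.2.le⟩
    have hd := h.adm.d0
    have : 0 < d * (Dn k d (x t) (v t) (w t) / x t ^ 2) := by positivity
    simp only [zero_div, mul_zero, add_zero]
    linarith)
  obtain ⟨e, he, hsub⟩ := mem_nhdsGT_iff_exists_Ioo_subset.1 (inter_mem hev (Ioo_mem_nhdsGT ht.2))
  obtain ⟨s, hs⟩ := exists_between (show t < e from he)
  have hsm : s ∈ Ioo t T := (hsub hs).2
  have hneg : ∀ r ∈ Icc t s, d * (1 + k - w r / x r ^ 2) - 2 * k * (v r / x r) ≤ 0 := by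
    intro r hr
    rcases hr.1.eq_or_lt with heq | hlt
    · rw [← heq, hS0]
    · have := (hsub ⟨hlt, hr.2.trans_lt hs.2⟩).1
      simp only [mem_ofPred_eq] at this
      linarith
  have hup := exp_upper (q := L) (f := fun s => PP k L (x s) (v s) (w s)) hs.1.le
    (fun r hr => h.dP_eq ⟨ht.1.le.trans hr.1, hr.2.trans hsm.2.le⟩) (fun r hr => by
      have h1 := hneg r hr
      have h2 := h.xpos r ⟨ht.1.le.trans hr.1, hr.2.trans hsm.2.le⟩
      have h3 : 0 ≤ (1 + L) * x r ^ 4 := by positivity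
      nlinarith [mul_nonneg h3 (neg_nonneg.2 h1)])
  simp only [hP0, zero_mul] at hup
  have hsT : s ∈ Ioo 0 T := ⟨ht.1.trans hsm.1, hsm.2⟩
  have hs0 := van s hsT (le_antisymm hup (h.Pnn s ⟨hsT.1.le, hsT.2.le⟩))
  have := (hsub hs).1
  simp only [mem_ofPred_eq] at this
  linarith

end Phase

/-! ### Consequences: the case `L = 0`, nonvanishing, turning points -/

/-- Lyapunov-type function, nondecreasing when `L = 0`. -/
noncomputable def VV (k x v w : ℝ) : ℝ :=
  v ^ 2 / 2 - x ^ 2 / 2 - k * (x ^ 2) ^ 2 / 4 + w * x ^ 2 / 2 - w ^ 2 / (4 * (1 + k))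

lemma Sol.dV {k d t : ℝ} {x v w : ℝ → ℝ} (ha : Adm k d) (h : Sol k d 0 x v w t) :
    HasDerivAt (fun s => VV k (x s) (v s) (w s))
      ((d * ((1 + k) * x t ^ 2 - w t)) ^ 2 / (2 * d * (1 + k))) t := by
  have hd := ha.d0
  have hk : 0 < 1 + k := by linarith [ha.k1]
  unfold VV
  refine HasDerivAt.congr_deriv ((((((h.dv.fun_pow 2).div_const 2).fun_sub
    (h.dy.div_const 2)).fun_sub (((h.dy.fun_pow 2).const_mul k).div_const 4)).fun_add
    ((h.dw.fun_mul h.dy).div_const 2)).fun_sub ((h.dw.fun_pow 2).div_const (4 * (1 + k)))) ?_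
  norm_num
  field_simp
  ring

namespace Phase
variable {k d L η T : ℝ} {x v w : ℝ → ℝ}

/-- For `L = 0`, the function `P` has no zero before `x` vanishes. At a first zero of `P` the
inequality `V > 0` reads `ρ² < k (1 + k)` with `ρ = w / x²`, while `P' ≤ 0` and the monotonicity of
`ρ` bound `ρ` from below; these are incompatible in the admissible range. -/
lemma no_touch (h : Phase k d 0 η T x v w) (hT : 0 < T)
    (hP : PP k 0 (x T) (v T) (w T) = 0) : False := by
  have hTm : T ∈ Icc 0 T := ⟨hT.le, le_rfl⟩
  have hd := h.adm.d0
  have hd1 := h.adm.d1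
  have hk : 0 < 1 + k := by linarith [h.adm.k1]
  have hx := h.xpos T hTm
  have hc := h.adm.cc_eq
  have hκ := h.adm.lt_cc
  have hV := mono_of_deriv (fun t ht => (h.ode t ht).dV h.adm) (fun t ht => by positivity)
    ⟨le_rfl, hT.le⟩ hTm hT.le
  have hV0 : 0 < VV k (x 0) (v 0) (w 0) := by
    rw [h.x0, h.v0, h.w0]
    have e : VV k η η (cc k d * η ^ 2)
        = η ^ 4 / 4 * (2 * cc k d - k - cc k d ^ 2 / (1 + k)) := by
      unfold VV; field_simp; ring
    rw [e]
    have h1 : cc k d ^ 2 / (1 + k) ≤ cc k d := by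
      rw [div_le_iff₀ hk]
      nlinarith [h.adm.cc_le, h.adm.cc_pos]
    have := h.η0
    have : 0 < 2 * cc k d - k - cc k d ^ 2 / (1 + k) := by linarith
    positivity
  have hVT : 0 < VV k (x T) (v T) (w T) := lt_of_lt_of_le hV0 hV
  have eV : VV k (x T) (v T) (w T)
      = (x T ^ 2) ^ 2 / 4 * (k - (w T / x T ^ 2) ^ 2 / (1 + k)) := by
    have e2 : v T ^ 2 = x T ^ 2 * (1 - w T + k * x T ^ 2) := by
      unfold PP at hP; linarith
    unfold VV
    rw [e2]
    field_simp
    ring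
  rw [eV] at hVT
  have hq : 0 < k - (w T / x T ^ 2) ^ 2 / (1 + k) := pos_of_mul_pos_right hVT (by positivity)
  have hS : d * (1 + k - w T / x T ^ 2) - 2 * k * (v T / x T) ≤ 0 := by
    have h1 := deriv_nonpos_of_left hT (h.dP_eq hTm) hP
      (fun s hs => h.Pnn s ⟨hs.1, hs.2.le⟩)
    rw [hP] at h1
    by_contra hcon
    have : 0 < x T ^ 4 * (d * (1 + k - w T / x T ^ 2) - 2 * k * (v T / x T)) :=
      mul_pos (by positivity) (not_le.1 hcon)
    linarith
  have hz := h.z_le_one hTm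
  have hD : (d + 2 * (v T / x T)) * (w T / x T ^ 2) ≤ d * (1 + k) := by
    have h1 := h.Dn_nonneg hTm
    have h2 : Dn k d (x T) (v T) (w T)
        = x T ^ 2 * (d * (1 + k) - (d + 2 * (v T / x T)) * (w T / x T ^ 2)) := by
      unfold Dn; field_simp; ring
    rw [h2] at h1
    have := nonneg_of_mul_nonneg_right h1 (by positivity)
    linarith
  set z := v T / x T
  set ρ := w T / x T ^ 2 with hρ
  have hρ0 : 0 < ρ := div_pos (h.w_pos hTm) (by positivity)
  have hsq : ρ ^ 2 < k * (1 + k) := by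
    rw [sub_pos, div_lt_iff₀ hk] at hq
    exact hq
  have hk0 : 0 < k := by
    by_contra hcon
    nlinarith [sq_nonneg ρ]
  rcases le_total (4 * k) d with hc1 | hc1
  · have : k + 1 / 2 ≤ ρ := by
      by_contra hcon
      push Not at hcon
      nlinarith
    nlinarith
  · have h1 : (d + 2) * (ρ - cc k d) ≤ 2 * (1 - z) * ρ := by nlinarith
    have h2 : 2 * (cc k d - k) + 2 * k * (1 - z) ≤ d * (ρ - cc k d) := by nlinarith
    have h3 : (d + 2) * (2 * (cc k d - k) + 2 * k * (1 - z)) ≤ d * (2 * (1 - z) * ρ) := by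
      calc _ ≤ (d + 2) * (d * (ρ - cc k d)) := mul_le_mul_of_nonneg_left h2 (by linarith)
        _ = d * ((d + 2) * (ρ - cc k d)) := by ring
        _ ≤ _ := mul_le_mul_of_nonneg_left h1 hd.le
    have h4 : 0 < (1 - z) * (d * ρ - (d + 2) * k) := by
      have : 0 < (d + 2) * (cc k d - k) := mul_pos (by linarith) (by linarith)
      nlinarith
    have h5 : 0 < d * ρ - (d + 2) * k := pos_of_mul_pos_right h4 (by linarith)
    have h6 : ((d + 2) * k) ^ 2 < (d * ρ) ^ 2 := by
      apply pow_lt_pow_left₀ (by linarith) (by positivity) (by norm_num)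
    have h7 : d ^ 2 * ρ ^ 2 < d ^ 2 * (k * (1 + k)) :=
      mul_lt_mul_of_pos_left hsq (by positivity)
    have h8 : d ^ 2 * (1 + k) ≤ (d + 2) ^ 2 * k := by nlinarith
    nlinarith [mul_le_mul_of_nonneg_left h8 hk0.le]

end Phase

section
variable {k d L C a b : ℝ} {x v w : ℝ → ℝ}

lemma dN {t : ℝ} (h : Sol k d L x v w t) : HasDerivAt (fun s => x s ^ 2 + v s ^ 2)
    (2 * x t * v t * (1 + (1 + L) * (1 - w t + k * x t ^ 2)) - 2 * L * v t ^ 2) t := by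
  refine HasDerivAt.congr_deriv (h.dy.fun_add (h.dv.fun_pow 2)) ?_
  norm_num
  ring

lemma dN_abs {X V g : ℝ} (hL : 0 ≤ L) (hg : |g| ≤ C) :
    |2 * X * V * (1 + (1 + L) * g) - 2 * L * V ^ 2|
      ≤ (1 + (1 + L) * C + 2 * L) * (X ^ 2 + V ^ 2) := by
  have h1 : |2 * X * V| ≤ X ^ 2 + V ^ 2 := by
    rw [abs_le]; constructor <;> nlinarith [sq_nonneg (X + V), sq_nonneg (X - V)]
  have h2 : |1 + (1 + L) * g| ≤ 1 + (1 + L) * C := by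
    have := abs_le.1 hg
    rw [abs_le]; constructor <;> nlinarith
  have h3 : |2 * X * V * (1 + (1 + L) * g)| ≤ (X ^ 2 + V ^ 2) * (1 + (1 + L) * C) := by
    rw [abs_mul]; exact mul_le_mul h1 h2 (abs_nonneg _) (by positivity)
  have h4 : 0 ≤ 2 * L * X ^ 2 := by positivity
  have h5 : 0 ≤ 2 * L * V ^ 2 := by positivity
  have := abs_le.1 h3
  rw [abs_le]; constructor <;> nlinarith

/-- Backward uniqueness of the invariant axis `x = v = 0`. -/
lemma axis_back (hab : a ≤ b) (hL : 0 ≤ L) (h : ∀ t ∈ Icc a b, Sol k d L x v w t)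
    (hg : ∀ t ∈ Icc a b, |1 - w t + k * x t ^ 2| ≤ C) (hx : x b = 0) (hv : v b = 0) :
    x a = 0 := by
  have := exp_lower (q := 1 + (1 + L) * C + 2 * L) (f := fun s => x s ^ 2 + v s ^ 2) hab
    (fun t ht => dN (h t ht)) (fun t ht => by
      have := (abs_le.1 (dN_abs (X := x t) (V := v t) hL (hg t ht))).1
      linarith)
  simp only [hx, hv] at this
  have he := Real.exp_pos (-(1 + (1 + L) * C + 2 * L) * (b - a))
  have h0 : x a ^ 2 + v a ^ 2 ≤ 0 := by
    by_contra hcon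
    have := mul_pos (not_le.1 hcon) he
    linarith
  have : x a ^ 2 = 0 := by nlinarith [sq_nonneg (x a), sq_nonneg (v a)]
  exact pow_eq_zero_iff (by norm_num) |>.1 this

/-- Forward uniqueness of the invariant axis `x = v = 0`. -/
lemma axis_forw (hab : a ≤ b) (hL : 0 ≤ L) (h : ∀ t ∈ Icc a b, Sol k d L x v w t)
    (hg : ∀ t ∈ Icc a b, |1 - w t + k * x t ^ 2| ≤ C) (hx : x a = 0) (hv : v a = 0) :
    x b = 0 := by
  have := exp_upper (q := -(1 + (1 + L) * C + 2 * L)) (f := fun s => x s ^ 2 + v s ^ 2) hab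
    (fun t ht => dN (h t ht)) (fun t ht => by
      have := (abs_le.1 (dN_abs (X := x t) (V := v t) hL (hg t ht))).2
      linarith)
  simp only [hx, hv] at this
  have : x b ^ 2 = 0 := by nlinarith [sq_nonneg (x b), sq_nonneg (v b)]
  exact pow_eq_zero_iff (by norm_num) |>.1 this
end

/-- Time needed, after `x²` reaches `3/4`, for `x² - 1` to exceed half of `(1 + k) x² - w`. -/
noncomputable def tau (k : ℝ) : ℝ := 4 * (1 / (1 + k) + 1 / 2)
/-- Lower bound for the amount by which `x²` exceeds `1` at the turning point, independent of `η`
and `L`. -/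
noncomputable def c3 (k : ℝ) : ℝ := (1 + k) / 8 * Real.exp (-tau k)

namespace Phase
variable {k d L η T : ℝ} {x v w : ℝ → ℝ}

/-- Lower bound for the velocity coming from `P ≥ 0` and `v ≤ x`. -/
lemma v_ge (h : Phase k d L η T x v w) {t : ℝ} (ht : t ∈ Icc 0 T) (hv : 0 ≤ v t) :
    x t * (1 - w t + k * x t ^ 2) ≤ v t := by
  have h1 := h.Pnn t ht
  have h2 := h.v_le_x ht
  have h3 := h.xpos t ht
  have hL := h.L0
  unfold PP at h1
  by_contra hcon
  push Not at hcon
  have h4 : 0 < (1 + L) * x t * (x t * (1 - w t + k * x t ^ 2) - v t) :=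
    mul_pos (by positivity) (by linarith)
  nlinarith [mul_nonneg hv (sub_nonneg.2 h2)]

/-- At a turning point `P ≥ 0` means `1 - w + k x² ≤ 0`. -/
lemma turn_y (h : Phase k d L η T x v w) {t : ℝ} (ht : t ∈ Icc 0 T) (hv : v t = 0) :
    1 + ((1 + k) * x t ^ 2 - w t) ≤ x t ^ 2 := by
  have h1 := h.v_ge ht hv.ge
  have h3 := h.xpos t ht
  rw [hv] at h1
  by_contra hcon
  push Not at hcon
  have : 0 < x t * (1 - w t + k * x t ^ 2) := mul_pos h3 (by nlinarith)
  linarith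

lemma x_le_exp (h : Phase k d L η T x v w) {t : ℝ} (ht : t ∈ Icc 0 T) :
    x t ≤ η * Real.exp t := by
  have := exp_upper (q := -1) (f := x) ht.1
    (fun s hs => (h.ode s ⟨hs.1, hs.2.trans ht.2⟩).dx) (fun s hs => by
      have := h.v_le_x ⟨hs.1, hs.2.trans ht.2⟩
      linarith)
  rw [h.x0] at this
  simpa using this

lemma y_mono {a b : ℝ} (h : Phase k d L η T x v w) (ha : 0 ≤ a) (hb : b ≤ T)
    (hv : ∀ s ∈ Icc a b, 0 ≤ v s) : MonotoneOn (fun t => x t ^ 2) (Icc a b) :=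
  mono_of_deriv (fun s hs => (h.ode s ⟨ha.trans hs.1, hs.2.trans hb⟩).dy) (fun s hs => by
    have h1 := hv s hs
    have h2 := h.xpos s ⟨ha.trans hs.1, hs.2.trans hb⟩
    positivity)

/-- The orbit reaches `x² = 3/4` with `v > 0` and `(1 + k) x² - w` bounded below. -/
lemma reach (h : ∀ T, Phase k d L η T x v w) : ∃ ta, 0 < ta ∧ x ta ^ 2 = 3 / 4 ∧
    (∀ s ∈ Icc 0 ta, 0 < v s) ∧ (1 + k) / 4 ≤ (1 + k) * x ta ^ 2 - w ta := by
  have hη := (h 0).η0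
  have hη1 := (h 0).η1
  have hk : 0 < 1 + k := by linarith [(h 0).adm.k1]
  have mem : ∀ t : ℝ, 0 ≤ t → t ∈ Icc 0 t := fun t ht => ⟨ht, le_rfl⟩
  -- as long as `x² ≤ 3/4`, the velocity is positive
  have vpos : ∀ t, 0 ≤ t → (∀ s ∈ Icc 0 t, x s ^ 2 ≤ 3 / 4) → ∀ s ∈ Icc 0 t, 0 < v s := by
    intro t ht hy s hs
    by_contra hcon
    obtain ⟨r, hr, hvr, -⟩ := (h s).exists_turn (mem s hs.1) (not_lt.1 hcon)
    have h1 := (h r).turn_y (mem r hr.1.le) hvr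
    have h2 := (h r).U_pos (mem r hr.1.le) hvr.ge
    have h3 := hy r ⟨hr.1.le, hr.2.trans hs.2⟩
    linarith
  have vge : ∀ t, 0 ≤ t → (∀ s ∈ Icc 0 t, x s ^ 2 ≤ 3 / 4) →
      ∀ s ∈ Icc 0 t, x s / 4 ≤ v s := by
    intro t ht hy s hs
    have hv := vpos t ht hy s hs
    have h1 := (h s).v_ge (mem s hs.1) hv.le
    have h2 := (h s).U_pos (mem s hs.1) hv.le
    have h3 := hy s hs
    have h4 := (h s).xpos s (mem s hs.1)
    nlinarith
  have hex : ∃ t, 0 ≤ t ∧ 3 / 4 ≤ x t ^ 2 := by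
    by_contra hcon
    push Not at hcon
    have h4 : 0 ≤ 4 / η := by positivity
    have := exp_lower (q := -(1 / 4)) (f := x) h4
      (fun s hs => ((h s).ode s (mem s hs.1)).dx) (fun s hs => by
        have := vge (4 / η) h4 (fun r hr => (hcon r hr.1).le) s hs
        linarith)
    rw [(h 0).x0] at this
    have he := Real.add_one_le_exp (-(-(1 / 4)) * (4 / η - 0))
    have e1 : -(-(1 / 4 : ℝ)) * (4 / η - 0) = 1 / η := by field_simp; ring
    have e2 : η * (1 / η + 1) = 1 + η := by field_simp
    rw [e1] at he this
    have h5 := mul_le_mul_of_nonneg_left he hη.le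
    have h6 := hcon _ h4
    nlinarith
  obtain ⟨t, ht, hyt⟩ := hex
  obtain ⟨ta, hta, hya, hlt⟩ := first_hit (f := fun s => x s ^ 2) ht
    (fun s hs => ((h s).ode s (mem s hs.1)).dy.continuousAt.continuousWithinAt)
    (by rw [(h 0).x0]; nlinarith) hyt
  have hle : ∀ s ∈ Icc 0 ta, x s ^ 2 ≤ 3 / 4 := by
    intro s hs
    rcases hs.2.eq_or_lt with h1 | h1
    · rw [h1]; exact hya.le
    · exact (hlt s ⟨hs.1, h1⟩).le
  refine ⟨ta, hta.1, hya, vpos ta hta.1.le hle, ?_⟩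
  have hd := (h 0).adm.d0
  have hd1 := (h 0).adm.d1
  have := exp_lower (q := d) (f := fun s => (1 + k) * x s ^ 2 - w s - (1 + k) / 3 * x s ^ 2)
    hta.1.le (fun s hs => (dU ((h s).ode s (mem s hs.1))).fun_sub
      (((h s).ode s (mem s hs.1)).dy.const_mul ((1 + k) / 3))) (fun s hs => by
      have h1 := vge ta hta.1.le hle s hs
      have h2 := (h s).xpos s (mem s hs.1)
      have h3 : d * x s ^ 2 ≤ 4 * (x s * v s) := by nlinarith
      nlinarith)
  have h0 : 0 ≤ (1 + k) * x 0 ^ 2 - w 0 - (1 + k) / 3 * x 0 ^ 2 := by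
    rw [(h 0).x0, (h 0).w0]
    have := (h 0).adm.cc_le
    nlinarith [sq_nonneg η]
  have h1 := (mul_nonneg h0 (Real.exp_pos (-d * (ta - 0))).le).trans this
  rw [hya] at h1 ⊢
  linarith

/-- Before turning, `x²` exceeds `1` by a definite amount: `(1 - x²) / ((1 + k) x² - w)` decreases
at rate at least `1/4` until it reaches `-1/2`. -/
lemma overshoot (h : ∀ T, Phase k d L η T x v w) : ∃ tb, 0 < tb ∧
    (∀ s ∈ Ico 0 tb, 0 < v s) ∧ 1 + c3 k ≤ x tb ^ 2 := by
  have hk : 0 < 1 + k := by linarith [(h 0).adm.k1]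
  have hd := (h 0).adm.d0
  have hd1 := (h 0).adm.d1
  have hkd := (h 0).adm.kd
  have mem : ∀ t : ℝ, 0 ≤ t → t ∈ Icc 0 t := fun t ht => ⟨ht, le_rfl⟩
  obtain ⟨ta, hta, hya, hva, hUa⟩ := reach h
  have hτ : 0 < tau k := by unfold tau; positivity
  -- `v > 0` as long as `x² - 1 < U / 2` after `ta`
  have vpos : ∀ t, ta ≤ t →
      (∀ s ∈ Icc ta t, x s ^ 2 - 1 - ((1 + k) * x s ^ 2 - w s) / 2 < 0) →
      ∀ s ∈ Icc 0 t, 0 < v s := by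
    intro t ht hψ s hs
    by_contra hcon
    obtain ⟨r, hr, hvr, -⟩ := (h s).exists_turn (mem s hs.1) (not_lt.1 hcon)
    have h1 := (h r).turn_y (mem r hr.1.le) hvr
    have h2 := (h r).U_pos (mem r hr.1.le) hvr.ge
    rcases le_total r ta with h3 | h3
    · have := hva r ⟨hr.1.le, h3⟩; linarith
    · have := hψ r ⟨h3, hr.2.trans hs.2⟩; linarith
  have cont : ∀ t, 0 ≤ t →
      ContinuousAt (fun s => x s ^ 2 - 1 - ((1 + k) * x s ^ 2 - w s) / 2) t := fun t ht =>
    ((((h t).ode t (mem t ht)).dy.sub_const 1).fun_sub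
      ((dU ((h t).ode t (mem t ht))).div_const 2)).continuousAt
  have hex : ∃ t ∈ Icc ta (ta + tau k),
      0 ≤ x t ^ 2 - 1 - ((1 + k) * x t ^ 2 - w t) / 2 := by
    by_contra hcon
    push Not at hcon
    have hv := vpos (ta + tau k) (by linarith) hcon
    have hm : ∀ s ∈ Icc ta (ta + tau k), s ∈ Icc 0 (ta + tau k) :=
      fun s hs => ⟨hta.le.trans hs.1, hs.2⟩
    have hU : ∀ s ∈ Icc ta (ta + tau k), 0 < (1 + k) * x s ^ 2 - w s := fun s hs =>
      (h s).U_pos (mem s (hm s hs).1) (hv s (hm s hs)).le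
    have hy : ∀ s ∈ Icc ta (ta + tau k), 3 / 4 ≤ x s ^ 2 := fun s hs => by
      rw [← hya]
      exact (h (ta + tau k)).y_mono hta.le le_rfl (fun r hr => (hv r (hm r hr)).le)
        ⟨le_rfl, by linarith⟩ hs hs.1
    have key := anti_of_deriv (a := ta) (b := ta + tau k)
      (f := fun s => (1 - x s ^ 2) / ((1 + k) * x s ^ 2 - w s) + 1 / 4 * s)
      (fun s hs => (((((h s).ode s (mem s (hm s hs).1)).dy.const_sub 1).fun_div
        (dU ((h s).ode s (mem s (hm s hs).1))) (hU s hs).ne').fun_add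
        ((hasDerivAt_id s).const_mul (1 / 4)))) (fun s hs => by
        have h1 := hU s hs
        have h2 := hy s hs
        have h3 := hcon s hs
        have h4 := (h s).xpos s (mem s (hm s hs).1)
        have h5 := hv s (hm s hs)
        have h6 := (h s).v_ge (mem s (hm s hs).1) h5.le
        set U := (1 + k) * x s ^ 2 - w s with hUdef
        have h7 : x s ^ 2 * (1 - x s ^ 2 + U) ≤ x s * v s := by
          have : 1 - w s + k * x s ^ 2 = 1 - x s ^ 2 + U := by rw [hUdef]; ring
          rw [this] at h6
          nlinarith
        set q := x s * v s with hq
        set y := x s ^ 2 with hydef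
        have e : (-(2 * x s * v s) * U - (1 - y) * (-d * U + 2 * (1 + k) * x s * v s)) / U ^ 2
            + 1 / 4 * 1 = (-2 * q * U - (1 - y) * (-d * U + 2 * (1 + k) * q) + U ^ 2 / 4)
              / U ^ 2 := by
          rw [hq]; field_simp
        rw [e]
        apply div_nonpos_of_nonpos_of_nonneg _ (by positivity)
        have hq0 : 0 < q := mul_pos h4 h5
        rcases le_total y 1 with hc | hc
        · have a1 : 3 / 4 * (1 - y + U) ≤ q := by nlinarith
          have a2 : 0 ≤ (1 - y) * (1 + k) * q := by
            have : 0 ≤ 1 - y := by linarith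
            positivity
          have a3 : d * ((1 - y) * U) ≤ (1 - y) * U := by
            have : 0 ≤ (1 - y) * U := mul_nonneg (by linarith) h1.le
            nlinarith
          nlinarith [mul_le_mul_of_nonneg_right a1 h1.le, mul_nonneg (sub_nonneg.2 hc) h1.le,
            sq_nonneg U]
        · have a1 : U / 2 ≤ q := by nlinarith
          have a2 : (y - 1) * (1 + k) ≤ 3 / 4 * U := by nlinarith
          have a3 := mul_le_mul_of_nonneg_left a2 hq0.le
          have a4 : 0 ≤ (y - 1) * d * U := by
            have : 0 ≤ y - 1 := by linarith
            positivity
          nlinarith [mul_le_mul_of_nonneg_right a1 h1.le])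
      (left_mem_Icc.2 (by linarith)) (right_mem_Icc.2 (by linarith)) (by linarith)
    simp only [hya] at key
    have hte : (ta + tau k) ∈ Icc ta (ta + tau k) := ⟨by linarith, le_rfl⟩
    have b1 : -(1 / 2) < (1 - x (ta + tau k) ^ 2)
        / ((1 + k) * x (ta + tau k) ^ 2 - w (ta + tau k)) := by
      rw [lt_div_iff₀ (hU _ hte)]
      have := hcon _ hte
      linarith
    have b2 : (1 - 3 / 4) / ((1 + k) * (3 / 4) - w ta) ≤ 1 / (1 + k) := by
      rw [hya] at hUa
      rw [div_le_div_iff₀ (by linarith) hk]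
      linarith
    have b3 : tau k = 4 * (1 / (1 + k) + 1 / 2) := rfl
    linarith
  obtain ⟨t1, ht1, hψ1⟩ := hex
  have hUa' : 0 < (1 + k) * x ta ^ 2 - w ta := by linarith
  obtain ⟨tb, htb, hψb, hltb⟩ := first_hit
    (f := fun s => x s ^ 2 - 1 - ((1 + k) * x s ^ 2 - w s) / 2) ht1.1
    (fun s hs => (cont s (hta.le.trans hs.1)).continuousWithinAt)
    (by linarith) hψ1
  have htb0 : 0 < tb := hta.trans htb.1
  have hvb : ∀ s ∈ Ico 0 tb, 0 < v s := by
    intro s hs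
    rcases le_total s ta with h1 | h1
    · exact hva s ⟨hs.1, h1⟩
    · exact vpos s h1 (fun r hr => hltb r ⟨hr.1, hr.2.trans_lt hs.2⟩) s ⟨hs.1, le_rfl⟩
  have hvtb : 0 ≤ v tb := by
    by_contra hcon
    obtain ⟨r, hr, hvr, -⟩ := (h tb).exists_turn (mem tb htb0.le) (not_le.1 hcon).le
    rcases hr.2.eq_or_lt with h1 | h1
    · rw [h1] at hvr; linarith
    · have := hvb r ⟨hr.1.le, h1⟩; linarith
  have hyb : 1 + c3 k ≤ x tb ^ 2 := by
    have h1 := exp_lower (q := d) (f := fun s => (1 + k) * x s ^ 2 - w s) htb.1.le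
      (fun s hs => dU ((h s).ode s (mem s (hta.le.trans hs.1)))) (fun s hs => by
        have hs0 := hta.le.trans hs.1
        have a1 := (h tb).v_nonneg_before (mem tb htb0.le) hvtb ⟨hs0, hs.2⟩
        have a2 := (h s).xpos s (mem s hs0)
        have : 0 ≤ 2 * (1 + k) * x s * v s := by positivity
        linarith)
    have h2 : Real.exp (-tau k) ≤ Real.exp (-d * (tb - ta)) := by
      apply Real.exp_le_exp.2
      have : tb - ta ≤ tau k := by linarith [htb.2, ht1.2]
      nlinarith [htb.1]
    have h3 : (1 + k) / 4 * Real.exp (-tau k)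
        ≤ ((1 + k) * x ta ^ 2 - w ta) * Real.exp (-d * (tb - ta)) :=
      mul_le_mul hUa h2 (Real.exp_pos _).le hUa'.le
    unfold c3
    linarith
  exact ⟨tb, htb0, hvb, hyb⟩

/-- Every orbit staying in the phase forever turns back, and it does so beyond `x² = 1 + c3`: otherwise
`v / x - (1 + L) w / d`, which is bounded, would decrease at rate at least `c3` forever. -/
lemma turning (h : ∀ T, Phase k d L η T x v w) : ∃ t, 0 < t ∧ v t = 0 ∧
    (∀ s ∈ Icc 0 t, 0 ≤ v s) ∧ 1 + c3 k ≤ x t ^ 2 := by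
  have hk : 0 < 1 + k := by linarith [(h 0).adm.k1]
  have hd := (h 0).adm.d0
  have hL := (h 0).L0
  have mem : ∀ t : ℝ, 0 ≤ t → t ∈ Icc 0 t := fun t ht => ⟨ht, le_rfl⟩
  obtain ⟨tb, htb0, hvb, hyb⟩ := overshoot h
  have hc3 : 0 < c3 k := by unfold c3; positivity
  have hex2 : ∃ t, tb ≤ t ∧ v t ≤ 0 := by
    by_contra hcon
    push Not at hcon
    have hd' : 0 ≤ (1 + L) * ((1 + k) * Ym k d) / d := by
      have := (h 0).adm.Ym_gt
      positivity
    set S := tb + (2 + (1 + L) * ((1 + k) * Ym k d) / d) / c3 k with hS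
    have hSb : tb ≤ S := by
      rw [hS]
      linarith [div_nonneg (by linarith : 0 ≤ 2 + (1 + L) * ((1 + k) * Ym k d) / d) hc3.le]
    have key := anti_of_deriv (a := tb) (b := S)
      (f := fun s => v s / x s - (1 + L) * w s / d + c3 k * s)
      (fun s hs => ((((h s).ode s (mem s (htb0.le.trans hs.1))).dz
        ((h s).xpos s (mem s (htb0.le.trans hs.1))).ne').fun_sub
        ((((h s).ode s (mem s (htb0.le.trans hs.1))).dw.const_mul (1 + L)).div_const d)).fun_add
        ((hasDerivAt_id s).const_mul (c3 k))) (fun s hs => by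
          have a1 := (h s).xpos s (mem s (htb0.le.trans hs.1))
          have a2 := hcon s hs.1
          have a3 : 1 + c3 k ≤ x s ^ 2 := hyb.trans
            ((h S).y_mono htb0.le le_rfl (fun r hr => (hcon r hr.1).le)
              ⟨le_rfl, hSb⟩ hs hs.1)
          have e : -PP k L (x s) (v s) (w s) / x s ^ 2
              - (1 + L) * (d * ((1 + k) * x s ^ 2 - w s)) / d + c3 k * 1
              = -(v s / x s) ^ 2 - L * (v s / x s) + (1 + L) * (1 - x s ^ 2) + c3 k := by
            unfold PP; field_simp; ring
          rw [e]
          have b1 : 0 ≤ L * (v s / x s) := by positivity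
          nlinarith [sq_nonneg (v s / x s)])
      (left_mem_Icc.2 hSb) (right_mem_Icc.2 hSb) hSb
    simp only at key
    have b1 := (h tb).z_le_one (mem tb htb0.le)
    have b2 : 0 ≤ (1 + L) * w tb / d := by
      have := (h tb).w_pos (mem tb htb0.le)
      positivity
    have hS0 := htb0.le.trans hSb
    have b3 : 0 < v S / x S := div_pos (hcon S hSb) ((h S).xpos S (mem S hS0))
    have b4 : (1 + L) * w S / d ≤ (1 + L) * ((1 + k) * Ym k d) / d := by
      have := (h S).w_le (mem S hS0)
      gcongr
    have b5 : c3 k * S = c3 k * tb + (2 + (1 + L) * ((1 + k) * Ym k d) / d) := by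
      rw [hS]; field_simp
    linarith
  obtain ⟨t2, ht2, hv2⟩ := hex2
  obtain ⟨r, hr, hvr, hpos⟩ := (h t2).exists_turn (mem t2 (htb0.le.trans ht2)) hv2
  have hrb : tb ≤ r := by
    by_contra hcon
    have := hvb r ⟨hr.1.le, not_le.1 hcon⟩
    linarith
  have hnn : ∀ s ∈ Icc 0 r, 0 ≤ v s := fun s hs =>
    (h r).v_nonneg_before (mem r hr.1.le) hvr.ge hs
  refine ⟨r, hr.1, hvr, hnn, hyb.trans ?_⟩
  exact (h r).y_mono htb0.le le_rfl (fun s hs => hnn s ⟨htb0.le.trans hs.1, hs.2⟩)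
    ⟨le_rfl, hrb⟩ ⟨hrb, le_rfl⟩ hrb

end Phase

/-! ### Global flow of a bounded Lipschitz vector field -/

section
variable {E : Type*} [NormedAddCommGroup E] [NormedSpace ℝ E]
open NNReal

lemma flow_unique {f : E → E} {K : ℝ≥0} (hl : LipschitzWith K f) {α β : ℝ → E}
    (hα : ∀ t, HasDerivAt α (f (α t)) t) (hβ : ∀ t, HasDerivAt β (f (β t)) t)
    (h0 : α 0 = β 0) : α = β :=
  ODE_solution_unique_univ (v := fun _ => f) (s := fun _ => univ) (t₀ := 0) (K := K)
    (fun _ => hl.lipschitzOnWith) (fun t => ⟨hα t, mem_univ _⟩) (fun t => ⟨hβ t, mem_univ _⟩) h0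

/-- Picard–Lindelöf on the intervals `[-(n + 1), n + 1]`, glued by uniqueness. -/
lemma exists_global [CompleteSpace E] {f : E → E} {K C : ℝ≥0} (hl : LipschitzWith K f)
    (hb : ∀ p, ‖f p‖ ≤ C) (p : E) : ∃ α : ℝ → E, α 0 = p ∧ ∀ t, HasDerivAt α (f (α t)) t := by
  have loc : ∀ n : ℕ, ∃ α : ℝ → E, α 0 = p ∧
      ∀ t ∈ Ioo (-(n + 1 : ℝ)) (n + 1), HasDerivAt α (f (α t)) t := by
    intro n
    have hn : (0 : ℝ) ∈ Icc (-(n + 1 : ℝ)) (n + 1) := by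
      constructor <;> [linarith [n.cast_nonneg (α := ℝ)]; positivity]
    have hpl : IsPicardLindelof (fun _ => f) (⟨0, hn⟩ : Icc (-(n + 1 : ℝ)) (n + 1)) p
        (C * (n + 1)) 0 C K :=
      IsPicardLindelof.of_time_independent (fun x _ => hb x) hl.lipschitzOnWith (by simp)
    obtain ⟨α, h0, h1⟩ := hpl.exists_eq_forall_mem_Icc_hasDerivWithinAt₀
    exact ⟨α, h0, fun t ht => (h1 t ⟨ht.1.le, ht.2.le⟩).hasDerivAt (Icc_mem_nhds ht.1 ht.2)⟩
  choose α h0 h1 using loc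
  have agree : ∀ m n : ℕ, m ≤ n → EqOn (α m) (α n) (Ioo (-(m + 1 : ℝ)) (m + 1)) := by
    intro m n hmn
    have hmn' : (m : ℝ) ≤ n := Nat.cast_le.2 hmn
    have hm : (0 : ℝ) ≤ m := m.cast_nonneg
    refine ODE_solution_unique_of_mem_Ioo (v := fun _ => f) (s := fun _ => univ) (t₀ := 0) (K := K)
      (fun _ _ => hl.lipschitzOnWith) ⟨by linarith, by linarith⟩
      (fun t ht => ⟨h1 m t ht, mem_univ _⟩)
      (fun t ht => ⟨h1 n t ⟨by linarith [ht.1], by linarith [ht.2]⟩, mem_univ _⟩)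
      ((h0 m).trans (h0 n).symm)
  refine ⟨fun t => α ⌈|t|⌉₊ t, h0 _, fun t => ?_⟩
  have memI : ∀ s : ℝ, ∀ n : ℕ, |s| ≤ n → s ∈ Ioo (-(n + 1 : ℝ)) (n + 1) := fun s n hs => by
    have := abs_le.1 hs
    constructor <;> linarith
  have hev : (fun s => α ⌈|s|⌉₊ s) =ᶠ[nhds t] α (⌈|t|⌉₊ + 1) := by
    have hlt : |t| < ((⌈|t|⌉₊ + 1 : ℕ) : ℝ) := by
      push_cast; linarith [Nat.le_ceil |t|]
    filter_upwards [continuous_abs.continuousAt.eventually (gt_mem_nhds hlt)] with s hs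
    exact agree _ _ (Nat.ceil_le.2 hs.le) (memI s _ (Nat.le_ceil _))
  have hd := h1 (⌈|t|⌉₊ + 1) t (memI t _ (by push_cast; linarith [Nat.le_ceil |t|]))
  have := hd.congr_of_eventuallyEq hev
  rwa [← hev.eq_of_nhds] at this

lemma flow_dist {f : E → E} {K : ℝ≥0} (hl : LipschitzWith K f) {α β : ℝ → E}
    (hα : ∀ t, HasDerivAt α (f (α t)) t) (hβ : ∀ t, HasDerivAt β (f (β t)) t) (t : ℝ) :
    dist (α t) (β t) ≤ dist (α 0) (β 0) * Real.exp (K * |t|) := by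
  rcases le_total 0 t with ht | ht
  · have := dist_le_of_trajectories_ODE (v := fun _ => f) (a := 0) (b := t) (fun _ => hl)
      (fun s _ => (hα s).continuousAt.continuousWithinAt) (fun s _ => (hα s).hasDerivWithinAt)
      (fun s _ => (hβ s).continuousAt.continuousWithinAt) (fun s _ => (hβ s).hasDerivWithinAt)
      le_rfl t ⟨ht, le_rfl⟩
    rw [abs_of_nonneg ht]
    rwa [sub_zero] at this
  · have hr : ∀ γ : ℝ → E, (∀ t, HasDerivAt γ (f (γ t)) t) →
        ∀ s, HasDerivAt (fun r => γ (-r)) (-f (γ (-s))) s := fun γ hγ s => by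
      simpa [Function.comp_def] using (hγ (-s)).scomp s (hasDerivAt_neg s)
    have := dist_le_of_trajectories_ODE (v := fun _ p => -f p) (a := 0) (b := -t)
      (fun _ => hl.neg)
      (fun s _ => (hr α hα s).continuousAt.continuousWithinAt)
      (fun s _ => (hr α hα s).hasDerivWithinAt)
      (fun s _ => (hr β hβ s).continuousAt.continuousWithinAt)
      (fun s _ => (hr β hβ s).hasDerivWithinAt)
      le_rfl (-t) ⟨by linarith, le_rfl⟩
    rw [abs_of_nonpos ht]
    simpa using this

lemma exists_flow [CompleteSpace E] {f : E → E} {K C : ℝ≥0} (hl : LipschitzWith K f)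
    (hb : ∀ p, ‖f p‖ ≤ C) :
    ∃ Φ : E → ℝ → E, (∀ p, Φ p 0 = p) ∧ (∀ p t, HasDerivAt (Φ p) (f (Φ p t)) t) ∧
      (∀ p s t, Φ p (s + t) = Φ (Φ p s) t) ∧ Continuous (fun q : E × ℝ => Φ q.1 q.2) := by
  choose Φ h0 h1 using exists_global hl hb
  refine ⟨Φ, h0, h1, fun p s t => ?_, ?_⟩
  · have hs : ∀ t, HasDerivAt (fun t => Φ p (s + t)) (f (Φ p (s + t))) t := fun t => by
      simpa using (h1 p (s + t)).comp_const_add s t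
    exact congrFun (flow_unique hl hs (h1 (Φ p s)) (by simp [h0])) t
  · rw [continuous_iff_continuousAt]
    rintro ⟨q, s⟩
    rw [ContinuousAt, tendsto_iff_dist_tendsto_zero]
    have hz : Tendsto (fun r : E × ℝ => dist r.1 q * Real.exp (K * |r.2|)
        + dist (Φ q r.2) (Φ q s)) (nhds (q, s)) (nhds 0) := by
      have hc : Continuous (Φ q) := continuous_iff_continuousAt.2 fun t => (h1 q t).continuousAt
      have : Continuous (fun r : E × ℝ => dist r.1 q * Real.exp (K * |r.2|)
        + dist (Φ q r.2) (Φ q s)) := by fun_prop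
      have := this.tendsto (q, s)
      simpa using this
    refine squeeze_zero (fun _ => dist_nonneg) (fun r => ?_) hz
    have := flow_dist hl (h1 r.1) (h1 q) r.2
    rw [h0, h0] at this
    exact (dist_triangle _ (Φ q r.2) _).trans (by gcongr)
end

lemma hasDerivAt_fst {E F : Type*} [NormedAddCommGroup E] [NormedSpace ℝ E]
    [NormedAddCommGroup F] [NormedSpace ℝ F] {c : ℝ → E × F} {c' : E × F} {t : ℝ}
    (h : HasDerivAt c c' t) : HasDerivAt (fun s => (c s).1) c'.1 t :=
  (ContinuousLinearMap.fst ℝ E F).hasFDerivAt.comp_hasDerivAt t h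

lemma hasDerivAt_snd {E F : Type*} [NormedAddCommGroup E] [NormedSpace ℝ E]
    [NormedAddCommGroup F] [NormedSpace ℝ F] {c : ℝ → E × F} {c' : E × F} {t : ℝ}
    (h : HasDerivAt c c' t) : HasDerivAt (fun s => (c s).2) c'.2 t :=
  (ContinuousLinearMap.snd ℝ E F).hasFDerivAt.comp_hasDerivAt t h

/-! ### The flow of the truncated scaled system -/

/-- The scaled vector field, with the parameter `L` as a fourth, constant coordinate. -/
def vf (k d : ℝ) (p : ℝ × ℝ × ℝ × ℝ) : ℝ × ℝ × ℝ × ℝ :=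
  (p.2.1, -p.2.2.2 * p.2.1 + (1 + p.2.2.2) * p.1 * (1 - p.2.2.1 + k * p.1 ^ 2),
    d * ((1 + k) * p.1 ^ 2 - p.2.2.1), 0)

/-- Truncation of a real number to `[-B, B]`. -/
def clipR (B r : ℝ) : ℝ := max (-B) (min r B)

/-- Coordinatewise truncation to `[-B, B]⁴`. -/
def clip (B : ℝ) (p : ℝ × ℝ × ℝ × ℝ) : ℝ × ℝ × ℝ × ℝ :=
  (clipR B p.1, clipR B p.2.1, clipR B p.2.2.1, clipR B p.2.2.2)

lemma clipR_lip (B : ℝ) : LipschitzWith 1 (clipR B) :=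
  (LipschitzWith.id.min_const B).const_max (-B)

lemma clipR_abs {B : ℝ} (hB : 0 ≤ B) (r : ℝ) : |clipR B r| ≤ B := by
  rw [abs_le]
  exact ⟨le_max_left _ _, max_le (by linarith) (min_le_right _ _)⟩

lemma clipR_eq {B r : ℝ} (h : |r| ≤ B) : clipR B r = r := by
  have := abs_le.1 h
  unfold clipR
  rw [min_eq_left this.2, max_eq_right this.1]

lemma norm4_le {B : ℝ} {p : ℝ × ℝ × ℝ × ℝ} :
    ‖p‖ ≤ B ↔ |p.1| ≤ B ∧ |p.2.1| ≤ B ∧ |p.2.2.1| ≤ B ∧ |p.2.2.2| ≤ B := by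
  simp [Prod.norm_def, Real.norm_eq_abs]

lemma clip_lip (B : ℝ) : ∃ K, LipschitzWith K (clip B) := by
  have f1 : LipschitzWith 1 (fun p : ℝ × ℝ × ℝ × ℝ => p.1) := LipschitzWith.prod_fst
  have g1 : LipschitzWith 1 (fun p : ℝ × ℝ × ℝ × ℝ => p.2) := LipschitzWith.prod_snd
  have g2 : LipschitzWith 1 (fun p : ℝ × ℝ × ℝ => p.2) := LipschitzWith.prod_snd
  have f2 : LipschitzWith 1 (fun p : ℝ × ℝ × ℝ => p.1) := LipschitzWith.prod_fst
  have f3 : LipschitzWith 1 (fun p : ℝ × ℝ => p.1) := LipschitzWith.prod_fst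
  have g3 : LipschitzWith 1 (fun p : ℝ × ℝ => p.2) := LipschitzWith.prod_snd
  exact ⟨_, ((clipR_lip B).comp f1).prodMk (((clipR_lip B).comp (f2.comp g1)).prodMk
    (((clipR_lip B).comp (f3.comp (g2.comp g1))).prodMk
      ((clipR_lip B).comp (g3.comp (g2.comp g1)))))⟩

/-- A continuous flow solving the scaled system as long as the coordinates stay in `[-B, B]`. -/
structure SysFlow (k d B : ℝ) (Φ : ℝ × ℝ × ℝ × ℝ → ℝ → ℝ × ℝ × ℝ × ℝ) : Prop where
  init : ∀ p, Φ p 0 = p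
  cont : Continuous (fun q : (ℝ × ℝ × ℝ × ℝ) × ℝ => Φ q.1 q.2)
  add : ∀ p s t, Φ p (s + t) = Φ (Φ p s) t
  par : ∀ p t, (Φ p t).2.2.2 = p.2.2.2
  sol : ∀ p t, ‖Φ p t‖ ≤ B → Sol k d p.2.2.2 (fun s => (Φ p s).1) (fun s => (Φ p s).2.1)
    (fun s => (Φ p s).2.2.1) t

lemma exists_sysFlow (k d : ℝ) {B : ℝ} (hB : 0 ≤ B) : ∃ Φ, SysFlow k d B Φ := by
  have hcd : ContDiff ℝ 1 (vf k d) := by unfold vf; fun_prop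
  have hcomp : IsCompact (Metric.closedBall (0 : ℝ × ℝ × ℝ × ℝ) B) := isCompact_closedBall 0 B
  obtain ⟨K, hK⟩ := hcd.contDiffOn.exists_lipschitzOnWith one_ne_zero
    (convex_closedBall (0 : ℝ × ℝ × ℝ × ℝ) B) hcomp
  obtain ⟨K', hK'⟩ := clip_lip B
  have hmem : ∀ p, clip B p ∈ Metric.closedBall (0 : ℝ × ℝ × ℝ × ℝ) B := fun p => by
    rw [mem_closedBall_zero_iff, norm4_le]
    exact ⟨clipR_abs hB _, clipR_abs hB _, clipR_abs hB _, clipR_abs hB _⟩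
  have hl : LipschitzWith (K * K') (fun p => vf k d (clip B p)) :=
    lipschitzOnWith_univ.1 (hK.comp (hK'.lipschitzOnWith (s := univ)) (fun p _ => hmem p))
  obtain ⟨C, hC⟩ := hcomp.exists_bound_of_continuousOn hcd.continuous.continuousOn
  obtain ⟨Φ, h0, h1, h2, h3⟩ := exists_flow (C := C.toNNReal) hl
    (fun p => (hC _ (hmem p)).trans (Real.le_coe_toNNReal C))
  have d1 : ∀ p t, HasDerivAt (fun s => (Φ p s).1) (vf k d (clip B (Φ p t))).1 t :=
    fun p t => hasDerivAt_fst (h1 p t)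
  have d2 : ∀ p t, HasDerivAt (fun s => (Φ p s).2) (vf k d (clip B (Φ p t))).2 t :=
    fun p t => hasDerivAt_snd (h1 p t)
  have d21 : ∀ p t, HasDerivAt (fun s => (Φ p s).2.1) (vf k d (clip B (Φ p t))).2.1 t :=
    fun p t => hasDerivAt_fst (d2 p t)
  have d22 : ∀ p t, HasDerivAt (fun s => (Φ p s).2.2) (vf k d (clip B (Φ p t))).2.2 t :=
    fun p t => hasDerivAt_snd (d2 p t)
  have d221 : ∀ p t, HasDerivAt (fun s => (Φ p s).2.2.1) (vf k d (clip B (Φ p t))).2.2.1 t :=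
    fun p t => hasDerivAt_fst (d22 p t)
  have d222 : ∀ p t, HasDerivAt (fun s => (Φ p s).2.2.2) 0 t :=
    fun p t => hasDerivAt_snd (d22 p t)
  have hpar : ∀ p t, (Φ p t).2.2.2 = p.2.2.2 := fun p t => by
    have := is_const_of_deriv_eq_zero (fun s => (d222 p s).differentiableAt)
      (fun s => (d222 p s).deriv) t 0
    rwa [h0] at this
  refine ⟨Φ, h0, h3, h2, hpar, fun p t ht => ?_⟩
  have hcl : clip B (Φ p t) = Φ p t := by
    rw [norm4_le] at ht
    unfold clip
    rw [clipR_eq ht.1, clipR_eq ht.2.1, clipR_eq ht.2.2.1, clipR_eq ht.2.2.2]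
  have e1 := d1 p t
  have e2 := d21 p t
  have e3 := d221 p t
  rw [hcl] at e1 e2 e3
  simp only [vf, hpar] at e1 e2 e3
  exact ⟨e1, e2, e3⟩

/-! ### Shooting in the parameter `L` -/

/-- Initial point on the approximate unstable manifold, with parameter `L`. -/
noncomputable def st (k d η L : ℝ) : ℝ × ℝ × ℝ × ℝ := (η, η, cc k d * η ^ 2, L)

/-- `P` as a function on the extended phase space. -/
def PQ (k : ℝ) (p : ℝ × ℝ × ℝ × ℝ) : ℝ := PP k p.2.2.2 p.1 p.2.1 p.2.2.1

lemma PQ_cont (k : ℝ) : Continuous (PQ k) := by unfold PQ PP; fun_prop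

/-- The parameters for which `F` becomes negative while `G` has stayed positive form an open set. -/
lemma isOpen_escape {F G : ℝ → ℝ → ℝ} (hF : Continuous (fun q : ℝ × ℝ => F q.1 q.2))
    (hG : Continuous (fun q : ℝ × ℝ => G q.1 q.2)) :
    IsOpen {L | ∃ T, 0 ≤ T ∧ F L T < 0 ∧ ∀ t ∈ Icc 0 T, 0 < G L t} := by
  rw [isOpen_iff_mem_nhds]
  rintro L ⟨T, hT, h1, h2⟩
  have e1 : ∀ᶠ L' in nhds L, F L' T < 0 := by
    have hc : Continuous (fun L' => F L' T) := hF.comp (by fun_prop : Continuous fun L' => (L', T))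
    exact hc.continuousAt.eventually (gt_mem_nhds h1)
  have e2 : ∀ᶠ L' in nhds L, ∀ t ∈ Icc 0 T, 0 < G L' t :=
    isCompact_Icc.eventually_forall_of_forall_eventually (fun t ht =>
      hG.continuousAt.eventually (lt_mem_nhds (h2 t ht)))
  filter_upwards [e1, e2] with L' a b
  exact ⟨T, hT, a, b⟩

namespace SysFlow
variable {k d η L : ℝ} {Φ : ℝ × ℝ × ℝ × ℝ → ℝ → ℝ × ℝ × ℝ × ℝ}

lemma cont_t {B : ℝ} (h : SysFlow k d B Φ) (p : ℝ × ℝ × ℝ × ℝ) : Continuous (Φ p) :=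
  h.cont.comp (by fun_prop : Continuous fun t : ℝ => (p, t))

lemma mkPhase (ha : Adm k d) (h : SysFlow k d (B0 k d + 1) Φ) (hη : η ∈ Ioc 0 (1 / 2))
    (hL : L ∈ Icc 0 (Mm k d)) {T : ℝ} (hx : ∀ t ∈ Icc 0 T, 0 < (Φ (st k d η L) t).1)
    (hP : ∀ t ∈ Icc 0 T, 0 ≤ PQ k (Φ (st k d η L) t))
    (hn : ∀ t ∈ Icc 0 T, ‖Φ (st k d η L) t‖ ≤ B0 k d + 1) :
    Phase k d L η T (fun s => (Φ (st k d η L) s).1) (fun s => (Φ (st k d η L) s).2.1)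
      (fun s => (Φ (st k d η L) s).2.2.1) where
  adm := ha
  L0 := hL.1
  η0 := hη.1
  η1 := hη.2
  ode := fun t ht => h.sol _ t (hn t ht)
  xpos := hx
  Pnn := fun t ht => by
    have := hP t ht
    rw [PQ, h.par] at this
    exact this
  x0 := by rw [h.init]; rfl
  v0 := by rw [h.init]; rfl
  w0 := by rw [h.init]; rfl

lemma norm_of_phase {B : ℝ} (h : SysFlow k d B Φ) (hL : L ∈ Icc 0 (Mm k d)) {T t : ℝ}
    (hp : Phase k d L η T (fun s => (Φ (st k d η L) s).1) (fun s => (Φ (st k d η L) s).2.1)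
      (fun s => (Φ (st k d η L) s).2.2.1)) (ht : t ∈ Icc 0 T) :
    ‖Φ (st k d η L) t‖ ≤ B0 k d := by
  obtain ⟨b1, b2, b3⟩ := hp.bounds hL.2 ht
  rw [norm4_le, h.par]
  refine ⟨b1, b2, b3, ?_⟩
  show |L| ≤ _
  rw [abs_of_nonneg hL.1]
  exact hL.2.trans hp.adm.B0_ge.1

/-- As long as `x > 0` and `P ≥ 0`, the truncation is not felt. -/
lemma norm_le (ha : Adm k d) (h : SysFlow k d (B0 k d + 1) Φ) (hη : η ∈ Ioc 0 (1 / 2))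
    (hL : L ∈ Icc 0 (Mm k d)) {T : ℝ} (hT : 0 < T)
    (hx : ∀ t ∈ Ico 0 T, 0 < (Φ (st k d η L) t).1)
    (hP : ∀ t ∈ Ico 0 T, 0 ≤ PQ k (Φ (st k d η L) t)) :
    ∀ t ∈ Icc 0 T, ‖Φ (st k d η L) t‖ ≤ B0 k d := by
  have hc : Continuous (fun t => ‖Φ (st k d η L) t‖) := (h.cont_t _).norm
  have hb := ha.B0_ge
  have h0 : ‖Φ (st k d η L) 0‖ < B0 k d + 1 := by
    refine lt_of_le_of_lt ?_ (lt_add_one (B0 k d))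
    rw [h.init, norm4_le]
    have h1 := hη.1
    have h2 := hη.2
    have h3 := ha.cc_pos
    have h4 := ha.cc_le
    have h6 : η ^ 2 ≤ 1 := by nlinarith
    refine ⟨?_, ?_, ?_, ?_⟩ <;> simp only [st]
    · rw [abs_of_pos h1]; linarith
    · rw [abs_of_pos h1]; linarith
    · rw [abs_of_pos (by positivity)]
      have h5 : cc k d ≤ 1 := by linarith [ha.kd, ha.d1]
      nlinarith
    · rw [abs_of_nonneg hL.1]; linarith [hL.2]
  have hlt : ∀ t ∈ Ico 0 T, ‖Φ (st k d η L) t‖ < B0 k d + 1 := by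
    intro t ht
    by_contra hcon
    obtain ⟨r, hr, hr1, hr2⟩ := first_hit ht.1 hc.continuousOn h0 (not_lt.1 hcon)
    have hp := mkPhase ha h hη hL (T := r)
      (fun s hs => hx s ⟨hs.1, (hs.2.trans hr.2).trans_lt ht.2⟩)
      (fun s hs => hP s ⟨hs.1, (hs.2.trans hr.2).trans_lt ht.2⟩)
      (fun s hs => by
        rcases hs.2.eq_or_lt with h1 | h1
        · rw [h1]; exact hr1.le
        · exact (hr2 s ⟨hs.1, h1⟩).le)
    have := h.norm_of_phase hL hp ⟨hr.1.le, le_rfl⟩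
    linarith
  have hle : Ico 0 T ⊆ {t | ‖Φ (st k d η L) t‖ ≤ B0 k d} := fun t ht =>
    h.norm_of_phase hL (mkPhase ha h hη hL (T := t)
      (fun s hs => hx s ⟨hs.1, hs.2.trans_lt ht.2⟩)
      (fun s hs => hP s ⟨hs.1, hs.2.trans_lt ht.2⟩)
      (fun s hs => (hlt s ⟨hs.1, hs.2.trans_lt ht.2⟩).le)) ⟨ht.1, le_rfl⟩
  have := closure_minimal hle (isClosed_le hc continuous_const)
  rw [closure_Ico hT.ne] at this
  exact fun t ht => this ht

lemma phase_of (ha : Adm k d) (h : SysFlow k d (B0 k d + 1) Φ) (hη : η ∈ Ioc 0 (1 / 2))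
    (hL : L ∈ Icc 0 (Mm k d)) {T : ℝ} (hT : 0 < T)
    (hx : ∀ t ∈ Icc 0 T, 0 < (Φ (st k d η L) t).1)
    (hP : ∀ t ∈ Icc 0 T, 0 ≤ PQ k (Φ (st k d η L) t)) :
    Phase k d L η T (fun s => (Φ (st k d η L) s).1) (fun s => (Φ (st k d η L) s).2.1)
      (fun s => (Φ (st k d η L) s).2.2.1) :=
  mkPhase ha h hη hL hx hP (fun t ht => by
    have := h.norm_le ha hη hL hT (fun s hs => hx s ⟨hs.1, hs.2.le⟩)
      (fun s hs => hP s ⟨hs.1, hs.2.le⟩) t ht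
    linarith)

lemma PQ_start (ha : Adm k d) {B : ℝ} (h : SysFlow k d B Φ) (hη : η ∈ Ioc 0 (1 / 2))
    (hL : L ∈ Icc 0 (Mm k d)) : 0 < PQ k (Φ (st k d η L) 0) := by
  have e : PQ k (Φ (st k d η L) 0) = (1 + L) * (cc k d - k) * η ^ 4 := by
    rw [h.init]; simp only [PQ, PP, st]; ring
  rw [e]
  have := hL.1; have := hη.1
  have : 0 < cc k d - k := sub_pos.2 ha.lt_cc
  positivity

lemma first_zero {B : ℝ} (h : SysFlow k d B Φ) (hη : η ∈ Ioc 0 (1 / 2))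
    {T : ℝ} (hT : 0 ≤ T) (hxT : (Φ (st k d η L) T).1 ≤ 0) :
    ∃ r ∈ Ioc 0 T, (Φ (st k d η L) r).1 = 0 ∧ ∀ s ∈ Ico 0 r, 0 < (Φ (st k d η L) s).1 :=
  first_hit_down (f := fun t => (Φ (st k d η L) t).1) hT
    (continuous_fst.comp (h.cont_t _)).continuousOn
    (by rw [h.init]; exact hη.1) hxT

/-- For `L = 0` the orbit does not leave the phase through `P = 0`. -/
lemma zero_not_down (ha : Adm k d) (h : SysFlow k d (B0 k d + 1) Φ) (hη : η ∈ Ioc 0 (1 / 2)) :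
    ¬ ∃ T, 0 ≤ T ∧ PQ k (Φ (st k d η 0) T) < 0 ∧
      ∀ t ∈ Icc 0 T, 0 < (Φ (st k d η 0) t).1 := by
  rintro ⟨T, hT, h1, h2⟩
  have hL : (0 : ℝ) ∈ Icc 0 (Mm k d) := ⟨le_rfl, by linarith [ha.Mm_gt]⟩
  obtain ⟨r, hr, hr1, hr2⟩ := first_hit_down (f := fun t => PQ k (Φ (st k d η 0) t)) hT
    ((PQ_cont k).comp (h.cont_t _)).continuousOn (h.PQ_start ha hη hL) h1.le
  have hp := h.phase_of ha hη hL hr.1 (fun t ht => h2 t ⟨ht.1, ht.2.trans hr.2⟩) (fun t ht => by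
    rcases ht.2.eq_or_lt with h3 | h3
    · rw [h3]; exact hr1.ge
    · exact (hr2 t ⟨ht.1, h3⟩).le)
  refine hp.no_touch hr.1 ?_
  rw [PQ, h.par] at hr1
  exact hr1

/-- For the largest parameter the orbit does not leave the phase through `x = 0`: on the line
`v = -(L / 2) x`, which would have to be crossed, `P` is negative when `L` is large. -/
lemma top_not_up (ha : Adm k d) (h : SysFlow k d (B0 k d + 1) Φ) (hη : η ∈ Ioc 0 (1 / 2)) :
    ¬ ∃ T, 0 ≤ T ∧ (Φ (st k d η (Mm k d)) T).1 < 0 ∧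
      ∀ t ∈ Icc 0 T, 0 < PQ k (Φ (st k d η (Mm k d)) t) := by
  rintro ⟨T, hT, h1, h2⟩
  have hL : Mm k d ∈ Icc 0 (Mm k d) := ⟨by linarith [ha.Mm_gt], le_rfl⟩
  obtain ⟨r, hr, hr1, hr2⟩ := h.first_zero hη hT h1.le
  have hn := h.norm_le ha hη hL hr.1 hr2 (fun t ht => (h2 t ⟨ht.1, ht.2.le.trans hr.2⟩).le)
  have hv : (Φ (st k d η (Mm k d)) r).2.1 ≤ 0 :=
    deriv_nonpos_of_left hr.1 (h.sol _ r (by linarith [hn r ⟨hr.1.le, le_rfl⟩])).dx hr1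
      (fun s hs => (hr2 s hs).le)
  have hv' : (Φ (st k d η (Mm k d)) r).2.1 ≠ 0 := fun h0 => by
    have := h2 r ⟨hr.1.le, hr.2⟩
    simp [PQ, PP, hr1, h0] at this
  have hv2 : (Φ (st k d η (Mm k d)) r).2.1 < 0 := lt_of_le_of_ne hv hv'
  have hcx : Continuous (fun t => (Φ (st k d η (Mm k d)) t).1) :=
    continuous_fst.comp (h.cont_t _)
  have hcv : Continuous (fun t => (Φ (st k d η (Mm k d)) t).2.1) :=
    (continuous_fst.comp continuous_snd).comp (h.cont_t _)
  obtain ⟨t, ht, ht1, -⟩ := first_hit_down (c := 0)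
    (f := fun t => (Φ (st k d η (Mm k d)) t).2.1 + Mm k d / 2 * (Φ (st k d η (Mm k d)) t).1)
    hr.1.le (hcv.add (hcx.const_mul _)).continuousOn
    (by
      rw [h.init]
      simp only [st]
      have := hη.1; have := ha.Mm_gt
      positivity)
    (by rw [hr1]; linarith)
  have htr : t < r := by
    refine lt_of_le_of_ne ht.2 (fun e => ?_)
    rw [e, hr1] at ht1
    linarith
  have hp := h.phase_of ha hη hL ht.1 (fun s hs => hr2 s ⟨hs.1, hs.2.trans_lt htr⟩)
    (fun s hs => (h2 s ⟨hs.1, hs.2.trans (ht.2.trans hr.2)⟩).le)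
  have hg := (abs_le.1 (hp.g_abs ⟨ht.1.le, le_rfl⟩)).1
  have hPt := h2 t ⟨ht.1.le, ht.2.trans hr.2⟩
  have hx := hr2 t ⟨ht.1.le, htr⟩
  rw [PQ, h.par] at hPt
  have hM : Mm k d = 4 * Cg k d + 4 := rfl
  have hC := ha.Cg_gt.2
  simp only [PP, st] at hPt
  simp only [st] at hg hx ht1
  set X := (Φ (η, η, cc k d * η ^ 2, Mm k d) t).1
  set V := (Φ (η, η, cc k d * η ^ 2, Mm k d) t).2.1
  set W := (Φ (η, η, cc k d * η ^ 2, Mm k d) t).2.2.1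
  have eV : V = -(Mm k d / 2 * X) := by linarith
  have e : V ^ 2 + Mm k d * X * V - (1 + Mm k d) * X ^ 2 * (1 - W + k * X ^ 2)
      = X ^ 2 * (-(Mm k d ^ 2 / 4) - (1 + Mm k d) * (1 - W + k * X ^ 2)) := by
    rw [eV]; ring
  rw [e] at hPt
  have h5 := pos_of_mul_pos_right hPt (by positivity)
  rw [hM] at h5
  nlinarith

lemma g_of_norm {p : ℝ × ℝ × ℝ × ℝ} {B : ℝ} (hp : ‖p‖ ≤ B) :
    |1 - p.2.2.1 + k * p.1 ^ 2| ≤ 1 + B + |k| * B ^ 2 := by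
  obtain ⟨h1, -, h3, -⟩ := norm4_le.1 hp
  have h4 : |k * p.1 ^ 2| ≤ |k| * B ^ 2 := by
    rw [abs_mul, abs_pow]
    gcongr
  have := abs_le.1 h4
  have := abs_le.1 h3
  rw [abs_le]; constructor <;> linarith

/-- A parameter in neither of the two escape sets keeps the orbit in the phase forever. A transversal
zero of `x` would put it in the first set; `x = v = 0` is excluded by uniqueness, and `P` has no
interior tangential zero by `Phase.P_pos`. -/
lemma phase_of_neither (ha : Adm k d) (h : SysFlow k d (B0 k d + 1) Φ) (hη : η ∈ Ioc 0 (1 / 2))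
    (hL : L ∈ Icc 0 (Mm k d))
    (hA : ¬ ∃ T, 0 ≤ T ∧ (Φ (st k d η L) T).1 < 0 ∧
      ∀ t ∈ Icc 0 T, 0 < PQ k (Φ (st k d η L) t))
    (hB : ¬ ∃ T, 0 ≤ T ∧ PQ k (Φ (st k d η L) T) < 0 ∧
      ∀ t ∈ Icc 0 T, 0 < (Φ (st k d η L) t).1) (T : ℝ) :
    Phase k d L η T (fun s => (Φ (st k d η L) s).1) (fun s => (Φ (st k d η L) s).2.1)
      (fun s => (Φ (st k d η L) s).2.2.1) := by
  have hPn : ∀ t, 0 ≤ t → (∀ s ∈ Icc 0 t, 0 < (Φ (st k d η L) s).1) →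
      0 ≤ PQ k (Φ (st k d η L) t) := fun t ht hx => by
    by_contra hcon
    exact hB ⟨t, ht, not_le.1 hcon, hx⟩
  have hx : ∀ t, 0 ≤ t → 0 < (Φ (st k d η L) t).1 := by
    intro t ht
    by_contra hcon
    obtain ⟨r, hr, hr1, hr2⟩ := h.first_zero hη ht (not_lt.1 hcon)
    have hPr : ∀ s ∈ Ico 0 r, 0 ≤ PQ k (Φ (st k d η L) s) := fun s hs =>
      hPn s hs.1 (fun q hq => hr2 q ⟨hq.1, hq.2.trans_lt hs.2⟩)
    have hn := h.norm_le ha hη hL hr.1 hr2 hPr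
    have hsol : ∀ s ∈ Icc 0 r, _ := fun s hs => h.sol (st k d η L) s (by linarith [hn s hs])
    have hv : (Φ (st k d η L) r).2.1 ≤ 0 :=
      deriv_nonpos_of_left hr.1 (hsol r ⟨hr.1.le, le_rfl⟩).dx hr1 (fun s hs => (hr2 s hs).le)
    have hv' : (Φ (st k d η L) r).2.1 ≠ 0 := fun h0 => by
      have := axis_back hr.1.le hL.1 hsol (fun s hs => g_of_norm (hn s hs)) hr1 h0
      simp only [h.init] at this
      exact hη.1.ne' this
    have hv2 : (Φ (st k d η L) r).2.1 < 0 := lt_of_le_of_ne hv hv'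
    have hPpos : ∀ s ∈ Icc 0 r, 0 < PQ k (Φ (st k d η L) s) := by
      intro s hs
      rcases hs.2.eq_or_lt with e | hlt
      · rw [e]
        have : 0 < (Φ (st k d η L) r).2.1 ^ 2 := by positivity
        simpa [PQ, PP, hr1] using this
      rcases hs.1.eq_or_lt with e | hpos
      · rw [← e]; exact h.PQ_start ha hη hL
      · obtain ⟨q, hq1, hq2⟩ := exists_between hlt
        have hp := h.phase_of ha hη hL (hpos.trans hq1)
          (fun a ha => hr2 a ⟨ha.1, ha.2.trans_lt hq2⟩)
          (fun a ha => hPr a ⟨ha.1, ha.2.trans_lt hq2⟩)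
        have := hp.P_pos ⟨hpos, hq1⟩
        rw [PQ, h.par]
        exact this
    have ev1 := pos_right_of_deriv (hsol r ⟨hr.1.le, le_rfl⟩).dx.fun_neg
      (by simp only [hr1, neg_zero]) (by simpa using hv2)
    have ev2 : ∀ᶠ s in nhdsWithin r (Ioi r), 0 < PQ k (Φ (st k d η L) s) :=
      nhdsWithin_le_nhds (((PQ_cont k).comp (h.cont_t _)).continuousAt.eventually
        (lt_mem_nhds (hPpos r ⟨hr.1.le, le_rfl⟩)))
    obtain ⟨e, he, hsub⟩ := mem_nhdsGT_iff_exists_Ioo_subset.1 (ev1.and ev2)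
    obtain ⟨s, hs⟩ := exists_between (show r < e from he)
    refine hA ⟨s, hr.1.le.trans hs.1.le, by simpa using (hsub hs).1, fun q hq => ?_⟩
    rcases le_or_gt q r with hqr | hqr
    · exact hPpos q ⟨hq.1, hqr⟩
    · exact (hsub ⟨hqr, hq.2.trans_lt hs.2⟩).2
  refine Phase.restrict (T := max T 1) ?_ (le_max_left _ _)
  exact h.phase_of ha hη hL (by positivity) (fun t ht => hx t ht.1)
    (fun t ht => hPn t ht.1 (fun s hs => hx s hs.1))

/-- For every starting size `η` some parameter gives an orbit with `x > 0`, `P ≥ 0` forever: the two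
escape sets are open, disjoint and contain `0` and `Mm` respectively if they cover `[0, Mm]`, which
is connected. -/
lemma exists_L (ha : Adm k d) (h : SysFlow k d (B0 k d + 1) Φ) (hη : η ∈ Ioc 0 (1 / 2)) :
    ∃ L ∈ Icc 0 (Mm k d), ∀ T, Phase k d L η T (fun s => (Φ (st k d η L) s).1)
      (fun s => (Φ (st k d η L) s).2.1) (fun s => (Φ (st k d η L) s).2.2.1) := by
  have hst : Continuous (fun q : ℝ × ℝ => Φ (st k d η q.1) q.2) :=
    h.cont.comp (by unfold st; fun_prop : Continuous fun q : ℝ × ℝ => (st k d η q.1, q.2))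
  have hxc : Continuous (fun q : ℝ × ℝ => (Φ (st k d η q.1) q.2).1) := continuous_fst.comp hst
  have hPc : Continuous (fun q : ℝ × ℝ => PQ k (Φ (st k d η q.1) q.2)) := (PQ_cont k).comp hst
  have oA := isOpen_escape (F := fun L t => (Φ (st k d η L) t).1)
    (G := fun L t => PQ k (Φ (st k d η L) t)) hxc hPc
  have oB := isOpen_escape (F := fun L t => PQ k (Φ (st k d η L) t))
    (G := fun L t => (Φ (st k d η L) t).1) hPc hxc
  by_contra hcon
  push Not at hcon
  have hM : 0 ≤ Mm k d := by linarith [ha.Mm_gt]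
  have cover : Icc 0 (Mm k d) ⊆ _ ∪ _ := fun L hL => by
    by_contra hnot
    rw [mem_union, not_or] at hnot
    obtain ⟨T, hT⟩ := hcon L hL
    exact hT (h.phase_of_neither ha hη hL (fun hh => hnot.1 hh) (fun hh => hnot.2 hh) T)
  have m0 : (0 : ℝ) ∈ Icc 0 (Mm k d) := ⟨le_rfl, hM⟩
  have m1 : Mm k d ∈ Icc 0 (Mm k d) := ⟨hM, le_rfl⟩
  obtain ⟨L, -, ⟨T, hT, a1, a2⟩, ⟨S, hS, b1, b2⟩⟩ := isPreconnected_Icc _ _ oA oB cover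
    ⟨0, m0, (cover m0).resolve_right (h.zero_not_down ha hη)⟩
    ⟨Mm k d, m1, (cover m1).resolve_left (h.top_not_up ha hη)⟩
  rcases le_total T S with hTS | hTS
  · have := b2 T ⟨hT, hTS⟩; linarith
  · have := a2 S ⟨hS, hTS⟩; linarith

end SysFlow

/-! ### The limiting orbit -/

/-- An orbit defined for all times, positioned so that it turns (`v = 0`) at `t = 0`, with the closed
conditions inherited from the orbits of the shooting argument. -/
structure Entire (k d L : ℝ) (x v w : ℝ → ℝ) : Prop where
  adm : Adm k d
  L0 : 0 ≤ L
  sol : ∀ t, Sol k d L x v w t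
  xnn : ∀ t, 0 ≤ x t
  Pnn : ∀ t, 0 ≤ PP k L (x t) (v t) (w t)
  vx : ∀ t, v t ≤ x t
  wnn : ∀ t, 0 ≤ w t
  wb : ∀ t, t ≤ 0 → w t ≤ (1 + k) * x t ^ 2
  vb : ∀ t, t ≤ 0 → 0 ≤ v t
  bdd : ∃ C, ∀ t, |1 - w t + k * x t ^ 2| ≤ C
  v0 : v 0 = 0
  x0 : 1 < x 0 ^ 2

/-- A solution at rest (`v = 0`) on a nontrivial interval sits at the equilibrium `x² = 1`. -/
lemma rest_eq {k d L a b : ℝ} {x v w : ℝ → ℝ} (hL : 0 ≤ L) (hd : 0 < d)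
    (h : ∀ t, Sol k d L x v w t) (hab : a < b) (hv : ∀ t ∈ Icc a b, v t = 0) (hx : ∀ t ∈ Icc a b, 0 < x t) :
    x a ^ 2 = 1 ∧ x b ^ 2 = 1 := by
  have hm := mono_of_deriv (f := x) (f' := v) (a := a) (b := b) (fun t _ => (h t).dx)
    (fun t ht => (hv t ht).ge)
  have hn := anti_of_deriv (f := x) (f' := v) (a := a) (b := b) (fun t _ => (h t).dx)
    (fun t ht => (hv t ht).le)
  have hg : ∀ t ∈ Ioo a b, 1 - w t + k * x t ^ 2 = 0 := by
    intro t ht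
    have he : v =ᶠ[nhds t] fun _ => 0 := by
      filter_upwards [Icc_mem_nhds ht.1 ht.2] with s hs using hv s hs
    have h1 := (h t).dv.unique ((hasDerivAt_const t (0 : ℝ)).congr_of_eventuallyEq he)
    have h2 := hx t (Ioo_subset_Icc_self ht)
    rw [hv t (Ioo_subset_Icc_self ht)] at h1
    have h3 : (1 + L) * x t ≠ 0 := by positivity
    have h4 : (1 + L) * x t * (1 - w t + k * x t ^ 2) = 0 := by linarith
    exact (mul_eq_zero.1 h4).resolve_left h3
  have hd0 : ∀ t ∈ Ioo a b, d * ((1 + k) * x t ^ 2 - w t) = 0 := by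
    intro t ht
    have he : (fun s => 1 - w s + k * x s ^ 2) =ᶠ[nhds t] fun _ => 0 := by
      filter_upwards [Ioo_mem_nhds ht.1 ht.2] with s hs using hg s hs
    have h1 := (((h t).dw.const_sub 1).fun_add (((h t).dx.fun_pow 2).const_mul k)).unique
      ((hasDerivAt_const t (0 : ℝ)).congr_of_eventuallyEq he)
    rw [hv t (Ioo_subset_Icc_self ht)] at h1
    simp only [mul_zero, add_zero] at h1
    linarith
  have hc : (a + b) / 2 ∈ Ioo a b := ⟨by linarith, by linarith⟩
  have hc' := Ioo_subset_Icc_self hc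
  have ha : a ∈ Icc a b := ⟨le_rfl, hab.le⟩
  have hb : b ∈ Icc a b := ⟨hab.le, le_rfl⟩
  have e1 : x a = x ((a + b) / 2) := le_antisymm (hm ha hc' hc'.1) (hn ha hc' hc'.1)
  have e2 : x b = x ((a + b) / 2) := le_antisymm (hn hc' hb hc'.2) (hm hc' hb hc'.2)
  have h1 := hg _ hc
  have h2 := (mul_eq_zero.1 (hd0 _ hc)).resolve_left hd.ne'
  rw [e1, e2]
  constructor <;> linarith

namespace Entire
variable {k d L : ℝ} {x v w : ℝ → ℝ}

lemma x_pos (h : Entire k d L x v w) (t : ℝ) : 0 < x t := by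
  refine lt_of_le_of_ne (h.xnn t) (fun h0 => ?_)
  have hmin : IsLocalMin x t := Eventually.of_forall (fun s => by rw [← h0]; exact h.xnn s)
  have hv := hmin.hasDerivAt_eq_zero (h.sol t).dx
  obtain ⟨C, hC⟩ := h.bdd
  have hx0 : x 0 = 0 := by
    rcases le_total 0 t with ht | ht
    · exact axis_back ht h.L0 (fun s _ => h.sol s) (fun s _ => hC s) h0.symm hv
    · exact axis_forw ht h.L0 (fun s _ => h.sol s) (fun s _ => hC s) h0.symm hv
  have := h.x0
  rw [hx0] at this
  norm_num at this

lemma z_anti (h : Entire k d L x v w) {s t : ℝ} (hst : s ≤ t) : v t / x t ≤ v s / x s :=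
  anti_of_deriv (f := fun s => v s / x s) (a := s) (b := t)
    (fun r _ => (h.sol r).dz (h.x_pos r).ne')
    (fun r _ => by
      rw [neg_div]
      exact neg_nonpos.2 (div_nonneg (h.Pnn r) (sq_nonneg _)))
    ⟨le_rfl, hst⟩ ⟨hst, le_rfl⟩ hst

lemma z_zero (h : Entire k d L x v w) : v 0 / x 0 = 0 := by rw [h.v0, zero_div]

lemma z_one_neg (h : Entire k d L x v w) : v 1 / x 1 < 0 := by
  by_contra! hc
  have := (rest_eq h.L0 h.adm.d0 h.sol (zero_lt_one) (fun t ht => by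
    have h1 := h.z_anti ht.1
    have h2 := h.z_anti ht.2
    rw [h.z_zero] at h1
    have : v t / x t = 0 := le_antisymm h1 (hc.trans h2)
    exact (div_eq_zero_iff.1 this).resolve_right (h.x_pos t).ne') (fun t _ => h.x_pos t)).1
  linarith [h.x0]

lemma z_neg_one_pos (h : Entire k d L x v w) : 0 < v (-1) / x (-1) := by
  by_contra! hc
  have := (rest_eq h.L0 h.adm.d0 h.sol (by norm_num : (-1 : ℝ) < 0) (fun t ht => by
    have h1 := h.z_anti ht.2
    have h2 := h.z_anti ht.1
    rw [h.z_zero] at h1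
    have : v t / x t = 0 := le_antisymm (h2.trans hc) h1
    exact (div_eq_zero_iff.1 this).resolve_right (h.x_pos t).ne') (fun t _ => h.x_pos t)).2
  linarith [h.x0]

lemma x_tendsto_top (h : Entire k d L x v w) : Tendsto x atTop (nhds 0) := by
  have hz := h.z_one_neg
  set q := -(v 1 / x 1) with hq
  have hb : ∀ᶠ t in atTop, x t ≤ x 1 * Real.exp (-q * (t - 1)) := by
    filter_upwards [eventually_ge_atTop 1] with t ht
    refine exp_upper ht (fun s _ => (h.sol s).dx) (fun s hs => ?_)
    have h1 := h.z_anti hs.1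
    rw [div_le_iff₀ (h.x_pos s)] at h1
    linarith
  have hl : Tendsto (fun t => x 1 * Real.exp (-q * (t - 1))) atTop (nhds 0) := by
    rw [← mul_zero (x 1)]
    refine Tendsto.const_mul _ (Real.tendsto_exp_atBot.comp ?_)
    exact (tendsto_atTop_add_const_right atTop (-1 : ℝ) tendsto_id).const_mul_atTop_of_neg
      (by linarith)
  exact tendsto_of_tendsto_of_tendsto_of_le_of_le' tendsto_const_nhds hl
    (Eventually.of_forall h.xnn) hb

lemma x_tendsto_bot (h : Entire k d L x v w) : Tendsto x atBot (nhds 0) := by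
  have hz := h.z_neg_one_pos
  set q := v (-1) / x (-1) with hq
  have hb : ∀ᶠ t in atBot, x t ≤ x (-1) * Real.exp (q * (t + 1)) := by
    filter_upwards [eventually_le_atBot (-1)] with t ht
    have := exp_lower (q := -q) ht (fun s _ => (h.sol s).dx) (fun s hs => by
      have h1 := h.z_anti hs.2
      rw [le_div_iff₀ (h.x_pos s)] at h1
      linarith)
    have e : q * (t + 1) = -(-(-q) * (-1 - t)) := by ring
    rw [e, Real.exp_neg, ← div_eq_mul_inv, le_div_iff₀ (Real.exp_pos _)]
    exact this
  have hl : Tendsto (fun t => x (-1) * Real.exp (q * (t + 1))) atBot (nhds 0) := by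
    rw [← mul_zero (x (-1))]
    refine Tendsto.const_mul _ (Real.tendsto_exp_atBot.comp ?_)
    exact (tendsto_atBot_add_const_right atBot (1 : ℝ) tendsto_id).const_mul_atBot hz
  exact tendsto_of_tendsto_of_tendsto_of_le_of_le' tendsto_const_nhds hl
    (Eventually.of_forall h.xnn) hb

lemma w_tendsto_top (h : Entire k d L x v w) : Tendsto w atTop (nhds 0) := by
  refine tendsto_zero_of_forced (φ := fun t => d * (1 + k) * x t ^ 2) h.adm.d0
    (fun t _ => (h.sol t).dw.congr_deriv (by ring)) ?_
  simpa using (h.x_tendsto_top.pow 2).const_mul (d * (1 + k))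

lemma v_tendsto_top (h : Entire k d L x v w) : Tendsto v atTop (nhds 0) := by
  have hL := h.L0
  -- The difference `v - x` obeys a linear equation damped at rate `1 + L`, with vanishing forcing.
  have hm : Tendsto (fun t => v t - x t) atTop (nhds 0) := by
    refine tendsto_zero_of_forced (a := 1 + L)
      (φ := fun t => -((1 + L) * x t * (w t - k * x t ^ 2))) (by linarith)
      (fun t _ => ((h.sol t).dv.fun_sub (h.sol t).dx).congr_deriv (by ring)) ?_
    simpa using ((h.x_tendsto_top.const_mul (1 + L)).mul
      (h.w_tendsto_top.sub ((h.x_tendsto_top.pow 2).const_mul k))).neg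
  simpa using hm.add h.x_tendsto_top

lemma v_tendsto_bot (h : Entire k d L x v w) : Tendsto v atBot (nhds 0) :=
  tendsto_of_tendsto_of_tendsto_of_le_of_le' tendsto_const_nhds h.x_tendsto_bot
    ((eventually_le_atBot 0).mono h.vb) (Eventually.of_forall h.vx)

lemma w_tendsto_bot (h : Entire k d L x v w) : Tendsto w atBot (nhds 0) := by
  have hl : Tendsto (fun t => (1 + k) * x t ^ 2) atBot (nhds 0) := by
    simpa using (h.x_tendsto_bot.pow 2).const_mul (1 + k)
  exact tendsto_of_tendsto_of_tendsto_of_le_of_le' tendsto_const_nhds hl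
    (Eventually.of_forall h.wnn) ((eventually_le_atBot 0).mono h.wb)

lemma V_tendsto {l : Filter ℝ} (hx : Tendsto x l (nhds 0)) (hv : Tendsto v l (nhds 0))
    (hw : Tendsto w l (nhds 0)) : Tendsto (fun t => VV k (x t) (v t) (w t)) l (nhds 0) := by
  have hc : Continuous (fun p : ℝ × ℝ × ℝ => VV k p.1 p.2.1 p.2.2) := by unfold VV; fun_prop
  have h0 : VV k 0 0 0 = 0 := by simp [VV]
  have := (hc.tendsto (0, 0, 0)).comp (hx.prodMk_nhds (hv.prodMk_nhds hw))
  simpa [h0, Function.comp_def] using this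

/-- For `L = 0` the function `V` is nondecreasing, hence constant along a homoclinic orbit, which
forces the orbit to be trivial. -/
lemma L_pos (h : Entire k d L x v w) : 0 < L := by
  refine lt_of_le_of_ne h.L0 (fun h0 => ?_)
  subst h0
  have hk : 0 < 1 + k := by linarith [h.adm.k1]
  have hd := h.adm.d0
  have hmono : Monotone (fun t => VV k (x t) (v t) (w t)) := fun s t hst =>
    mono_of_deriv (a := s) (b := t) (fun r _ => (h.sol r).dV h.adm) (fun r _ => by positivity)
      ⟨le_rfl, hst⟩ ⟨hst, le_rfl⟩ hst
  have htop := V_tendsto (k := k) h.x_tendsto_top h.v_tendsto_top h.w_tendsto_top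
  have hbot := V_tendsto (k := k) h.x_tendsto_bot h.v_tendsto_bot h.w_tendsto_bot
  have hV : (fun t => VV k (x t) (v t) (w t)) = fun _ => 0 := by
    funext t
    exact le_antisymm (hmono.ge_of_tendsto htop t) (hmono.le_of_tendsto hbot t)
  have hw0 : ∀ t, d * ((1 + k) * x t ^ 2 - w t) = 0 := by
    intro t
    have h1 := (h.sol t).dV h.adm
    rw [hV] at h1
    have h2 := h1.unique (hasDerivAt_const t (0 : ℝ))
    have h3 : (2 * d * (1 + k)) ≠ 0 := by positivity
    exact pow_eq_zero_iff (two_ne_zero) |>.1 ((div_eq_zero_iff.1 h2).resolve_right h3)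
  have hconst : ∀ t, w t = w 0 := fun t =>
    is_const_of_deriv_eq_zero (fun s => (h.sol s).dw.differentiableAt)
      (fun s => by rw [(h.sol s).dw.deriv, hw0]) t 0
  have hlim : w 0 = 0 := by
    refine tendsto_nhds_unique ?_ h.w_tendsto_top
    rw [show w = fun _ => w 0 from funext hconst]
    exact tendsto_const_nhds
  have h1 := (mul_eq_zero.1 (hw0 0)).resolve_left hd.ne'
  have := h.x0
  nlinarith

end Entire

/-- The orbits found by shooting from `x = η`, re-timed to start at their turning points, converge
along a subsequence `η → 0` to an orbit defined for all times. -/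
lemma exists_entire {k d : ℝ} (ha : Adm k d) : ∃ L x v w, Entire k d L x v w := by
  have hB := ha.B0_ge
  have hk : 0 < 1 + k := by linarith [ha.k1]
  have hc3 : 0 < c3 k := by unfold c3; positivity
  obtain ⟨Φ, h⟩ := exists_sysFlow k d (B := B0 k d + 1) (by linarith)
  set η : ℕ → ℝ := fun n => 1 / ((n : ℝ) + 2) with hη
  have hηm : ∀ n, η n ∈ Ioc (0 : ℝ) (1 / 2) := fun n => by
    have : (0 : ℝ) ≤ n := n.cast_nonneg
    refine ⟨by positivity, ?_⟩
    exact one_div_le_one_div_of_le (by norm_num) (by linarith)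
  choose L hL hph using fun n => h.exists_L ha (hηm n)
  choose τ hτ0 hτv hτb hτy using fun n => Phase.turning (hph n)
  set p : ℕ → ℝ × ℝ × ℝ × ℝ := fun n => st k d (η n) (L n) with hp
  have hnorm : ∀ n t, 0 ≤ t → ‖Φ (p n) t‖ ≤ B0 k d := fun n t ht =>
    h.norm_of_phase (hL n) (hph n t) ⟨ht, le_rfl⟩
  -- `1 ≤ x (τ n) ≤ η n * exp (τ n)` forces the travel times to infinity.
  have hτ : Tendsto τ atTop atTop := by
    have h1 : ∀ n : ℕ, Real.log ((n : ℝ) + 2) ≤ τ n := fun n => by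
      have h2 := (hph n (τ n)).x_le_exp ⟨(hτ0 n).le, le_rfl⟩
      have h3 := (hph n (τ n)).xpos (τ n) ⟨(hτ0 n).le, le_rfl⟩
      have h4 := hτy n
      have h5 : (0 : ℝ) < (n : ℝ) + 2 := by positivity
      rw [Real.log_le_iff_le_exp h5]
      have h6 : 1 ≤ η n * Real.exp (τ n) := by
        refine le_trans ?_ h2
        nlinarith
      rw [hη] at h6
      simp only [one_div] at h6
      rw [inv_mul_eq_div, le_div_iff₀ h5] at h6
      linarith
    exact tendsto_atTop_mono h1 (Real.tendsto_log_atTop.comp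
      (tendsto_atTop_add_const_right _ _ tendsto_natCast_atTop_atTop))
  obtain ⟨q, -, φ, hφ, hq⟩ := (isCompact_closedBall (0 : ℝ × ℝ × ℝ × ℝ) (B0 k d)).tendsto_subseq
    (x := fun n => Φ (p n) (τ n))
    (fun n => mem_closedBall_zero_iff.2 (hnorm n _ (hτ0 n).le))
  have hτφ : Tendsto (fun n => τ (φ n)) atTop atTop := hτ.comp hφ.tendsto_atTop
  have hlim : ∀ t, Tendsto (fun n => Φ (p (φ n)) (τ (φ n) + t)) atTop (nhds (Φ q t)) := by
    intro t
    simp only [h.add]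
    have hc : Continuous (fun q => Φ q t) := h.cont.comp (by fun_prop : Continuous fun q => (q, t))
    exact (hc.tendsto q).comp hq
  -- Closed conditions holding along the approximating orbits pass to the limit.
  have key : ∀ (t : ℝ) (S : Set (ℝ × ℝ × ℝ × ℝ)), IsClosed S →
      (∀ n, 0 ≤ τ n + t → Φ (p n) (τ n + t) ∈ S) → Φ q t ∈ S := by
    intro t S hS hm
    refine hS.mem_of_tendsto (hlim t) ?_
    filter_upwards [hτφ.eventually_ge_atTop (-t)] with n hn
    exact hm _ (by linarith)
  have hmem : ∀ t : ℝ, 0 ≤ t → t ∈ Icc 0 t := fun t ht => ⟨ht, le_rfl⟩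
  have hqn : ∀ t, ‖Φ q t‖ ≤ B0 k d := fun t =>
    key t {r | ‖r‖ ≤ B0 k d} (isClosed_le (by fun_prop) (by fun_prop))
      (fun n hn => hnorm n _ hn)
  have hvb : ∀ n t, t ≤ 0 → 0 ≤ τ n + t → 0 ≤ (Φ (p n) (τ n + t)).2.1 := fun n t ht hn =>
    hτb n _ ⟨hn, by linarith⟩
  refine ⟨q.2.2.2, fun s => (Φ q s).1, fun s => (Φ q s).2.1, fun s => (Φ q s).2.2.1, ha, ?_,
    fun t => h.sol q t ((hqn t).trans (by linarith)), fun t => ?_, fun t => ?_, fun t => ?_,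
    fun t => ?_, fun t ht => ?_, fun t ht => ?_, ⟨_, fun t => SysFlow.g_of_norm (hqn t)⟩, ?_, ?_⟩
  · rw [← h.par q 0]
    refine key 0 {r | 0 ≤ r.2.2.2} (isClosed_le (by fun_prop) (by fun_prop)) (fun n _ => ?_)
    show 0 ≤ (Φ (p n) _).2.2.2
    rw [h.par]
    exact (hL n).1
  · exact key t {r | 0 ≤ r.1} (isClosed_le (by fun_prop) (by fun_prop))
      (fun n hn => ((hph n _).xpos _ (hmem _ hn)).le)
  · have := key t {r | 0 ≤ PQ k r} (isClosed_le (by fun_prop) (PQ_cont k)) (fun n hn => by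
      have := (hph n _).Pnn _ (hmem _ hn)
      show 0 ≤ PQ k _
      rw [PQ, h.par]
      exact this)
    have h2 : 0 ≤ PQ k (Φ q t) := this
    rwa [PQ, h.par] at h2
  · exact key t {r | r.2.1 ≤ r.1} (isClosed_le (by fun_prop) (by fun_prop))
      (fun n hn => (hph n _).v_le_x (hmem _ hn))
  · exact key t {r | 0 ≤ r.2.2.1} (isClosed_le (by fun_prop) (by fun_prop))
      (fun n hn => ((hph n _).w_pos (hmem _ hn)).le)
  · exact key t {r | r.2.2.1 ≤ (1 + k) * r.1 ^ 2} (isClosed_le (by fun_prop) (by fun_prop))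
      (fun n hn => by
        have := (hph n _).U_pos (hmem _ hn) (hvb n t ht hn)
        exact (sub_pos.1 this).le)
  · exact key t {r | 0 ≤ r.2.1} (isClosed_le (by fun_prop) (by fun_prop))
      (fun n hn => hvb n t ht hn)
  · exact key 0 {r | r.2.1 = 0} (isClosed_eq (by fun_prop) (by fun_prop))
      (fun n _ => by rw [add_zero]; exact hτv n)
  · have : 1 + c3 k ≤ (Φ q 0).1 ^ 2 :=
      key 0 {r | 1 + c3 k ≤ r.1 ^ 2} (isClosed_le (by fun_prop) (by fun_prop))
        (fun n _ => by rw [add_zero]; exact hτy n)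
    show 1 < (Φ q 0).1 ^ 2
    linarith

/-! ### Return to the original variables -/

/-- Rescaling time by `e = 1 / √(1 + L)` turns an entire orbit into a homoclinic trajectory of the
original system. -/
lemma Entire.homoclinic {k d L e : ℝ} {x v w : ℝ → ℝ} (h : Entire k d L x v w) (he : 0 < e)
    (heL : e ^ 2 * (1 + L) = 1) :
    IsHomoclinicToOrigin (e * L) (d * e) (2 * (1 + k)) (fun t => x (e * t))
      (fun t => e * v (e * t)) (fun t => w (e * t) - (1 + k) * x (e * t) ^ 2) := by
  have hs : ∀ t : ℝ, HasDerivAt (fun s => e * s) e t := fun t => by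
    simpa using (hasDerivAt_id t).const_mul e
  have dx : ∀ t, HasDerivAt (fun s => x (e * s)) (v (e * t) * e) t := fun t =>
    HasDerivAt.comp t (h.sol (e * t)).dx (hs t)
  have dv := fun t => HasDerivAt.comp t (h.sol (e * t)).dv (hs t)
  have dw := fun t => HasDerivAt.comp t (h.sol (e * t)).dw (hs t)
  have lim : ∀ l l' : Filter ℝ, Tendsto (fun s => e * s) l l' → Tendsto x l' (nhds 0) →
      Tendsto v l' (nhds 0) → Tendsto w l' (nhds 0) →
      Tendsto (fun t => ((x (e * t), e * v (e * t), w (e * t) - (1 + k) * x (e * t) ^ 2) :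
        ℝ × ℝ × ℝ)) l (nhds ((0 : ℝ), (0 : ℝ), (0 : ℝ))) := by
    intro l l' hl hx hv hw
    refine (hx.comp hl).prodMk_nhds (Tendsto.prodMk_nhds ?_ ?_)
    · simpa using (hv.comp hl).const_mul e
    · simpa using (hw.comp hl).sub (((hx.comp hl).pow 2).const_mul (1 + k))
  have ltop := lim atTop atTop (tendsto_id.const_mul_atTop he) h.x_tendsto_top h.v_tendsto_top
    h.w_tendsto_top
  refine ⟨fun t => ⟨(dx t).congr_deriv (by ring), ?_, ?_⟩, ?_, ltop,
    lim atBot atBot (tendsto_id.const_mul_atBot he) h.x_tendsto_bot h.v_tendsto_bot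
      h.w_tendsto_bot⟩
  · refine ((dv t).const_mul e).congr_deriv ?_
    linear_combination (x (e * t) * (1 - w (e * t) + k * x (e * t) ^ 2)) * heL
  · refine ((dw t).fun_sub (((dx t).fun_pow 2).const_mul (1 + k))).congr_deriv ?_
    norm_num
    ring
  · by_contra! hc
    have hx : ∀ t, x (e * t) = x 0 := fun t => by
      have := congrArg Prod.fst (hc t 0)
      simpa using this
    have h1 : Tendsto (fun t => x (e * t)) atTop (nhds 0) :=
      h.x_tendsto_top.comp (tendsto_id.const_mul_atTop he)
    simp only [hx] at h1
    exact (h.x_pos 0).ne' (tendsto_nhds_unique tendsto_const_nhds h1)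

/-- Corollary 2 of the paper: along the path
λ(s) = s/√(1−s), α(s) = δ√(1−s), β ∈ (0, 2+δ), a homoclinic orbit exists. -/
theorem homoclinic_existence_path (δ b : ℝ) (hδ : δ ∈ Ioc (0 : ℝ) 1)
    (hb : b ∈ Ioo (0 : ℝ) (2 + δ)) :
    ∃ s₀ ∈ Ioo (0 : ℝ) 1, ∃ x ϑ u : ℝ → ℝ,
      IsHomoclinicToOrigin (s₀ / Real.sqrt (1 - s₀)) (δ * Real.sqrt (1 - s₀)) b x ϑ u := by
  have ha : Adm (b / 2 - 1) δ :=
    ⟨by linarith [hb.1], by linarith [hb.2], hδ.1, hδ.2⟩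
  obtain ⟨L, x, v, w, h⟩ := exists_entire ha
  have hL := h.L_pos
  have hL1 : 0 < 1 + L := by linarith
  have hs : 1 - L / (1 + L) = 1 / (1 + L) := by field_simp; ring
  set e := Real.sqrt (1 - L / (1 + L)) with he
  have he0 : 0 < e := Real.sqrt_pos.2 (by rw [hs]; positivity)
  have he2 : e ^ 2 = 1 / (1 + L) := by rw [he, Real.sq_sqrt (by rw [hs]; positivity), hs]
  have heL : e ^ 2 * (1 + L) = 1 := by rw [he2]; field_simp
  have h1 := h.homoclinic he0 heL
  have e1 : L / (1 + L) / e = e * L := by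
    rw [div_div, div_eq_iff (by positivity)]
    linear_combination -L * heL
  have e2 : 2 * (1 + (b / 2 - 1)) = b := by ring
  rw [e2, ← e1, he] at h1
  exact ⟨L / (1 + L), ⟨by positivity, (div_lt_one hL1).2 (by linarith)⟩, _, _, _, h1⟩
end

section
/- Let λ = 0, α > 0, β > 0. If (x, ϑ, u) : ℝ → ℝ³ is a nonconstant solution of the Lorenz-like system with lim_{t→−∞} (x(t), ϑ(t), u(t)) = (0,0,0), then ‖(x(t), ϑ(t), u(t))‖ → +∞ as t → +∞. -/
/-!
The function `W = ϑ² - x² + x⁴/2 - u²/b` satisfies `W' = (2a/b) u² ≥ 0` along solutions with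
`λ = 0`, and `W → 0` as `t → -∞`; hence `W ≥ 0`.

If the norm did not tend to infinity, the trajectory would return to some ball of radius `M` at
arbitrarily late times, so the monotone function `W` would converge to a finite limit `c`. In place
of an ω-limit point and the flow through it, the proof works with the filters
`atTop ⊓ 𝓟 {t | ‖γ t‖ ≤ M}` for all `M` at once: if a function of time tends to zero along all of
them and its derivative is a continuous function of the state, then the derivative does so too
(`VanishesOnBounded.deriv`). Applied to `W - c`, `u` and `xϑ` in turn, this shows that `u`, `xϑ`
and `(xϑ)'` all tend to zero at the returns to the ball. Consequently `ϑ² → 0` and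
`x² - x⁴ → 0` there, which forces `c = lim (-x⁴/2) ≤ 0`.

Thus `W` vanishes identically, hence so do `u` and `xϑ`, and `x²` is constant, equal to its limit
`0` at `-∞`. The solution is then constant, a contradiction.
-/

open Filter Set

open Topology

/-- `f t → 0` as `t → ∞` through the times at which the curve `γ` lies in the ball of radius `M`,
for every `M`. -/
def VanishesOnBounded {E : Type*} [NormedAddCommGroup E] (γ : ℝ → E) (f : ℝ → ℝ) : Prop :=
  ∀ M : ℝ, Tendsto f (atTop ⊓ 𝓟 {t | ‖γ t‖ ≤ M}) (𝓝 0)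

/-- Solutions of an autonomous equation move uniformly little in a short time after any visit to
a fixed ball. -/
lemma exists_uniform_short_time {E : Type*} [NormedAddCommGroup E] [NormedSpace ℝ E]
    [ProperSpace E] {F : E → E} (hF : Continuous F) {γ : ℝ → E}
    (hγ : ∀ t, HasDerivAt γ (F (γ t)) t) (M : ℝ) {η : ℝ} (hη : 0 < η) :
    ∃ δ > 0, ∀ t, ‖γ t‖ ≤ M → ∀ s ∈ Icc t (t + δ), ‖γ s - γ t‖ ≤ η := by
  obtain ⟨K, hK⟩ := (isCompact_closedBall (0 : E) (M + η)).exists_bound_of_continuousOn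
    hF.continuousOn
  have hL : 0 < |K| + 1 := by positivity
  refine ⟨η / (|K| + 1), by positivity, fun t ht s hs => ?_⟩
  have hsmall : ∀ r ∈ Icc t (t + η / (|K| + 1)), (|K| + 1) * (r - t) ≤ η := by
    intro r hr
    have h1 : r - t ≤ η / (|K| + 1) := by linarith [hr.2]
    calc (|K| + 1) * (r - t) ≤ (|K| + 1) * (η / (|K| + 1)) := by gcongr
      _ = η := by field_simp
  have hder : ∀ r, HasDerivAt (fun r => γ r - γ t) (F (γ r)) r := fun r =>
    (hγ r).sub_const _
  -- The linear bound with slope `|K| + 1` cannot be crossed: at a crossing the curve is still in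
  -- the ball of radius `M + η`, where its speed is at most `K`.
  have key := image_norm_le_of_norm_deriv_right_lt_deriv_boundary
    (f := fun r => γ r - γ t) (f' := fun r => F (γ r)) (a := t) (b := t + η / (|K| + 1))
    (B := fun r => (|K| + 1) * (r - t)) (B' := fun _ => |K| + 1)
    (fun r _ => (hder r).continuousAt.continuousWithinAt)
    (fun r _ => (hder r).hasDerivWithinAt) (by simp)
    (fun r => by simpa using ((hasDerivAt_id r).sub_const t).const_mul (|K| + 1))
    (by
      intro r hr hreq
      have h1 : ‖γ r - γ t‖ ≤ η := hreq ▸ hsmall r ⟨hr.1, hr.2.le⟩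
      have h2 : ‖γ r‖ ≤ M + η := by
        calc ‖γ r‖ = ‖γ t + (γ r - γ t)‖ := by rw [add_sub_cancel]
          _ ≤ ‖γ t‖ + ‖γ r - γ t‖ := norm_add_le _ _
          _ ≤ M + η := by linarith
      have h3 := hK (γ r) (by simpa using h2)
      linarith [le_abs_self K])
  exact (key hs).trans (hsmall s hs)

/-- By the mean value theorem `f'` at some time just after a visit to a ball is a difference
quotient of `f` over a fixed short step, hence small; uniform continuity of `g` carries this over
to the time of the visit itself. -/
lemma VanishesOnBounded.deriv {E : Type*} [NormedAddCommGroup E] [NormedSpace ℝ E]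
    [ProperSpace E] {F : E → E} (hF : Continuous F) {γ : ℝ → E}
    (hγ : ∀ t, HasDerivAt γ (F (γ t)) t) {f : ℝ → ℝ} (hf : VanishesOnBounded γ f)
    {g : E → ℝ} (hg : Continuous g) (hfg : ∀ t, HasDerivAt f (g (γ t)) t) :
    VanishesOnBounded γ (fun t => g (γ t)) := by
  intro M
  rw [Metric.tendsto_nhds]
  intro ε hε
  have huc := (isCompact_closedBall (0 : E) (M + 1)).uniformContinuousOn_of_continuous
    hg.continuousOn
  rw [Metric.uniformContinuousOn_iff] at huc
  obtain ⟨η, hη, hηg⟩ := huc (ε / 2) (by positivity)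
  obtain ⟨δ, hδ, hmove⟩ := exists_uniform_short_time hF hγ M
    (η := min 1 (η / 2)) (by positivity)
  have h1 := Metric.tendsto_nhds.1 (hf (M + 1)) (ε * δ / 4) (by positivity)
  rw [eventually_inf_principal, eventually_atTop] at h1
  obtain ⟨T, hT⟩ := h1
  rw [eventually_inf_principal, eventually_atTop]
  refine ⟨T, fun t ht htM => ?_⟩
  have htM' : ‖γ t‖ ≤ M := htM
  have hball : ∀ s ∈ Icc t (t + δ), ‖γ s‖ ≤ M + 1 := by
    intro s hs
    calc ‖γ s‖ = ‖γ t + (γ s - γ t)‖ := by rw [add_sub_cancel]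
      _ ≤ ‖γ t‖ + ‖γ s - γ t‖ := norm_add_le _ _
      _ ≤ M + 1 := by linarith [hmove t htM' s hs, min_le_left 1 (η / 2)]
  obtain ⟨ξ, hξ, hξe⟩ := exists_hasDerivAt_eq_slope f (fun t => g (γ t))
    (by linarith : t < t + δ) (fun s _ => (hfg s).continuousAt.continuousWithinAt)
    (fun s _ => hfg s)
  have hξ' : ξ ∈ Icc t (t + δ) := Ioo_subset_Icc_self hξ
  have hclose := hηg (γ ξ) (by simpa using hball ξ hξ') (γ t) (by simp; linarith) (by
    rw [dist_eq_norm]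
    linarith [hmove t htM' ξ hξ', min_le_right 1 (η / 2)])
  have e1 := hT t ht (by simp only [mem_ofPred_eq]; linarith)
  have e2 := hT (t + δ) (by linarith) (hball _ ⟨by linarith, le_rfl⟩)
  have hslope : |g (γ ξ)| < ε / 2 := by
    simp only [Real.dist_eq, sub_zero] at e1 e2
    rw [hξe, add_sub_cancel_left, abs_div, abs_of_pos hδ, div_lt_iff₀ hδ]
    linarith [abs_sub (f (t + δ)) (f t)]
  rw [Real.dist_eq] at hclose ⊢
  rw [abs_lt] at *
  constructor <;> linarith

/-- Lemma 1 of the paper: for λ = 0 the separatrix issuing from the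
origin tends to infinity as t → +∞. -/
theorem separatrix_tendsto_infinity (a b : ℝ) (ha : 0 < a) (hb : 0 < b)
    (x ϑ u : ℝ → ℝ)
    (hsol : IsSolution 0 a b x ϑ u)
    (hnonconst : ∃ t₁ t₂ : ℝ, (x t₁, ϑ t₁, u t₁) ≠ (x t₂, ϑ t₂, u t₂))
    (hlim : Tendsto (fun t => ((x t, ϑ t, u t) : ℝ × ℝ × ℝ)) atBot
      (nhds ((0 : ℝ), (0 : ℝ), (0 : ℝ)))) :
    Tendsto (fun t => ‖((x t, ϑ t, u t) : ℝ × ℝ × ℝ)‖) atTop atTop := by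
  have hx : ∀ t, HasDerivAt x (ϑ t) t := fun t => (hsol t).1
  have hϑ : ∀ t, HasDerivAt ϑ (-x t * u t + x t - x t ^ 3) t := fun t =>
    (hsol t).2.1.congr_deriv (by ring)
  have hu : ∀ t, HasDerivAt u (-a * u t - b * x t * ϑ t) t := fun t => (hsol t).2.2
  set γ : ℝ → ℝ × ℝ × ℝ := fun t => (x t, ϑ t, u t) with hγdef
  let F : ℝ × ℝ × ℝ → ℝ × ℝ × ℝ := fun p =>
    (p.2.1, -p.1 * p.2.2 + p.1 - p.1 ^ 3, -a * p.2.2 - b * p.1 * p.2.1)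
  have hF : Continuous F := by fun_prop
  have hγ : ∀ t, HasDerivAt γ (F (γ t)) t := fun t =>
    (hx t).prodMk ((hϑ t).prodMk (hu t))
  let w : ℝ × ℝ × ℝ → ℝ := fun p =>
    p.2.1 ^ 2 - p.1 ^ 2 + p.1 ^ 4 / 2 - p.2.2 ^ 2 / b
  have hw : Continuous w := by fun_prop
  have hW : ∀ t, HasDerivAt (fun t => w (γ t)) (2 * a / b * u t ^ 2) t := by
    intro t
    have h := ((((hϑ t).pow 2).sub ((hx t).pow 2)).add (((hx t).pow 4).div_const 2)).sub
      (((hu t).pow 2).div_const b)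
    refine h.congr_deriv ?_
    simp
    field_simp
    ring
  have hmono : Monotone (fun t => w (γ t)) :=
    monotone_of_hasDerivAt_nonneg hW (fun t => by positivity)
  have hWbot : Tendsto (fun t => w (γ t)) atBot (𝓝 0) := by
    have h := (hw.tendsto (0, 0, 0)).comp hlim
    simpa [w, Function.comp_def] using h
  have hWnn : ∀ t, 0 ≤ w (γ t) := fun t => hmono.le_of_tendsto hWbot t
  by_contra hcon
  obtain ⟨M, hM⟩ : ∃ M, ∃ᶠ t in atTop, ‖γ t‖ ≤ M := by
    rw [tendsto_atTop] at hcon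
    push Not at hcon
    obtain ⟨M, hM⟩ := hcon
    exact ⟨M, hM.mono fun t ht => ht.le⟩
  have hne : NeBot (atTop ⊓ 𝓟 {t | ‖γ t‖ ≤ M}) := frequently_mem_iff_neBot.1 hM
  -- `w` is bounded on the ball of radius `M`, to which the trajectory keeps returning.
  obtain ⟨c, hc⟩ : ∃ c, Tendsto (fun t => w (γ t)) atTop (𝓝 c) := by
    rcases tendsto_atTop_of_monotone hmono with h | h
    · exfalso
      obtain ⟨C, hC⟩ := (isCompact_closedBall (0 : ℝ × ℝ × ℝ) M).exists_bound_of_continuousOn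
        hw.continuousOn
      obtain ⟨t, ht, htC⟩ := (hM.and_eventually (h.eventually_gt_atTop C)).exists
      have := hC (γ t) (by simpa using ht)
      exact absurd htC (not_lt.2 ((le_abs_self _).trans this))
    · exact h
  have hV0 : VanishesOnBounded γ (fun t => w (γ t) - c) := fun N => by
    have h := hc.sub_const c
    rw [sub_self] at h
    exact h.mono_left inf_le_left
  have hV1 : VanishesOnBounded γ (fun t => 2 * a / b * u t ^ 2) :=
    hV0.deriv hF hγ (g := fun p => 2 * a / b * p.2.2 ^ 2) (by fun_prop)
      (fun t => (hW t).sub_const c)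
  have hVu : VanishesOnBounded γ u := by
    intro N
    have h := ((hV1 N).const_mul (b / (2 * a))).sqrt
    rw [mul_zero, Real.sqrt_zero] at h
    rw [tendsto_zero_iff_abs_tendsto_zero]
    refine h.congr fun t => ?_
    rw [show b / (2 * a) * (2 * a / b * u t ^ 2) = u t ^ 2 by field_simp, Real.sqrt_sq_eq_abs]
    rfl
  have hVu' : VanishesOnBounded γ (fun t => -a * u t - b * x t * ϑ t) :=
    hVu.deriv hF hγ (g := fun p => -a * p.2.2 - b * p.1 * p.2.1) (by fun_prop) hu
  have hVxϑ : VanishesOnBounded γ (fun t => x t * ϑ t) := by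
    intro N
    have h := (((hVu' N).add ((hVu N).const_mul a))).const_mul (-1 / b)
    simp only [mul_zero, add_zero] at h
    refine h.congr fun t => ?_
    field_simp
    ring
  have hVd : VanishesOnBounded γ
      (fun t => ϑ t * ϑ t + x t * (-x t * u t + x t - x t ^ 3)) :=
    hVxϑ.deriv hF hγ
      (g := fun p => p.2.1 * p.2.1 + p.1 * (-p.1 * p.2.2 + p.1 - p.1 ^ 3)) (by fun_prop)
      (fun t => (hx t).mul (hϑ t))
  set l := atTop ⊓ 𝓟 {t | ‖γ t‖ ≤ M} with hl
  have hbdd : ∀ g : ℝ × ℝ × ℝ → ℝ, Continuous g →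
      IsBoundedUnder (· ≤ ·) l (fun t => ‖g (γ t)‖) := by
    intro g hg
    obtain ⟨C, hC⟩ := (isCompact_closedBall (0 : ℝ × ℝ × ℝ) M).exists_bound_of_continuousOn
      hg.continuousOn
    refine ⟨C, ?_⟩
    rw [eventually_map, hl, eventually_inf_principal]
    exact Eventually.of_forall fun t ht => hC (γ t) (by simpa using ht)
  have hul : Tendsto u l (𝓝 0) := hVu M
  have hpl : Tendsto (fun t => x t * ϑ t) l (𝓝 0) := hVxϑ M
  have hdl := hVd M
  have hxxu : Tendsto (fun t => u t * x t ^ 2) l (𝓝 0) :=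
    hul.zero_mul_isBoundedUnder_le (hbdd (fun p => p.1 ^ 2) (by fun_prop))
  have huu : Tendsto (fun t => u t ^ 2 / b) l (𝓝 0) := by
    simpa using (hul.pow 2).div_const b
  have hD : Tendsto (fun t => ϑ t ^ 2 + x t ^ 2 - x t ^ 4) l (𝓝 0) := by
    have h := hdl.add hxxu
    rw [add_zero] at h
    exact h.congr fun t => by ring
  -- Multiplying `ϑ² + x² - x⁴ → 0` by `ϑ²` and discarding the multiples of `xϑ` leaves `ϑ⁴ → 0`.
  have hϑ4 : Tendsto (fun t => ϑ t ^ 4) l (𝓝 0) := by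
    have h1 := hD.zero_mul_isBoundedUnder_le (hbdd (fun p => p.2.1 ^ 2) (by fun_prop))
    have h2 := hpl.zero_mul_isBoundedUnder_le
      (hbdd (fun p => p.1 * p.2.1 - p.1 ^ 3 * p.2.1) (by fun_prop))
    have h := h1.sub h2
    rw [sub_zero] at h
    exact h.congr fun t => by simp only [hγdef]; ring
  have hϑ2 : Tendsto (fun t => ϑ t ^ 2) l (𝓝 0) := by
    have h := hϑ4.sqrt
    rw [Real.sqrt_zero] at h
    exact h.congr fun t => by
      rw [show ϑ t ^ 4 = (ϑ t ^ 2) ^ 2 by ring, Real.sqrt_sq (by positivity)]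
  have hx4 : Tendsto (fun t => -(x t ^ 4 / 2)) l (𝓝 c) := by
    have h := (((hc.mono_left (inf_le_left : l ≤ atTop)).add hD).sub
      (hϑ2.const_mul 2)).add huu
    simp only [add_zero, mul_zero, sub_zero] at h
    exact h.congr fun t => by simp only [hγdef, w]; ring
  have hc0 : c ≤ 0 := le_of_tendsto' hx4 fun t => by
    have : 0 ≤ x t ^ 4 / 2 := by positivity
    linarith
  have hW0 : (fun t => w (γ t)) = fun _ => 0 := funext fun t =>
    le_antisymm ((hmono.ge_of_tendsto hc t).trans hc0) (hWnn t)
  have hu0 : ∀ t, u t = 0 := fun t => by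
    have h := hW t
    rw [hW0] at h
    have h' := h.unique (hasDerivAt_const t 0)
    have hab : 2 * a / b ≠ 0 := by positivity
    simpa [hab, ha.ne', hb.ne'] using h'
  have hxϑ0 : ∀ t, x t * ϑ t = 0 := fun t => by
    have h := hu t
    rw [show u = fun _ => 0 from funext hu0] at h
    have h' := h.unique (hasDerivAt_const t 0)
    have h'' : b * (x t * ϑ t) = 0 := by linear_combination -h'
    exact (mul_eq_zero.1 h'').resolve_left hb.ne'
  have hx2 : ∀ t, HasDerivAt (fun t => x t ^ 2) 0 t := fun t =>
    ((hx t).pow 2).congr_deriv (by simpa [mul_assoc] using hxϑ0 t)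
  have hx0 : ∀ t, x t = 0 := fun t => by
    have hconst : ∀ s, x s ^ 2 = x t ^ 2 := fun s =>
      is_const_of_deriv_eq_zero (fun r => (hx2 r).differentiableAt)
        (fun r => (hx2 r).deriv) s t
    have h1 : Tendsto (fun s => x s ^ 2) atBot (𝓝 0) := by
      have hcont : Continuous (fun p : ℝ × ℝ × ℝ => p.1 ^ 2) := by fun_prop
      simpa [Function.comp_def, hγdef] using (hcont.tendsto (0, 0, 0)).comp hlim
    have h2 : x t ^ 2 = 0 :=
      tendsto_nhds_unique (tendsto_const_nhds.congr fun s => (hconst s).symm) h1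
    simpa using h2
  have hϑ0 : ∀ t, ϑ t = 0 := fun t => by
    have h := hx t
    rw [show x = fun _ => 0 from funext hx0] at h
    exact h.unique (hasDerivAt_const t 0)
  obtain ⟨t₁, t₂, hne⟩ := hnonconst
  exact hne (by simp [hx0, hϑ0, hu0])
end

section
/- Let λ ≥ 0, α > 0, β > 0, and let L > 0 satisfy L > (√(λ² + 4) − λ)/2 and K := β·L/(α + 2L) < 1; set M := 1 − K. Fix ϑ₀ > 0 and let x₀ be the positive root of ϑ₀² + x² − (M/2)·x⁴ = 0. Then there exists R > 0, depending only on λ, α, β, L, ϑ₀ (and in particular not on τ or on the solution), such that: for every τ ∈ ℝ and every nonconstant solution (x, ϑ, u) : ℝ → ℝ³ of the Lorenz-like system with lim_{t→−∞} (x(t), ϑ(t), u(t)) = (0,0,0) and x(t) ≥ 0 for all t ≤ τ, one has |x(t)| ≤ R, |ϑ(t)| ≤ R and |u(t)| ≤ R for all t ∈ (−∞, τ]. -/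
/-!
The proof is a sequence of barrier arguments, all of the same kind: if `G → g ≤ 0` as `t → -∞` and
`G' ≤ 0` wherever `G > 0`, then `G ≤ 0` (`nonpos_of_deriv_nonpos_of_pos`).

Write `K = bL/(a+2L)`, `M = 1 - K`. The condition on `L` says `1 - lam L - L² < 0`.

* As long as `1 - lam L - L² - u - x² < 0`, the barrier `G = ϑ - L x` gives `ϑ ≤ L x`, and then
  `G = -(u + K x²)` gives `u ≥ -K x²`. These imply `1 - lam L - L² - u - x² ≤ 1 - lam L - L² < 0`,
  so the condition, true near `-∞`, can never fail first (`lower_bound_u`).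
* The energy `ϑ² - x² + (M/2) x⁴` has derivative `-2 lam ϑ² - 2xϑ(u + K x²)`, nonpositive while
  `ϑ ≥ 0`; while `ϑ < 0`, `x` decreases. Hence `G = max(ϑ,0)² - x² + (M/2) x⁴` is a barrier, which
  gives `x² ≤ 2/M` and `ϑ² ≤ 2/M` when `ϑ ≥ 0`.
* `w = u + (b/2) x²` satisfies `w' = -a w + (ab/2) x²`, so `0 ≤ w ≤ b/M` and `|u| ≤ b/M`.
* With `ϑ' ≥ -lam ϑ - C` and `x ≤ X`, the barrier `G = max(-ϑ,0)² + 2C(x - X)` bounds `ϑ`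
  from below. No damping is needed here, so `lam = 0` is covered.
-/

open Filter Set

/-- Barrier principle on `(-∞, τ]`: a function with a nonpositive limit at `-∞` that cannot increase
while positive stays nonpositive. -/
lemma nonpos_of_deriv_nonpos_of_pos {G G' : ℝ → ℝ} {τ : ℝ}
    (hd : ∀ t, HasDerivAt G (G' t) t)
    (hlim : ∃ l ≤ 0, Tendsto G atBot (nhds l))
    (h : ∀ t ≤ τ, 0 < G t → G' t ≤ 0) : ∀ t ≤ τ, G t ≤ 0 := by
  intro t₁ ht₁
  by_contra! hpos
  obtain ⟨l, hl, hlim⟩ := hlim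
  obtain ⟨t₀, h₀, h₀₁⟩ := ((hlim.eventually_lt_const (by linarith : l < G t₁ / 2)).and
    (eventually_le_atBot t₁)).exists
  have hcont : Continuous G := continuous_iff_continuousAt.2 fun t => (hd t).continuousAt
  -- the last time in `[t₀, t₁]` at which `G` is at most half its final value
  have hcomp : IsCompact (Icc t₀ t₁ ∩ {t | G t ≤ G t₁ / 2}) :=
    isCompact_Icc.inter_right (isClosed_le hcont continuous_const)
  obtain ⟨s, ⟨⟨hs₀, hs₁⟩, hsG⟩, hsmax⟩ :=
    hcomp.exists_isGreatest ⟨t₀, ⟨le_rfl, h₀₁⟩, h₀.le⟩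
  have hanti : AntitoneOn G (Icc s t₁) := by
    refine antitoneOn_of_deriv_nonpos (convex_Icc _ _) hcont.continuousOn
      (fun t _ => (hd t).differentiableAt.differentiableWithinAt) ?_
    intro t ht
    rw [interior_Icc] at ht
    rw [(hd t).deriv]
    refine h t (ht.2.le.trans ht₁) ?_
    by_contra! hle
    have : t ≤ s := hsmax ⟨⟨hs₀.trans ht.1.le, ht.2.le⟩, by
      simp only [mem_ofPred_eq]; linarith⟩
    linarith [ht.1]
  have := hanti (left_mem_Icc.2 hs₁) (right_mem_Icc.2 hs₁) hs₁
  simp only [mem_ofPred_eq] at hsG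
  linarith

lemma hasDerivAt_max_zero_sq (r : ℝ) :
    HasDerivAt (fun s : ℝ => (max s 0) ^ 2) (2 * max r 0) r := by
  rcases lt_trichotomy r 0 with hr | rfl | hr
  · rw [max_eq_right hr.le, mul_zero]
    refine (hasDerivAt_const r (0 : ℝ)).congr_of_eventuallyEq ?_
    filter_upwards [eventually_lt_nhds hr] with s hs
    simp [max_eq_right hs.le]
  · rw [max_self, mul_zero, hasDerivAt_iff_isLittleO]
    have hbig : (fun s : ℝ => (max s 0) ^ 2) =O[nhds 0] fun s : ℝ => s ^ 2 := by
      refine Asymptotics.isBigO_of_le _ fun s => ?_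
      rw [norm_pow, norm_pow]
      refine pow_le_pow_left₀ (norm_nonneg _) ?_ 2
      rcases le_total s 0 with hs | hs <;> simp [hs]
    have := hbig.trans_isLittleO (Asymptotics.isLittleO_pow_id (𝕜 := ℝ) one_lt_two)
    simpa using this
  · rw [max_eq_left hr.le]
    have := (hasDerivAt_id r).pow 2
    refine (this.congr_deriv (by simp)).congr_of_eventuallyEq ?_
    filter_upwards [eventually_gt_nhds hr] with s hs
    simp [max_eq_left (le_of_lt hs)]

/-- The bound `u ≥ -K x²` holds as long as `x ≥ 0`; it comes together with `ϑ ≤ L x`. -/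
lemma lower_bound_u {lam a b L τ : ℝ} {x ϑ u : ℝ → ℝ}
    (hlam : 0 ≤ lam) (ha : 0 < a) (hb : 0 < b) (hL : 0 < L)
    (hc : 1 - lam * L - L ^ 2 < 0) (hK : b * L / (a + 2 * L) < 1)
    (hsol : IsSolution lam a b x ϑ u)
    (hx : Tendsto x atBot (nhds 0)) (hϑ : Tendsto ϑ atBot (nhds 0))
    (hu : Tendsto u atBot (nhds 0)) (hpos : ∀ t ≤ τ, 0 ≤ x t) :
    ∀ t ≤ τ, 0 ≤ u t + b * L / (a + 2 * L) * x t ^ 2 := by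
  have hden : 0 < a + 2 * L := by positivity
  set K := b * L / (a + 2 * L) with hKdef
  have hKeq : K * (a + 2 * L) = b * L := by rw [hKdef]; field_simp
  have step : ∀ T ≤ τ, (∀ t < T, 1 - lam * L - L ^ 2 - u t - x t ^ 2 < 0) →
      ∀ t < T, 0 ≤ u t + K * x t ^ 2 := by
    intro T hT hB t ht
    have hy : ∀ s ≤ t, ϑ s - L * x s ≤ 0 := by
      refine nonpos_of_deriv_nonpos_of_pos
        (fun s => (hsol s).2.1.sub ((hsol s).1.const_mul L))
        ⟨0, le_rfl, by simpa using hϑ.sub (hx.const_mul L)⟩ ?_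
      intro s hs hsp
      have h1 := mul_nonneg (hpos s (by linarith)) (neg_nonneg.2 (hB s (by linarith)).le)
      have h2 := mul_nonneg (add_nonneg hlam hL.le) hsp.le
      nlinarith
    have hv : ∀ s ≤ t, -(u s + K * x s ^ 2) ≤ 0 := by
      refine nonpos_of_deriv_nonpos_of_pos
        (fun s => ((hsol s).2.2.add (((hsol s).1.pow 2).const_mul K)).neg)
        ⟨0, le_rfl, by simpa using (hu.add ((hx.pow 2).const_mul K)).neg⟩ ?_
      intro s hs hsp
      have h1 : 0 ≤ x s * (L * x s - ϑ s) :=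
        mul_nonneg (hpos s (by linarith)) (by linarith [hy s hs])
      -- `L (b - 2K) = a K`, so the forcing term of `u + K x²` is `(b - 2K) x (L x - ϑ) ≥ 0`
      have hbK : 0 < b - 2 * K := by
        have : (b - 2 * K) * (a + 2 * L) = a * b := by linear_combination -2 * hKeq
        by_contra! hneg
        nlinarith [mul_pos ha hb]
      have h2 := mul_nonneg hbK.le h1
      have h3 : 0 < a * (-(u s + K * x s ^ 2)) := mul_pos ha hsp
      have h4 : (b - 2 * K) * (x s * (L * x s - ϑ s))
          = a * K * x s ^ 2 - (b - 2 * K) * x s * ϑ s := by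
        linear_combination (-(x s) ^ 2) * hKeq
      simp only [Nat.cast_ofNat, Nat.add_one_sub_one, pow_one]
      nlinarith
    linarith [hv t le_rfl]
  have hxc : Continuous x := continuous_iff_continuousAt.2 fun t => (hsol t).1.continuousAt
  have huc : Continuous u := continuous_iff_continuousAt.2 fun t => (hsol t).2.2.continuousAt
  have hBall : ∀ t ≤ τ, 1 - lam * L - L ^ 2 - u t - x t ^ 2 < 0 := by
    intro t₁ ht₁
    by_contra! hbad
    have hBlim : Tendsto (fun t => 1 - lam * L - L ^ 2 - u t - x t ^ 2) atBot
        (nhds (1 - lam * L - L ^ 2)) := by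
      simpa using ((tendsto_const_nhds (x := 1 - lam * L - L ^ 2)).sub hu).sub (hx.pow 2)
    obtain ⟨t₀, h₀⟩ := eventually_atBot.1 (hBlim.eventually_lt_const hc)
    -- the first time at which the condition fails
    have hcomp : IsCompact (Icc t₀ t₁ ∩ {t | 0 ≤ 1 - lam * L - L ^ 2 - u t - x t ^ 2}) :=
      isCompact_Icc.inter_right (isClosed_le continuous_const (by fun_prop))
    have h₀₁ : t₀ ≤ t₁ := by
      by_contra! hlt
      linarith [h₀ t₁ hlt.le]
    obtain ⟨s, ⟨⟨hs₀, hs₁⟩, hsB⟩, hsmin⟩ := hcomp.exists_isLeast ⟨t₁, ⟨h₀₁, le_rfl⟩, hbad⟩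
    have hbefore : ∀ t < s, 1 - lam * L - L ^ 2 - u t - x t ^ 2 < 0 := by
      intro t ht
      rcases le_total t t₀ with h | h
      · exact h₀ t h
      · by_contra! hge
        have : s ≤ t := hsmin ⟨⟨h, ht.le.trans hs₁⟩, hge⟩
        linarith
    have hvs : 0 ≤ u s + K * x s ^ 2 := by
      have hmem : s ∈ closure (Iio s) := by simp
      exact closure_minimal (s := Iio s) (t := {t | 0 ≤ u t + K * x t ^ 2})
        (fun t ht => step s (hs₁.trans ht₁) hbefore t ht)
        (isClosed_le continuous_const (by fun_prop)) hmem
    simp only [mem_ofPred_eq] at hsB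
    nlinarith [mul_nonneg (sub_nonneg.2 hK.le) (sq_nonneg (x s))]
  intro t ht
  have hmem : t ∈ closure (Iio t) := by simp
  exact closure_minimal (s := Iio t) (t := {t | 0 ≤ u t + K * x t ^ 2})
    (fun s hs => step t ht (fun r hr => hBall r (hr.le.trans ht)) s hs)
    (isClosed_le continuous_const (by fun_prop)) hmem

/-- Energy barrier. The energy is truncated to `max ϑ 0` because the true one may grow while
`ϑ < 0`; in that phase `x` decreases, which is what keeps the truncated one nonpositive. -/
lemma energy_nonpos {lam a b K τ : ℝ} {x ϑ u : ℝ → ℝ}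
    (hlam : 0 ≤ lam) (hK : K < 1)
    (hsol : IsSolution lam a b x ϑ u)
    (hx : Tendsto x atBot (nhds 0)) (hϑ : Tendsto ϑ atBot (nhds 0))
    (hpos : ∀ t ≤ τ, 0 ≤ x t) (hv : ∀ t ≤ τ, 0 ≤ u t + K * x t ^ 2) :
    ∀ t ≤ τ, (max (ϑ t) 0) ^ 2 - x t ^ 2 + (1 - K) / 2 * x t ^ 4 ≤ 0 := by
  have hM : 0 < 1 - K := by linarith
  refine nonpos_of_deriv_nonpos_of_pos
    (fun s => (((hasDerivAt_max_zero_sq (ϑ s)).comp s (hsol s).2.1).sub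
      ((hsol s).1.pow 2)).add (((hsol s).1.pow 4).const_mul ((1 - K) / 2)))
    ⟨0, le_rfl, by
      simpa using (((hϑ.max (tendsto_const_nhds (x := (0 : ℝ)))).pow 2).sub (hx.pow 2)).add
        ((hx.pow 4).const_mul ((1 - K) / 2))⟩ ?_
  intro s hs hG
  have hxs := hpos s hs
  simp only [Nat.cast_ofNat, Nat.add_one_sub_one, pow_one]
  rcases le_total (ϑ s) 0 with h | h
  · rw [max_eq_right h] at hG ⊢
    -- positivity of the potential forces `M x² > 2`, where it is increasing in `x`
    have h1 : 2 < (1 - K) * x s ^ 2 := by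
      by_contra! hle
      nlinarith [mul_nonneg (sq_nonneg (x s)) (sub_nonneg.2 hle)]
    have h2 : 0 ≤ x s * ((1 - K) * x s ^ 2 - 1) := mul_nonneg hxs (by linarith)
    nlinarith [mul_nonneg h2 (neg_nonneg.2 h)]
  · rw [max_eq_left h]
    have h1 := mul_nonneg (mul_nonneg hxs h) (hv s hs)
    have h2 := mul_nonneg hlam (sq_nonneg (ϑ s))
    nlinarith

/-- Lemma 2 of the paper: while the positive outgoing separatrix stays
in the half-space x ≥ 0, it stays in a bounded region of size independent of τ and of
the solution. Here K := βL/(α+2L) and M := 1 − K. -/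
theorem separatrix_bounded (lam a b L ϑ₀ x₀ : ℝ)
    (hlam : 0 ≤ lam) (ha : 0 < a) (hb : 0 < b)
    (hL : 0 < L) (hL2 : L > (Real.sqrt (lam ^ 2 + 4) - lam) / 2)
    (hK : b * L / (a + 2 * L) < 1)
    (hϑ₀ : 0 < ϑ₀) (hx₀ : 0 < x₀)
    (hx₀root : ϑ₀ ^ 2 + x₀ ^ 2 - ((1 - b * L / (a + 2 * L)) / 2) * x₀ ^ 4 = 0) :
    ∃ R > (0 : ℝ), ∀ τ : ℝ, ∀ x ϑ u : ℝ → ℝ,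
      IsSolution lam a b x ϑ u →
      (∃ t₁ t₂ : ℝ, (x t₁, ϑ t₁, u t₁) ≠ (x t₂, ϑ t₂, u t₂)) →
      Tendsto (fun t => ((x t, ϑ t, u t) : ℝ × ℝ × ℝ)) atBot
        (nhds ((0 : ℝ), (0 : ℝ), (0 : ℝ))) →
      (∀ t ≤ τ, 0 ≤ x t) →
      ∀ t ≤ τ, |x t| ≤ R ∧ |ϑ t| ≤ R ∧ |u t| ≤ R := by
  have hden : 0 < a + 2 * L := by positivity
  have hc : 1 - lam * L - L ^ 2 < 0 := by
    have h1 : Real.sqrt (lam ^ 2 + 4) < 2 * L + lam := by linarith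
    have h2 := (Real.sqrt_lt' (by positivity)).1 h1
    nlinarith
  set K := b * L / (a + 2 * L) with hKdef
  have hM : 0 < 1 - K := by linarith
  set X := Real.sqrt (2 / (1 - K)) with hX
  have hX0 : 0 ≤ X := Real.sqrt_nonneg _
  have hXsq : X ^ 2 = 2 / (1 - K) := Real.sq_sqrt (by positivity)
  set U := b / (1 - K) with hU
  have hU0 : 0 < U := by positivity
  have hUX : U = b / 2 * X ^ 2 := by rw [hXsq, hU]; field_simp
  set C := X * (U + X ^ 2) with hC
  have hC0 : 0 ≤ C := by positivity
  refine ⟨X + U + Real.sqrt (2 * C * X), by positivity, ?_⟩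
  intro τ x ϑ u hsol _ hlim hpos
  have hx : Tendsto x atBot (nhds 0) := (continuous_fst.tendsto _).comp hlim
  have hϑ : Tendsto ϑ atBot (nhds 0) :=
    ((continuous_fst.comp continuous_snd).tendsto _).comp hlim
  have hu : Tendsto u atBot (nhds 0) :=
    ((continuous_snd.comp continuous_snd).tendsto _).comp hlim
  have hv := lower_bound_u hlam ha hb hL hc hK hsol hx hϑ hu hpos
  have hE := energy_nonpos hlam hK hsol hx hϑ hpos hv
  have hxsq : ∀ t ≤ τ, x t ^ 2 ≤ X ^ 2 := by
    intro t ht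
    rw [hXsq, le_div_iff₀ hM]
    by_contra! hgt
    have hx2 : 0 < x t ^ 2 := by
      by_contra! hle
      have : x t ^ 2 = 0 := le_antisymm hle (sq_nonneg _)
      rw [this] at hgt
      linarith
    nlinarith [hE t ht, sq_nonneg (max (ϑ t) 0), mul_pos hx2 (sub_pos.2 hgt)]
  have hxX : ∀ t ≤ τ, x t ≤ X := fun t ht => le_of_abs_le (abs_le_of_sq_le_sq (hxsq t ht) hX0)
  have hϑX : ∀ t ≤ τ, ϑ t ≤ X := by
    intro t ht
    have h1 : (max (ϑ t) 0) ^ 2 ≤ X ^ 2 := by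
      have : 0 ≤ (1 - K) / 2 * x t ^ 4 := by positivity
      linarith [hE t ht, hxsq t ht]
    exact (le_max_left _ _).trans (le_of_abs_le (abs_le_of_sq_le_sq h1 hX0))
  have hw0 : ∀ t ≤ τ, -(u t + b / 2 * x t ^ 2) ≤ 0 := by
    refine nonpos_of_deriv_nonpos_of_pos
      (fun s => ((hsol s).2.2.add (((hsol s).1.pow 2).const_mul (b / 2))).neg)
      ⟨0, le_rfl, by simpa using (hu.add ((hx.pow 2).const_mul (b / 2))).neg⟩ ?_
    intro s hs hsp
    have h3 : 0 < a * (-(u s + b / 2 * x s ^ 2)) := mul_pos ha hsp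
    have h4 : 0 ≤ a * (b / 2 * x s ^ 2) := by positivity
    simp only [Nat.cast_ofNat, Nat.add_one_sub_one, pow_one]
    nlinarith
  have hw1 : ∀ t ≤ τ, (u t + b / 2 * x t ^ 2) - U ≤ 0 := by
    refine nonpos_of_deriv_nonpos_of_pos
      (fun s => ((hsol s).2.2.add (((hsol s).1.pow 2).const_mul (b / 2))).sub_const U)
      ⟨-U, by linarith, by
        simpa using (hu.add ((hx.pow 2).const_mul (b / 2))).sub_const U⟩ ?_
    intro s hs hsp
    have h3 : 0 < a * (u s + b / 2 * x s ^ 2 - U) := mul_pos ha hsp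
    have h4 : 0 ≤ a * (b / 2 * (X ^ 2 - x s ^ 2)) :=
      mul_nonneg ha.le (mul_nonneg (by positivity) (sub_nonneg.2 (hxsq s hs)))
    rw [hUX] at h3
    simp only [Nat.cast_ofNat, Nat.add_one_sub_one, pow_one]
    nlinarith
  have huU : ∀ t ≤ τ, u t ≤ U := by
    intro t ht
    have : 0 ≤ b / 2 * x t ^ 2 := by positivity
    linarith [hw1 t ht]
  have hϑlow : ∀ t ≤ τ, (max (-ϑ t) 0) ^ 2 + 2 * C * (x t - X) ≤ 0 := by
    refine nonpos_of_deriv_nonpos_of_pos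
      (fun s => ((hasDerivAt_max_zero_sq (-ϑ s)).comp s (hsol s).2.1.neg).add
        (((hsol s).1.sub_const X).const_mul (2 * C)))
      ⟨2 * C * (0 - X), by nlinarith [mul_nonneg hC0 hX0], by
        simpa using ((hϑ.neg.max (tendsto_const_nhds (x := (0 : ℝ)))).pow 2).add
          ((hx.sub_const X).const_mul (2 * C))⟩ ?_
    intro s hs hG
    rcases le_total (-ϑ s) 0 with h | h
    · -- impossible: for `ϑ ≥ 0` the barrier function reduces to `2C(x - X) ≤ 0`
      rw [max_eq_right h] at hG
      nlinarith [mul_nonneg hC0 (sub_nonneg.2 (hxX s hs))]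
    · rw [max_eq_left h]
      have hforce : 0 ≤ x s * (1 - u s - x s ^ 2) + C := by
        have h1 : 0 ≤ x s * (U - u s + (X ^ 2 - x s ^ 2)) :=
          mul_nonneg (hpos s hs) (by linarith [huU s hs, hxsq s hs])
        have h2 : 0 ≤ (X - x s) * (U + X ^ 2) :=
          mul_nonneg (by linarith [hxX s hs]) (by positivity)
        rw [hC]
        nlinarith [hpos s hs]
      have h1 := mul_nonneg h hforce
      have h2 := mul_nonneg hlam (sq_nonneg (ϑ s))
      clear_value C
      linarith
  intro t ht
  have hS := Real.sqrt_nonneg (2 * C * X)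
  refine ⟨?_, ?_, ?_⟩
  · rw [abs_of_nonneg (hpos t ht)]
    linarith [hxX t ht]
  · have h1 : -ϑ t ≤ Real.sqrt (2 * C * X) := by
      refine (le_max_left _ 0).trans (Real.le_sqrt_of_sq_le ?_)
      nlinarith [hϑlow t ht, mul_nonneg hC0 (hpos t ht)]
    rw [abs_le]
    constructor <;> linarith [hϑX t ht]
  · have h1 : b / 2 * x t ^ 2 ≤ U := by
      rw [hUX]
      exact mul_le_mul_of_nonneg_left (hxsq t ht) (by positivity)
    rw [abs_le]
    constructor <;> linarith [huU t ht, hw0 t ht]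
end

section
/- Let λ ≥ 0, α > 0, β > 0 satisfy α·(√(λ² + 4) + λ) > 2·(β − 2), let L > 0 satisfy L > (√(λ² + 4) − λ)/2 and K := β·L/(α + 2L) < 1, set M := 1 − K, fix ϑ₀ > 0, and let x₀ be the positive root of ϑ₀² + x² − (M/2)·x⁴ = 0. Assume moreover λ² > 4·((1 + β/2)·x₀² − 1). Then every nonconstant solution (x, ϑ, u) : ℝ → ℝ³ of the Lorenz-like system with lim_{t→−∞} (x(t), ϑ(t), u(t)) = (0,0,0) and x(t) > 0 for all t in some interval (−∞, τ₀) satisfies x(t) > 0 for all t ∈ ℝ. -/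
/-!
Every estimate is a linear differential inequality `f' ≤ -c f` on a half-line `(-∞, T]`: since
`f · exp (c t)` is then nonincreasing, boundedness of `f` at `-∞` gives `f ≤ 0` when `c > 0`
(`nonpos_of_deriv_le`), and a negative value of `f` stays negative (`neg_of_deriv_le`).

Write `K = βL/(α+2L)`, `M = 1 - K` and `d = L² + λL - 1 > 0`. The core is a bootstrap
(`bootstrap_step`): suppose `0 < x < x₀` and `u + x² > -d` on `(-∞, T)`. Then, in turn,

* `ϑ ≤ L x`, from `z = ϑ - L x`, `z' = -(λ+L) z - x (d + u + x²)`;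
* `u ≥ -K x²`, from `v = u + K x²`, `v' = -α v + αβ/(α+2L) · x (L x - ϑ)`;
* `u ≤ (β/2)(x₀² - x²)`, from `w = u + (β/2) x²`, `w' = -α w + (αβ/2) x²`;
* `p = ϑ + (λ/2) x ≥ 0`, from `p' = -(λ/2) p + x (λ²/4 + 1 - u - x²)`, where the largeness of `λ`
  makes the last factor positive;
* `p ≤ (λ/2) x₀`, from the same equation, `u ≥ -K x²` and `M x₀² > 2`.

The two bounds on `p` say `x' ≥ -(λ/2) x` and `(x - x₀)' ≤ -(λ/2)(x - x₀)`, so `0 < x < x₀` also at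
time `T`, and `u + x² ≥ M x² > -d` there. Hence there is no first time at which these three strict
inequalities fail.
-/

open Filter Set

lemma mul_exp_antitone {f f' : ℝ → ℝ} {c T : ℝ} (hf : ∀ t, HasDerivAt f (f' t) t)
    (h : ∀ t < T, f' t ≤ -c * f t) :
    AntitoneOn (fun t => f t * Real.exp (c * t)) (Iic T) := by
  have hd : ∀ t, HasDerivAt (fun t => f t * Real.exp (c * t))
      (f' t * Real.exp (c * t) + f t * (Real.exp (c * t) * (c * 1))) t := fun t =>
    (hf t).mul (((hasDerivAt_id t).const_mul c).exp)
  apply antitoneOn_of_deriv_nonpos (convex_Iic T)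
  · exact fun t _ => (hd t).continuousAt.continuousWithinAt
  · exact fun t _ => (hd t).differentiableAt.differentiableWithinAt
  · intro t ht
    rw [interior_Iic] at ht
    rw [(hd t).deriv]
    have := h t ht
    have he := Real.exp_pos (c * t)
    have : (f' t + c * f t) * Real.exp (c * t) ≤ 0 :=
      mul_nonpos_of_nonpos_of_nonneg (by linarith) he.le
    linarith

/-- A function that converges at `-∞` and satisfies `f' ≤ -c f` with `c > 0` is nonpositive:
`f · exp (c t)` is nonincreasing and tends to `0` at `-∞`. -/
lemma nonpos_of_deriv_le {f f' : ℝ → ℝ} {c T l : ℝ} (hc : 0 < c)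
    (hf : ∀ t, HasDerivAt f (f' t) t) (hl : Tendsto f atBot (nhds l))
    (h : ∀ t < T, f' t ≤ -c * f t) : ∀ t ≤ T, f t ≤ 0 := by
  intro t ht
  have hanti := mul_exp_antitone hf h
  have h0 : Tendsto (fun t => f t * Real.exp (c * t)) atBot (nhds (l * 0)) :=
    hl.mul (Real.tendsto_exp_atBot.comp (tendsto_id.const_mul_atBot hc))
  rw [mul_zero] at h0
  have hle : f t * Real.exp (c * t) ≤ 0 := by
    refine ge_of_tendsto h0 ?_
    filter_upwards [eventually_le_atBot t] with s hs
    exact hanti (hs.trans ht) ht hs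
  exact nonpos_of_mul_nonpos_left hle (Real.exp_pos _)

lemma neg_of_deriv_le {f f' : ℝ → ℝ} {c T s : ℝ}
    (hf : ∀ t, HasDerivAt f (f' t) t) (h : ∀ t < T, f' t ≤ -c * f t)
    (hs : s ≤ T) (hneg : f s < 0) : f T < 0 := by
  have h1 : f T * Real.exp (c * T) ≤ f s * Real.exp (c * s) :=
    mul_exp_antitone hf h hs self_mem_Iic hs
  have h2 : f s * Real.exp (c * s) < 0 := mul_neg_of_neg_of_pos hneg (Real.exp_pos _)
  exact neg_of_mul_neg_left (h1.trans_lt h2) (Real.exp_pos _).le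

/-- The cubic inequality behind the bound `p ≤ (λ/2) x₀`, where `p = ϑ + (λ/2) x`. -/
lemma cubic_bound {M X q y : ℝ} (hX : 0 < X) (hMX : 2 < M * X ^ 2)
    (hq : 1 ≤ q) (hy : 0 ≤ y) (hyX : y ≤ X) : y * (1 - M * y ^ 2) ≤ q * (X - y) := by
  have h1 : 0 ≤ X ^ 3 - 2 * y * X ^ 2 + 2 * y ^ 3 := by
    -- `2s³ - 2s + 1 > 0` for `s ≥ 0`; the minimum is near `s = 3/5`
    have e1 : 0 ≤ (y + 6 / 5 * X) * (y - 3 / 5 * X) ^ 2 := by positivity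
    have e2 : 0 ≤ y * X ^ 2 := by positivity
    have e3 : 0 ≤ X ^ 3 := by positivity
    nlinarith
  have h2 : y ^ 3 * 2 ≤ y ^ 3 * (M * X ^ 2) :=
    mul_le_mul_of_nonneg_left hMX.le (by positivity)
  have h3 : 0 ≤ X ^ 2 * (X - y - y * (1 - M * y ^ 2)) := by nlinarith
  have h4 : 0 ≤ X - y - y * (1 - M * y ^ 2) := nonneg_of_mul_nonneg_right h3 (by positivity)
  nlinarith [mul_nonneg (sub_nonneg.2 hq) (sub_nonneg.2 hyX)]

/-- If `0 < x < x₀` and `u + x² > -(L² + λL - 1)` hold before time `T`, they hold at `T`. -/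
lemma bootstrap_step {lam a b L K x₀ T s₀ : ℝ} {x ϑ u : ℝ → ℝ}
    (hlam : 0 < lam) (ha : 0 < a) (hb : 0 < b) (hL : 0 < L)
    (hd : 0 < L ^ 2 + lam * L - 1) (hKdef : K * (a + 2 * L) = b * L) (hK1 : K < 1)
    (hx₀ : 0 < x₀) (hMX : 2 < (1 - K) * x₀ ^ 2) (hq : 1 ≤ lam ^ 2 / 4)
    (hlam2 : lam ^ 2 > 4 * ((1 + b / 2) * x₀ ^ 2 - 1))
    (hsol : IsSolution lam a b x ϑ u)
    (lx : Tendsto x atBot (nhds 0)) (lϑ : Tendsto ϑ atBot (nhds 0))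
    (lu : Tendsto u atBot (nhds 0))
    (hs₀ : s₀ ≤ T) (hs₀pos : 0 < x s₀) (hs₀lt : x s₀ < x₀)
    (hgood : ∀ t < T, 0 < x t ∧ x t < x₀ ∧ -(L ^ 2 + lam * L - 1) < u t + x t ^ 2) :
    0 < x T ∧ x T < x₀ ∧ -(L ^ 2 + lam * L - 1) < u T + x T ^ 2 := by
  have dx : ∀ t, HasDerivAt x (ϑ t) t := fun t => (hsol t).1
  have dϑ : ∀ t, HasDerivAt ϑ (-lam * ϑ t - x t * u t + x t - (x t) ^ 3) t := fun t => (hsol t).2.1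
  have du : ∀ t, HasDerivAt u (-a * u t - b * x t * ϑ t) t := fun t => (hsol t).2.2
  have dx2 : ∀ t, HasDerivAt (fun t => x t ^ 2) (2 * x t * ϑ t) t := fun t => by
    simpa [Pi.pow_def] using (dx t).pow 2
  have lx2 : Tendsto (fun t => x t ^ 2) atBot (nhds (0 ^ 2)) := lx.pow 2
  have hz : ∀ t ≤ T, ϑ t - L * x t ≤ 0 := by
    refine nonpos_of_deriv_le (c := lam + L) (by positivity)
      (fun t => (dϑ t).sub ((dx t).const_mul L)) (lϑ.sub (lx.const_mul L)) ?_
    intro t ht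
    obtain ⟨h1, -, h3⟩ := hgood t ht
    have := mul_nonneg h1.le (by linarith : 0 ≤ u t + x t ^ 2 + (L ^ 2 + lam * L - 1))
    linarith
  have hv : ∀ t ≤ T, -(u t + K * x t ^ 2) ≤ 0 := by
    refine nonpos_of_deriv_le (c := a) ha
      (fun t => ((du t).add ((dx2 t).const_mul K)).neg) (lu.add (lx2.const_mul K)).neg ?_
    intro t ht
    obtain ⟨h1, -, -⟩ := hgood t ht
    have h2 := hz t ht.le
    have h3 : 0 ≤ (a * K) * (x t * (L * x t - ϑ t)) := by
      have : 0 < K := by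
        have : 0 < K * (a + 2 * L) := by rw [hKdef]; positivity
        exact pos_of_mul_pos_left this (by positivity)
      have := mul_nonneg h1.le (by linarith : 0 ≤ L * x t - ϑ t)
      positivity
    -- after multiplication by `L`, the inhomogeneous term is `αK x (L x - ϑ)`
    have h4 : L * (-(-a * u t - b * x t * ϑ t + K * (2 * x t * ϑ t)))
        = L * (-a * -(u t + K * x t ^ 2)) - (a * K) * (x t * (L * x t - ϑ t)) := by
      linear_combination (-(x t * ϑ t)) * hKdef
    exact le_of_mul_le_mul_left (by rw [h4]; linarith) hL
  have hw : ∀ t ≤ T, u t + b / 2 * x t ^ 2 - b / 2 * x₀ ^ 2 ≤ 0 := by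
    refine nonpos_of_deriv_le (c := a) ha
      (fun t => ((du t).add ((dx2 t).const_mul (b / 2))).sub_const _)
      ((lu.add (lx2.const_mul (b / 2))).sub_const _) ?_
    intro t ht
    obtain ⟨h1, h2, -⟩ := hgood t ht
    have h3 : x t ^ 2 ≤ x₀ ^ 2 := by gcongr
    have := mul_le_mul_of_nonneg_left h3 (by positivity : 0 ≤ a * b / 2)
    linarith
  have hp : ∀ t ≤ T, -(ϑ t + lam / 2 * x t) ≤ 0 := by
    refine nonpos_of_deriv_le (c := lam / 2) (by positivity)
      (fun t => ((dϑ t).add ((dx t).const_mul (lam / 2))).neg)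
      (lϑ.add (lx.const_mul (lam / 2))).neg ?_
    intro t ht
    obtain ⟨h1, h2, -⟩ := hgood t ht
    have h3 : x t ^ 2 ≤ x₀ ^ 2 := by gcongr
    have h4 := hw t ht.le
    have h5 : 0 ≤ b / 2 * x t ^ 2 := by positivity
    have := mul_nonneg h1.le (by linarith : 0 ≤ lam ^ 2 / 4 + 1 - u t - x t ^ 2)
    linarith
  have hp' : ∀ t ≤ T, ϑ t + lam / 2 * x t - lam / 2 * x₀ ≤ 0 := by
    refine nonpos_of_deriv_le (c := lam / 2) (by positivity)
      (fun t => ((dϑ t).add ((dx t).const_mul (lam / 2))).sub_const _)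
      ((lϑ.add (lx.const_mul (lam / 2))).sub_const _) ?_
    intro t ht
    obtain ⟨h1, h2, -⟩ := hgood t ht
    have h3 := cubic_bound hx₀ hMX hq h1.le h2.le
    have := mul_nonneg h1.le (by linarith [hv t ht.le] : 0 ≤ u t + K * x t ^ 2)
    linarith
  have hxpos : -x T < 0 := by
    refine neg_of_deriv_le (c := lam / 2) (f := fun t => -x t) (fun t => (dx t).neg) ?_ hs₀
      (by simpa using hs₀pos)
    intro t ht
    linarith [hp t ht.le]
  have hxlt : x T - x₀ < 0 := by
    refine neg_of_deriv_le (c := lam / 2) (f := fun t => x t - x₀)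
      (fun t => (dx t).sub_const _) ?_ hs₀ (by simpa using hs₀lt)
    intro t ht
    linarith [hp' t ht.le]
  refine ⟨by linarith, by linarith, ?_⟩
  have h1 := hv T le_rfl
  have h2 : 0 ≤ (1 - K) * x T ^ 2 := mul_nonneg (by linarith) (sq_nonneg _)
  linarith

/-- Lemma 3 of the paper: under condition (11), the L-conditions (12),
and λ² > 4((1 + β/2)x₀² − 1), the positive outgoing separatrix satisfies x(t) > 0 for
all t. Here K := βL/(α+2L) and M := 1 − K. -/
theorem separatrix_stays_positive (lam a b L ϑ₀ x₀ : ℝ)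
    (hlam : 0 ≤ lam) (ha : 0 < a) (hb : 0 < b)
    (hineq : a * (Real.sqrt (lam ^ 2 + 4) + lam) > 2 * (b - 2))
    (hL : 0 < L) (hL2 : L > (Real.sqrt (lam ^ 2 + 4) - lam) / 2)
    (hK : b * L / (a + 2 * L) < 1)
    (hϑ₀ : 0 < ϑ₀) (hx₀ : 0 < x₀)
    (hx₀root : ϑ₀ ^ 2 + x₀ ^ 2 - ((1 - b * L / (a + 2 * L)) / 2) * x₀ ^ 4 = 0)
    (hlam2 : lam ^ 2 > 4 * ((1 + b / 2) * x₀ ^ 2 - 1))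
    (x ϑ u : ℝ → ℝ)
    (hsol : IsSolution lam a b x ϑ u)
    (hnonconst : ∃ t₁ t₂ : ℝ, (x t₁, ϑ t₁, u t₁) ≠ (x t₂, ϑ t₂, u t₂))
    (hlim : Tendsto (fun t => ((x t, ϑ t, u t) : ℝ × ℝ × ℝ)) atBot
      (nhds ((0 : ℝ), (0 : ℝ), (0 : ℝ))))
    (hpos : ∃ τ₀ : ℝ, ∀ t < τ₀, 0 < x t) :
    ∀ t : ℝ, 0 < x t := by
  set K := b * L / (a + 2 * L) with hKd
  have hKdef : K * (a + 2 * L) = b * L := by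
    rw [hKd]; field_simp
  have hKpos : 0 < K := by positivity
  have hMX : 2 < (1 - K) * x₀ ^ 2 := by
    have h1 : x₀ ^ 2 * 2 < x₀ ^ 2 * ((1 - K) * x₀ ^ 2) := by nlinarith [sq_pos_of_pos hϑ₀]
    exact lt_of_mul_lt_mul_left h1 (by positivity)
  have hX2 : 2 < x₀ ^ 2 := by nlinarith [mul_pos hKpos (sq_pos_of_pos hx₀)]
  have hq : 1 ≤ lam ^ 2 / 4 := by nlinarith [mul_pos hb (sq_pos_of_pos hx₀)]
  have hlampos : 0 < lam := by
    rcases hlam.eq_or_lt with h | h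
    · rw [← h] at hq; norm_num at hq
    · exact h
  have hd : 0 < L ^ 2 + lam * L - 1 := by
    have h1 := Real.sq_sqrt (by positivity : 0 ≤ lam ^ 2 + 4)
    have h2 := Real.sqrt_nonneg (lam ^ 2 + 4)
    nlinarith
  have lx : Tendsto x atBot (nhds 0) := (continuous_fst.tendsto _).comp hlim
  have lϑu := (continuous_snd.tendsto _).comp hlim
  have lϑ : Tendsto ϑ atBot (nhds 0) := (continuous_fst.tendsto _).comp lϑu
  have lu : Tendsto u atBot (nhds 0) := (continuous_snd.tendsto _).comp lϑu
  have cx : Continuous x := continuous_iff_continuousAt.2 fun t => (hsol t).1.continuousAt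
  have cu : Continuous u := continuous_iff_continuousAt.2 fun t => (hsol t).2.2.continuousAt
  set G : Set ℝ := {t | 0 < x t ∧ x t < x₀ ∧ -(L ^ 2 + lam * L - 1) < u t + x t ^ 2} with hG
  have hGopen : IsOpen G :=
    (isOpen_lt continuous_const cx).inter ((isOpen_lt cx continuous_const).inter
      (isOpen_lt continuous_const (cu.add (cx.pow 2))))
  obtain ⟨τ₀, hτ₀⟩ := hpos
  have hev : ∀ᶠ t in atBot, t ∈ G := by
    have l3 : Tendsto (fun t => u t + x t ^ 2) atBot (nhds (0 + 0 ^ 2)) := lu.add (lx.pow 2)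
    filter_upwards [eventually_lt_atBot τ₀, lx.eventually_lt_const hx₀,
      l3.eventually_const_lt (by linarith : -(L ^ 2 + lam * L - 1) < 0 + 0 ^ 2)] with t h1 h2 h3
    exact ⟨hτ₀ t h1, h2, h3⟩
  obtain ⟨s₀, hs₀⟩ := eventually_atBot.1 hev
  have hall : ∀ t, t ∈ G := by
    by_contra! hbad
    have hne : (Gᶜ).Nonempty := hbad
    have hbdd : BddBelow Gᶜ := ⟨s₀, fun t ht => by
      by_contra! hlt
      exact ht (hs₀ t hlt.le)⟩
    have hT : sInf Gᶜ ∈ Gᶜ := hGopen.isClosed_compl.csInf_mem hne hbdd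
    have hsT : s₀ ≤ sInf Gᶜ := by
      by_contra! hlt
      exact hT (hs₀ _ hlt.le)
    refine hT (bootstrap_step hlampos ha hb hL hd hKdef hK hx₀ hMX hq hlam2 hsol lx lϑ lu hsT
      (hs₀ s₀ le_rfl).1 (hs₀ s₀ le_rfl).2.1 ?_)
    intro t ht
    by_contra hn
    exact absurd (csInf_le hbdd hn) (not_le.2 ht)
  exact fun t => (hall t).1
end

section
/- Let α > 0, β > 0, x₀ > 0 and τ ∈ ℝ. Suppose (x, ϑ, u) is a solution of the Lorenz-like system on (−∞, τ] such that u(t) → 0 and x(t) → 0 as t → −∞, and 0 ≤ x(t) ≤ x₀ for all t ≤ τ. Then u(t) + (β/2)·x(t)² ≤ (β/2)·x₀² for all t ∈ (−∞, τ]; in particular u(t) ≤ (β/2)·x₀² for all t ≤ τ. -/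
/-!
Put `w = u + (b/2) x²`. The system gives `w' + a w = (ab/2) x²`, so
`g(t) = exp (a t) (w(t) - (b/2) x₀²)` has derivative `exp (a t) (ab/2) (x² - x₀²) ≤ 0` on `(-∞, τ]`.
Hence `g` is nonincreasing there, and since `g → 0` at `-∞`, it is nonpositive.
-/

open Filter Set

/-- the estimate u(t) + (β/2)x(t)² ≤ (β/2)x₀² from the proof of Lemma 2,
for a solution of the Lorenz-like system on (−∞, τ]. -/
theorem u_estimate (lam a b x₀ τ : ℝ) (ha : 0 < a) (hb : 0 < b) (hx₀ : 0 < x₀)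
    (x ϑ u : ℝ → ℝ)
    (hsol : ∀ t ∈ Iic τ,
      HasDerivWithinAt x (ϑ t) (Iic τ) t ∧
      HasDerivWithinAt ϑ (-lam * ϑ t - x t * u t + x t - (x t) ^ 3) (Iic τ) t ∧
      HasDerivWithinAt u (-a * u t - b * x t * ϑ t) (Iic τ) t)
    (hu0 : Tendsto u atBot (nhds 0))
    (hx0 : Tendsto x atBot (nhds 0))
    (hxrange : ∀ t ≤ τ, 0 ≤ x t ∧ x t ≤ x₀) :
    ∀ t ≤ τ, u t + (b / 2) * (x t) ^ 2 ≤ (b / 2) * x₀ ^ 2 ∧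
      u t ≤ (b / 2) * x₀ ^ 2 := by
  have hg : ∀ t ∈ Iic τ, HasDerivWithinAt
      (fun t => Real.exp (a * t) * (u t + (b / 2) * (x t) ^ 2 - (b / 2) * x₀ ^ 2))
      (Real.exp (a * t) * (a * b / 2 * ((x t) ^ 2 - x₀ ^ 2))) (Iic τ) t := by
    intro t ht
    obtain ⟨hx, -, hu⟩ := hsol t ht
    have he : HasDerivWithinAt (fun t => Real.exp (a * t)) (Real.exp (a * t) * (a * 1)) (Iic τ) t :=
      ((hasDerivWithinAt_id t (Iic τ)).const_mul a).exp
    refine (he.mul ((hu.add ((hx.pow 2).const_mul (b / 2))).sub_const _)).congr_deriv ?_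
    simp
    ring
  have hanti : AntitoneOn
      (fun t => Real.exp (a * t) * (u t + (b / 2) * (x t) ^ 2 - (b / 2) * x₀ ^ 2)) (Iic τ) := by
    refine antitoneOn_of_hasDerivWithinAt_nonpos (convex_Iic τ)
      (fun t ht => (hg t ht).continuousWithinAt)
      (fun t ht => (hg t (interior_subset ht)).mono interior_subset) ?_
    intro t ht
    obtain ⟨h0, h1⟩ := hxrange t (mem_Iic.1 (interior_subset ht))
    have hsq : (x t) ^ 2 ≤ x₀ ^ 2 := pow_le_pow_left₀ h0 h1 2
    exact mul_nonpos_of_nonneg_of_nonpos (Real.exp_pos _).le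
      (mul_nonpos_of_nonneg_of_nonpos (by positivity) (by linarith))
  have hlim : Tendsto
      (fun t => Real.exp (a * t) * (u t + (b / 2) * (x t) ^ 2 - (b / 2) * x₀ ^ 2))
      atBot (nhds 0) := by
    have he : Tendsto (fun t => Real.exp (a * t)) atBot (nhds 0) :=
      Real.tendsto_exp_atBot.comp (tendsto_id.const_mul_atBot ha)
    simpa using he.mul ((hu0.add ((hx0.pow 2).const_mul (b / 2))).sub_const ((b / 2) * x₀ ^ 2))
  intro t ht
  have hle : Real.exp (a * t) * (u t + (b / 2) * (x t) ^ 2 - (b / 2) * x₀ ^ 2) ≤ 0 := by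
    refine ge_of_tendsto hlim ?_
    filter_upwards [eventually_le_atBot t] with s hs
    exact hanti (mem_Iic.2 (hs.trans ht)) ht hs
  have hw := nonpos_of_mul_nonpos_right hle (Real.exp_pos _)
  have hx2 : 0 ≤ (b / 2) * (x t) ^ 2 := by positivity
  exact ⟨by linarith, by linarith⟩
end

section
/- Let λ, α, β ∈ ℝ with β ≠ 0, and let (x, ϑ, u) be a solution of the Lorenz-like system. Then for every t the function V(t) := ϑ(t)² − u(t)²/β − x(t)² + x(t)⁴/2 is differentiable with derivative V'(t) = 2·(−λ·ϑ(t)² + (α/β)·u(t)²). -/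
open Filter Set

/-- derivative (10) of the Lyapunov function (9) along solutions. -/
theorem lyapunov_deriv (lam a b : ℝ) (hb : b ≠ 0) (x ϑ u : ℝ → ℝ)
    (hsol : IsSolution lam a b x ϑ u) :
    ∀ t : ℝ, HasDerivAt
      (fun t => (ϑ t) ^ 2 - (u t) ^ 2 / b - (x t) ^ 2 + (x t) ^ 4 / 2)
      (2 * (-lam * (ϑ t) ^ 2 + (a / b) * (u t) ^ 2)) t := by
  intro t
  obtain ⟨hx, hϑ, hu⟩ := hsol t
  -- The chain rule gives the derivative; the `x`-terms and the `x * u * ϑ`-terms cancel,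
  -- the latter because the factor `b` in the equation for `u` meets the division by `b`.
  refine ((((hϑ.fun_pow 2).fun_sub ((hu.fun_pow 2).div_const b)).fun_sub
    (hx.fun_pow 2)).fun_add ((hx.fun_pow 4).div_const 2)).congr_deriv ?_
  push_cast
  field_simp
  ring
end

section
/- Let λ > 0, α > 0, β > 0. Then: (i) the characteristic polynomial of the Jacobian of the Lorenz-like vector field at the equilibrium (1, 0, 0) — the matrix with rows (0, 1, 0), (−2, −λ, −1), (0, −β, −α) — equals X³ + (λ + α)·X² + (λα + 2 − β)·X + 2α; and (ii) if β < λ·(λα + α² + 2)/(λ + α), then every complex root of this polynomial has negative real part. -/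
/-!
The characteristic polynomial is a direct `3 × 3` determinant. The stability claim is the
Routh–Hurwitz criterion for the cubic `z³ + p z² + q z + r` (lemma `routh_hurwitz_cubic`):
after clearing the denominator `lam + a`, the bound on `b` says exactly `r < p * q` for
`p = lam + a`, `q = lam * a + 2 - b`, `r = 2 * a`.
-/

open Polynomial

/-- Sufficiency in the Routh–Hurwitz criterion for real cubics. For a root `x + iy` with `x ≥ 0`,
either `y = 0`, and all terms of the cubic are nonnegative with `r > 0`; or the imaginary part gives
`y² = 3x² + 2px + q`, and eliminating `y²` from the real part leaves
`8x³ + 8px² + 2(q + p²)x + (pq - r) = 0`, whose left side is positive. -/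
lemma routh_hurwitz_cubic {p q r : ℝ} (hp : 0 < p) (hr : 0 < r) (hpq : r < p * q) (z : ℂ)
    (hz : z ^ 3 + p * z ^ 2 + q * z + r = 0) : z.re < 0 := by
  have hq : 0 < q := pos_of_mul_pos_right (hr.trans hpq) hp.le
  obtain ⟨x, y⟩ := z
  have hre := congrArg Complex.re hz
  have him := congrArg Complex.im hz
  simp [pow_succ] at hre him
  change x < 0
  by_contra! hx
  have h1 : y * (3 * x ^ 2 + 2 * p * x + q - y ^ 2) = 0 := by linear_combination him
  have hx2 : 0 ≤ p * x ^ 2 := by positivity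
  have hx3 : 0 ≤ x ^ 3 := by positivity
  have hqx : 0 ≤ q * x := by positivity
  have hpx : 0 ≤ p ^ 2 * x := by positivity
  rcases mul_eq_zero.mp h1 with rfl | h2
  · nlinarith
  · have h3 : 8 * x ^ 3 + 8 * (p * x ^ 2) + 2 * (q * x) + 2 * (p ^ 2 * x) + (p * q - r) = 0 := by
      linear_combination -hre + (3 * x + p) * h2
    linarith

/-- the Jacobian at the equilibrium (1,0,0) has characteristic polynomial
X³ + (λ+α)X² + (λα + 2 − β)X + 2α, and if β < λ(λα + α² + 2)/(λ+α) then all its complex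
roots have negative real part. -/
theorem jacobian_S_plus (lam a b : ℝ) (hlam : 0 < lam) (ha : 0 < a) (hb : 0 < b)
    (J : Matrix (Fin 3) (Fin 3) ℝ)
    (hJ : J = !![0, 1, 0; -2, -lam, -1; 0, -b, -a]) :
    J.charpoly = X ^ 3 + C (lam + a) * X ^ 2 + C (lam * a + 2 - b) * X + C (2 * a) ∧
    (b < lam * (lam * a + a ^ 2 + 2) / (lam + a) →
      ∀ z : ℂ, Polynomial.aeval z J.charpoly = 0 → z.re < 0) := by
  have hchar : J.charpoly =
      X ^ 3 + C (lam + a) * X ^ 2 + C (lam * a + 2 - b) * X + C (2 * a) := by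
    subst hJ
    simp [Matrix.charpoly, Matrix.charmatrix, Matrix.det_fin_three]
    ring
  refine ⟨hchar, fun hlt z hz => ?_⟩
  have hp : 0 < lam + a := by positivity
  rw [lt_div_iff₀ hp] at hlt
  refine routh_hurwitz_cubic (p := lam + a) (q := lam * a + 2 - b) (r := 2 * a) hp
    (by positivity) (by linarith) z ?_
  rw [hchar] at hz
  simpa using hz
end

section
/- Let σ > 0, b > 0, d ∈ ℝ, r > d, and let (X, Y, Z) : ℝ → ℝ³ be a solution of the Lorenz system Ẋ = −σ(X − Y), Ẏ = rX − dY − XZ, Ż = −bZ + XY. Define c := √(σ(r − d)) and, for t ∈ ℝ, x(t) := X(t/c)/√(b(r − d)), ϑ(t) := σ·(Y(t/c) − X(t/c))/(√(bσ)·(r − d)), u(t) := (Z(t/c) − X(t/c)²/b)/(r − d). Then (x, ϑ, u) is a solution of the Lorenz-like system ẋ = ϑ, ϑ̇ = −λϑ − xu + x − x³, u̇ = −αu − βxϑ with λ = (σ + d)/√(σ(r − d)), α = b/√(σ(r − d)), β = (2σ − b)/σ. -/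
/-!
The claim is a chain-rule computation. Writing `σ`, `b` and `r - d` as squares of positive reals
turns the square roots in the rescaling into monomials. The three derivatives are then obtained from
the Lorenz equations at the rescaled time, with a factor `1 / √(σ (r - d))`, and agree
with the Lorenz-like right-hand sides as rational functions.
-/

open Filter Set

/-- The classical Lorenz system (1): Ẋ = −σ(X − Y), Ẏ = rX − dY − XZ, Ż = −bZ + XY. -/
def IsLorenzSolution (σ b d r : ℝ) (X Y Z : ℝ → ℝ) : Prop :=
  ∀ t : ℝ, HasDerivAt X (-σ * (X t - Y t)) t ∧
    HasDerivAt Y (r * X t - d * Y t - X t * Z t) t ∧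
    HasDerivAt Z (-b * Z t + X t * Y t) t

/-- the change of variables reducing the Lorenz system (1) to the
Lorenz-like system (4). -/
theorem lorenz_to_lorenz_like (σ b d r : ℝ) (hσ : 0 < σ) (hb : 0 < b) (hr : d < r)
    (X Y Z : ℝ → ℝ) (hsol : IsLorenzSolution σ b d r X Y Z) :
    IsSolution ((σ + d) / Real.sqrt (σ * (r - d))) (b / Real.sqrt (σ * (r - d)))
      ((2 * σ - b) / σ)
      (fun t => X (t / Real.sqrt (σ * (r - d))) / Real.sqrt (b * (r - d)))
      (fun t => σ * (Y (t / Real.sqrt (σ * (r - d))) - X (t / Real.sqrt (σ * (r - d)))) /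
        (Real.sqrt (b * σ) * (r - d)))
      (fun t => (Z (t / Real.sqrt (σ * (r - d))) -
        (X (t / Real.sqrt (σ * (r - d)))) ^ 2 / b) / (r - d)) := by
  -- With `σ = s²`, `b = p²`, `r - d = q²` every square root becomes a monomial in `s, p, q`.
  obtain ⟨s, hs, rfl⟩ : ∃ s : ℝ, 0 < s ∧ s ^ 2 = σ :=
    ⟨√σ, Real.sqrt_pos.2 hσ, Real.sq_sqrt hσ.le⟩
  obtain ⟨p, hp, rfl⟩ : ∃ p : ℝ, 0 < p ∧ p ^ 2 = b :=
    ⟨√b, Real.sqrt_pos.2 hb, Real.sq_sqrt hb.le⟩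
  obtain ⟨q, hq, hqr⟩ : ∃ q : ℝ, 0 < q ∧ q ^ 2 = r - d :=
    ⟨√(r - d), Real.sqrt_pos.2 (sub_pos.2 hr), Real.sq_sqrt (sub_pos.2 hr).le⟩
  obtain rfl : r = d + q ^ 2 := by linarith
  have hsq : √(s ^ 2 * q ^ 2) = s * q := by
    rw [← mul_pow]; exact Real.sqrt_sq (by positivity)
  have hpq : √(p ^ 2 * q ^ 2) = p * q := by
    rw [← mul_pow]; exact Real.sqrt_sq (by positivity)
  have hps : √(p ^ 2 * s ^ 2) = p * s := by
    rw [← mul_pow]; exact Real.sqrt_sq (by positivity)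
  rw [← hqr, hsq, hpq, hps]
  intro t
  obtain ⟨hX, hY, hZ⟩ := hsol (t / (s * q))
  have hc : HasDerivAt (fun t : ℝ => t / (s * q)) (1 / (s * q)) t :=
    (hasDerivAt_id' t).div_const _
  have hX' := HasDerivAt.comp t hX hc
  have hY' := HasDerivAt.comp t hY hc
  have hZ' := HasDerivAt.comp t hZ hc
  refine ⟨?_, ?_, ?_⟩
  · refine (hX'.div_const (p * q)).congr_deriv ?_
    field_simp
    ring
  · refine (((hY'.sub hX').const_mul (s ^ 2)).div_const (p * s * q ^ 2)).congr_deriv ?_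
    field_simp
    ring
  · refine ((hZ'.sub ((hX'.pow 2).div_const (p ^ 2))).div_const (q ^ 2)).congr_deriv ?_
    simp only [Function.comp_apply]
    field_simp
    ring
end

section
/- Let λ ∈ ℝ, α > 0, B > 0, and let (X, Y, Z) : ℝ → ℝ³ be a solution of the system Ẋ = Y, Ẏ = X − λY − XZ − X³, Ż = −αZ + BX². Then the curve (x, ϑ, u) defined by x := √((B + α)/α)·X, ϑ := √((B + α)/α)·Y, u := Z − (B/α)·X² is a solution of the Lorenz-like system ẋ = ϑ, ϑ̇ = −λϑ − xu + x − x³, u̇ = −αu − βxϑ with β = 2B/(B + α); in particular β < 2. -/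
/-!
Differentiating the new variables and substituting the original equations reduces the claim to
polynomial identities in `X`, `Y`, `Z`. After cancelling a common factor, the scaling
`s = √((B + a) / a)` enters them only through `s ^ 2`: the relation `s ^ 2 - B / a = 1` matches the
cubic terms of the second equation, and `β * s ^ 2 = 2 * B / a` matches the `X * Y` term produced
by differentiating `(B / a) * X ^ 2` in the third.
-/

open Filter Set

/-- The Ovsyannikov–Turaev Lorenz-like system (6):
Ẋ = Y, Ẏ = X − λY − XZ − X³, Ż = −αZ + BX². -/
def IsOTSolution (lam a B : ℝ) (X Y Z : ℝ → ℝ) : Prop :=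
  ∀ t : ℝ, HasDerivAt X (Y t) t ∧
    HasDerivAt Y (X t - lam * Y t - X t * Z t - (X t) ^ 3) t ∧
    HasDerivAt Z (-a * Z t + B * (X t) ^ 2) t

/-- the change of variables (7) transforms the Ovsyannikov–Turaev system
into the Lorenz-like system with β = 2B/(B+α) < 2. -/
theorem ovsyannikov_to_lorenz_like (lam a B : ℝ) (ha : 0 < a) (hB : 0 < B)
    (X Y Z : ℝ → ℝ) (hsol : IsOTSolution lam a B X Y Z) :
    IsSolution lam a (2 * B / (B + a))
      (fun t => Real.sqrt ((B + a) / a) * X t)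
      (fun t => Real.sqrt ((B + a) / a) * Y t)
      (fun t => Z t - (B / a) * (X t) ^ 2) ∧
    2 * B / (B + a) < 2 := by
  have hs : Real.sqrt ((B + a) / a) ^ 2 = 1 + B / a := by
    rw [Real.sq_sqrt (by positivity)]
    field_simp
    ring
  have hβ : 2 * B / (B + a) * Real.sqrt ((B + a) / a) ^ 2 = 2 * (B / a) := by
    rw [Real.sq_sqrt (by positivity)]
    field_simp
  have haB : a * (B / a) = B := by field_simp
  refine ⟨fun t => ?_, ?_⟩
  · obtain ⟨hX, hY, hZ⟩ := hsol t
    refine ⟨hX.const_mul _, ?_, ?_⟩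
    · refine (hY.const_mul (Real.sqrt ((B + a) / a))).congr_deriv ?_
      linear_combination (Real.sqrt ((B + a) / a) * X t ^ 3) * hs
    · refine (hZ.sub ((hX.pow 2).const_mul (B / a))).congr_deriv ?_
      push_cast
      linear_combination (X t * Y t) * hβ - X t ^ 2 * haB
  · rw [div_lt_iff₀ (by positivity)]
    linarith
end
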